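/- arXiv:1107.0124 — 2 statements merged into one kernel-verified Lean document; each statement's English description precedes it below -/
import Mathlib

section
/- (Morris.) Let d ≥ 1, let Ω be a metrizable topological space with Borel σ-algebra, μ a Borel probability measure on Ω, and T : Ω → Ω a continuous μ-preserving map. Let L : Ω × ℕ → Matrix d d ℂ be a Borel measurable linear cocycle over T, i.e. L(ω,0) = Id and L(ω, ℓ+m) = L(T^m(ω), ℓ) · L(ω, m) for all ω ∈ Ω and ℓ, m ≥ 1. Assume ∫_Ω log⁺‖L(ω,1)‖ dμ(ω) < ∞. Then for μ-almost every ω ∈ Ω, the limit lim_{n→∞} ‖L(ω,n)‖^{1/n} exists and equals limsup_{n→∞} ρ(L(ω,n))^{1/n}. -/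
open Filter Topology MeasureTheory

/-- Operator norm on `d × d` complex matrices induced by the Euclidean norm on `ℂ^d`. -/
noncomputable def opNorm {d : ℕ} (A : Matrix (Fin d) (Fin d) ℂ) : ℝ :=
  ‖Matrix.toEuclideanCLM (𝕜 := ℂ) A‖

/-- Spectral radius of a complex matrix, as a real number. -/
noncomputable def specRad {d : ℕ} (A : Matrix (Fin d) (Fin d) ℂ) : ℝ :=
  (spectralRadius ℂ A).toReal

namespace Mor
open scoped ENNReal


theorem cover_aux {Ω : Type*} (T : Ω → Ω) (h : Ω → ℝ≥0∞) (η : ℝ≥0∞) (N : ℕ) (C : Set Ω)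
    (hC : ∀ x ∈ C, ∃ n : ℕ, 1 ≤ n ∧ n ≤ N ∧ η * n ≤ ∑ k ∈ Finset.range n, h (T^[k] x)) :
    ∀ (n : ℕ) (x : Ω), ∑ k ∈ Finset.range n, C.indicator (fun _ => η) (T^[k] x) ≤
      ∑ k ∈ Finset.range n, h (T^[k] x) + N * η := by
  have triv : ∀ (n : ℕ) (x : Ω), ∑ k ∈ Finset.range n, C.indicator (fun _ => η) (T^[k] x) ≤ n * η := by
    intro n x
    calc _ ≤ ∑ k ∈ Finset.range n, η := Finset.sum_le_sum fun k _ => Set.indicator_le_self' (by simp) _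
      _ = _ := by simp
  intro n
  induction n using Nat.strong_induction_on with
  | _ n ih =>
    intro x
    by_cases hn : n ≤ N
    · refine (triv n x).trans (le_add_left ?_)
      gcongr
    push Not at hn
    have split : ∀ (l : ℕ) (f : Ω → ℝ≥0∞), l ≤ n → ∑ k ∈ Finset.range n, f (T^[k] x) =
        ∑ k ∈ Finset.range l, f (T^[k] x) + ∑ k ∈ Finset.range (n - l), f (T^[k] (T^[l] x)) := by
      intro l f hl
      obtain ⟨m, rfl⟩ := Nat.exists_eq_add_of_le hl
      rw [Finset.sum_range_add]
      simp only [Nat.add_sub_cancel_left, ← Function.iterate_add_apply]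
      congr 1
      refine Finset.sum_congr rfl fun k _ => by rw [add_comm]
    by_cases hx : x ∈ C
    · obtain ⟨l, h1, h2, h3⟩ := hC x hx
      rw [split l _ (by omega), split l h (by omega), add_assoc]
      refine add_le_add ((triv l x).trans ?_) (ih _ (by omega) _)
      rwa [mul_comm]
    · rw [split 1 _ (by omega), split 1 h (by omega), add_assoc]
      refine add_le_add ?_ (ih _ (by omega) _)
      simp [hx]

theorem lint_sum {Ω : Type*} [MeasurableSpace Ω] {μ : Measure Ω}
    {T : Ω → Ω} (hT : MeasurePreserving T μ μ) (h : Ω → ℝ≥0∞) (hh : Measurable h) (n : ℕ) :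
    ∫⁻ x, ∑ k ∈ Finset.range n, h (T^[k] x) ∂μ = n * ∫⁻ x, h x ∂μ := by
  rw [lintegral_finsetSum (f := fun k x => h (T^[k] x)) _ (fun k _ => hh.comp (hT.measurable.iterate k))]
  rw [Finset.sum_congr rfl (fun k _ => (hT.iterate k).lintegral_comp hh)]
  simp

theorem maximal {Ω : Type*} [MeasurableSpace Ω] (μ : Measure Ω) [IsProbabilityMeasure μ]
    (T : Ω → Ω) (hT : MeasurePreserving T μ μ) (h : Ω → ℝ≥0∞) (hh : Measurable h)
    (η : ℝ≥0∞) (hη : η ≠ ⊤) :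
    η * μ {x | ∃ n : ℕ, 1 ≤ n ∧ η * n ≤ ∑ k ∈ Finset.range n, h (T^[k] x)} ≤ ∫⁻ x, h x ∂μ := by
  set C : ℕ → Set Ω := fun N => {x | ∃ n : ℕ, 1 ≤ n ∧ n ≤ N ∧ η * n ≤ ∑ k ∈ Finset.range n, h (T^[k] x)}
  have hU : {x | ∃ n : ℕ, 1 ≤ n ∧ η * n ≤ ∑ k ∈ Finset.range n, h (T^[k] x)} = ⋃ N, C N := by
    ext x
    simp only [Set.mem_ofPred_eq, Set.mem_iUnion, C]
    constructor
    · rintro ⟨n, h1, h2⟩; exact ⟨n, n, h1, le_rfl, h2⟩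
    · rintro ⟨N, n, h1, _, h2⟩; exact ⟨n, h1, h2⟩
  have hmono : Monotone C := by
    intro a b hab x
    rintro ⟨n, h1, h2, h3⟩
    exact ⟨n, h1, h2.trans hab, h3⟩
  have hms : ∀ n : ℕ, Measurable fun x => ∑ k ∈ Finset.range n, h (T^[k] x) := fun n =>
    Finset.measurable_sum _ fun k _ => hh.comp (hT.measurable.iterate k)
  have hCm : ∀ N, MeasurableSet (C N) := by
    intro N
    have : C N = ⋃ n : ℕ, ⋃ _ : 1 ≤ n ∧ n ≤ N, {x | η * n ≤ ∑ k ∈ Finset.range n, h (T^[k] x)} := by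
      ext x; simp [C, and_assoc]
    rw [this]
    exact MeasurableSet.iUnion fun n => MeasurableSet.iUnion fun _ => measurableSet_le measurable_const (hms n)
  rw [hU, hmono.measure_iUnion, ENNReal.mul_iSup]
  refine iSup_le fun N => ?_
  have key : ∀ n : ℕ, n * (η * μ (C N)) ≤ n * ∫⁻ x, h x ∂μ + N * η := by
    intro n
    have := lintegral_mono (μ := μ) (cover_aux T h η N (C N) (fun x hx => hx) n)
    rw [lint_sum hT _ (measurable_const.indicator (hCm N))] at this
    rw [lintegral_add_right _ measurable_const, lint_sum hT _ hh, lintegral_indicator_const (hCm N)] at this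
    simpa using this
  have key2 : ∀ᶠ n : ℕ in atTop, η * μ (C N) ≤ ∫⁻ x, h x ∂μ + (N * η) / n := by
    filter_upwards [eventually_gt_atTop 0] with n hn
    have hn0 : (n : ℝ≥0∞) ≠ 0 := by exact_mod_cast hn.ne'
    have hn1 : (n : ℝ≥0∞) ≠ ⊤ := ENNReal.natCast_ne_top n
    have := ENNReal.div_le_div_right (key n) (n : ℝ≥0∞)
    rw [ENNReal.add_div, mul_comm (n : ℝ≥0∞), mul_comm (n : ℝ≥0∞) (∫⁻ x, h x ∂μ),
      ENNReal.mul_div_cancel_right hn0 hn1, ENNReal.mul_div_cancel_right hn0 hn1] at this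
    exact this
  have lim : Tendsto (fun n : ℕ => ∫⁻ x, h x ∂μ + (N * η) / n) atTop (𝓝 (∫⁻ x, h x ∂μ + 0)) :=
    tendsto_const_nhds.add (by simpa using ENNReal.Tendsto.const_div ENNReal.tendsto_nat_nhds_top (Or.inr (ENNReal.mul_ne_top (ENNReal.natCast_ne_top N) hη)))
  rw [add_zero] at lim
  exact ge_of_tendsto lim key2


theorem cover2 {Ω : Type*} (T : Ω → Ω) (w : ℕ → Ω → ℝ) (hw0 : ∀ n x, 0 ≤ w n x)
    (hw1 : ∀ n x, w n x ≤ 1) (hsub : ∀ m n x, w (m + n) x ≤ w m x * w n (T^[m] x))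
    (c : ℝ) (hc0 : 0 < c) (hc1 : c < 1) (N : ℕ) (E B : Set Ω)
    (hB : ∀ x ∈ E, x ∉ B → ∃ n : ℕ, 1 ≤ n ∧ n ≤ N ∧ w n x ≤ c ^ n) :
    ∀ (n : ℕ) (x : Ω), (∀ k, T^[k] x ∈ E) →
      w n x * c ^ (N + ∑ k ∈ Finset.range n, B.indicator (fun _ => (1 : ℕ)) (T^[k] x)) ≤ c ^ n := by
  intro n
  induction n using Nat.strong_induction_on with
  | _ n ih =>
    intro x hx
    by_cases hn : n ≤ N
    · calc _ ≤ 1 * c ^ n := by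
            apply mul_le_mul (hw1 _ _) _ (by positivity) zero_le_one
            exact pow_le_pow_of_le_one hc0.le hc1.le (by omega)
        _ = _ := one_mul _
    push Not at hn
    have split : ∀ (l : ℕ), l ≤ n → ∑ k ∈ Finset.range n, B.indicator (fun _ => (1 : ℕ)) (T^[k] x) =
        ∑ k ∈ Finset.range l, B.indicator (fun _ => (1 : ℕ)) (T^[k] x) + ∑ k ∈ Finset.range (n - l), B.indicator (fun _ => (1 : ℕ)) (T^[k] (T^[l] x)) := by
      intro l hl
      obtain ⟨m, rfl⟩ := Nat.exists_eq_add_of_le hl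
      rw [Finset.sum_range_add]
      simp only [Nat.add_sub_cancel_left, ← Function.iterate_add_apply]
      congr 1
      refine Finset.sum_congr rfl fun k _ => by rw [add_comm]
    by_cases hxB : x ∈ B
    · have h1 := ih (n - 1) (by omega) (T^[1] x) (fun k => by
        rw [← Function.iterate_add_apply]; exact hx _)
      rw [split 1 (by omega)]
      set s := ∑ k ∈ Finset.range (n - 1), B.indicator (fun _ => (1 : ℕ)) (T^[k] (T^[1] x))
      have h2 : w n x ≤ w (n - 1) (T^[1] x) := by
        have := hsub 1 (n - 1) x
        rw [show 1 + (n - 1) = n by omega] at this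
        refine this.trans (mul_le_of_le_one_left (hw0 _ _) (hw1 _ _))
      have e1 : c ^ n = c ^ (n - 1) * c := by rw [← pow_succ]; congr 1; omega
      have e2 : N + (∑ k ∈ Finset.range 1, B.indicator (fun _ => (1 : ℕ)) (T^[k] x) + s) = N + s + 1 := by
        simp [hxB]; omega
      rw [e1, e2, pow_succ, ← mul_assoc]
      gcongr
      exact le_trans (by gcongr) h1
    · obtain ⟨l, l1, l2, l3⟩ := hB x (hx 0) hxB
      have h1 := ih (n - l) (by omega) (T^[l] x) (fun k => by
        rw [← Function.iterate_add_apply]; exact hx _)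
      rw [split l (by omega)]
      set s := ∑ k ∈ Finset.range (n - l), B.indicator (fun _ => (1 : ℕ)) (T^[k] (T^[l] x))
      set s' := ∑ k ∈ Finset.range l, B.indicator (fun _ => (1 : ℕ)) (T^[k] x)
      have h2 : w n x ≤ c ^ l * w (n - l) (T^[l] x) := by
        have := hsub l (n - l) x
        rw [show l + (n - l) = n by omega] at this
        refine this.trans (mul_le_mul_of_nonneg_right l3 (hw0 _ _))
      have e1 : c ^ n = c ^ l * c ^ (n - l) := by rw [← pow_add]; congr 1; omega
      rw [e1]
      calc w n x * c ^ (N + (s' + s)) ≤ (c ^ l * w (n - l) (T^[l] x)) * c ^ (N + s) := by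
            apply mul_le_mul h2 _ (by positivity) (mul_nonneg (by positivity) (hw0 _ _))
            exact pow_le_pow_of_le_one hc0.le hc1.le (by omega)
        _ = c ^ l * (w (n - l) (T^[l] x) * c ^ (N + s)) := by ring
        _ ≤ _ := by gcongr

theorem kingman1 {Ω : Type*} [MeasurableSpace Ω] (μ : Measure Ω) [IsProbabilityMeasure μ]
    (T : Ω → Ω) (hT : MeasurePreserving T μ μ) (w : ℕ → Ω → ℝ) (hwm : ∀ n, Measurable (w n))
    (hw0 : ∀ n x, 0 ≤ w n x)
    (hw1 : ∀ n x, w n x ≤ 1) (hsub : ∀ m n x, w (m + n) x ≤ w m x * w n (T^[m] x))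
    (a b : ℝ) (ha : 0 < a) (hab : a < b) :
    ∀ᵐ x ∂μ, (∃ᶠ n in atTop, w n x ≤ a ^ n) → ∀ᶠ n in atTop, w n x ≤ b ^ n := by
  by_cases hb1 : 1 ≤ b
  · refine ae_of_all _ fun x _ => Eventually.of_forall fun n => (hw1 n x).trans (one_le_pow₀ hb1)
  push Not at hb1
  obtain ⟨c, hac, hcb⟩ := exists_between hab
  have hc0 : 0 < c := ha.trans hac
  have hc1 : c < 1 := hcb.trans hb1
  set E : Set Ω := {x | ∃ C : ℕ, ∃ᶠ n in atTop, w n x ≤ C * a ^ n} with hE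
  have hEm : MeasurableSet E := by
    have : E = ⋃ C : ℕ, ⋂ m : ℕ, ⋃ n : ℕ, ⋃ _ : m ≤ n, {x | w n x ≤ C * a ^ n} := by
      ext x; simp [E, frequently_atTop]
    rw [this]
    exact MeasurableSet.iUnion fun C => MeasurableSet.iInter fun m => MeasurableSet.iUnion fun n =>
      MeasurableSet.iUnion fun _ => measurableSet_le (hwm n) measurable_const
  have hEsub : T ⁻¹' E ⊆ E := by
    rintro x ⟨C, hx⟩
    obtain ⟨C', hC'⟩ := exists_nat_ge (C / a)
    refine ⟨C', ?_⟩
    rw [frequently_atTop] at hx ⊢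
    intro m
    obtain ⟨n, hn, h⟩ := hx m
    refine ⟨1 + n, by omega, ?_⟩
    calc w (1 + n) x ≤ w 1 x * w n (T^[1] x) := hsub 1 n x
      _ ≤ w n (T x) := mul_le_of_le_one_left (hw0 _ _) (hw1 _ _)
      _ ≤ C * a ^ n := h
      _ = C / a * a ^ (1 + n) := by rw [pow_add]; field_simp
      _ ≤ _ := by gcongr
  have hEae : T ⁻¹' E =ᵐ[μ] E :=
    ae_eq_of_subset_of_measure_ge hEsub (hT.measure_preimage hEm.nullMeasurableSet).ge
      (hT.measurable hEm).nullMeasurableSet (measure_ne_top _ _)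
  have hinv : ∀ᵐ x ∂μ, ∀ k : ℕ, x ∈ E → T^[k] x ∈ E := by
    have h1 : ∀ᵐ x ∂μ, x ∈ E → T x ∈ E := by
      filter_upwards [hEae.mem_iff] with x hx hxE
      exact hx.2 hxE
    have h2 : ∀ᵐ x ∂μ, ∀ k : ℕ, T^[k] x ∈ E → T (T^[k] x) ∈ E :=
      ae_all_iff.2 fun k => (hT.iterate k).quasiMeasurePreserving.ae h1
    filter_upwards [h2] with x hx k hxE
    induction k with
    | zero => exact hxE
    | succ k ih => rw [Function.iterate_succ_apply']; exact hx k ih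
  set B : ℕ → Set Ω := fun N => {x | x ∈ E ∧ ∀ n : ℕ, 1 ≤ n → n ≤ N → c ^ n < w n x} with hB
  have hBm : ∀ N, MeasurableSet (B N) := by
    intro N
    have : B N = E ∩ ⋂ n : ℕ, ⋂ _ : 1 ≤ n, ⋂ _ : n ≤ N, {x | c ^ n < w n x} := by
      ext x; simp [B]
    rw [this]
    exact hEm.inter (MeasurableSet.iInter fun n => MeasurableSet.iInter fun _ => MeasurableSet.iInter fun _ =>
      measurableSet_lt measurable_const (hwm n))
  have hBanti : Antitone B := fun M N hMN x hx => ⟨hx.1, fun n h1 h2 => hx.2 n h1 (h2.trans hMN)⟩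
  have hBempty : ⋂ N, B N = ∅ := by
    ext x
    simp only [Set.mem_iInter, Set.mem_empty_iff_false, iff_false]
    intro hx
    obtain ⟨C, hC⟩ := (hx 0).1
    have hlim : Tendsto (fun n : ℕ => (C : ℝ) * (a / c) ^ n) atTop (𝓝 (C * 0)) :=
      (tendsto_pow_atTop_nhds_zero_of_lt_one (by positivity) ((div_lt_one hc0).2 hac)).const_mul _
    rw [mul_zero] at hlim
    obtain ⟨n, h1, h2, h3⟩ := (hC.and_eventually ((hlim.eventually_lt_const one_pos).and (eventually_ge_atTop 1))).exists
    have := (hx n).2 n h3 le_rfl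
    rw [div_pow] at h2
    have hcn : 0 < c ^ n := by positivity
    rw [← mul_div_assoc, div_lt_one hcn] at h2
    linarith
  have hBlim : Tendsto (fun N => μ (B N)) atTop (𝓝 0) := by
    have := tendsto_measure_iInter_atTop (μ := μ) (fun N => (hBm N).nullMeasurableSet) hBanti ⟨0, measure_ne_top _ _⟩
    rwa [hBempty, measure_empty] at this
  have hlc : Real.log c < Real.log b := Real.log_lt_log hc0 hcb
  have hlb : Real.log b < 0 := Real.log_neg (hc0.trans hcb) hb1
  obtain ⟨η, hη0, hη⟩ : ∃ η : ℝ, 0 < η ∧ (1 - η) * Real.log c < Real.log b := by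
    refine ⟨(Real.log b - Real.log c) / (2 * (-Real.log c)), div_pos (by linarith) (by linarith), ?_⟩
    have : Real.log c ≠ 0 := by linarith
    have h : (1 - (Real.log b - Real.log c) / (2 * (-Real.log c))) * Real.log c = (Real.log b + Real.log c) / 2 := by
      field_simp; ring
    rw [h]; linarith
  set h : ℕ → Ω → ℝ≥0∞ := fun N x => (((B N).indicator (fun _ => (1 : ℕ)) x : ℕ) : ℝ≥0∞) with hh
  have hhm : ∀ N, Measurable (h N) := fun N =>
    (measurable_from_top (f := fun n : ℕ => (n : ℝ≥0∞))).comp (measurable_const.indicator (hBm N))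
  have hhint : ∀ N, ∫⁻ x, h N x ∂μ = μ (B N) := by
    intro N
    have : h N = (B N).indicator 1 := by
      ext x; by_cases hx : x ∈ B N <;> simp [h, hx]
    rw [this, lintegral_indicator_one (hBm N)]
  set D : ℕ → Set Ω := fun N => {x | ∃ n : ℕ, 1 ≤ n ∧ ENNReal.ofReal η * n ≤ ∑ k ∈ Finset.range n, h N (T^[k] x)}
  have hDle : ∀ N, ENNReal.ofReal η * μ (D N) ≤ μ (B N) := by
    intro N
    rw [← hhint N]
    exact maximal μ T hT (h N) (hhm N) _ ENNReal.ofReal_ne_top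
  have hDnull : μ (⋂ N, D N) = 0 := by
    have h1 : ENNReal.ofReal η * μ (⋂ N, D N) ≤ 0 := by
      refine ge_of_tendsto' hBlim fun N => le_trans ?_ (hDle N)
      gcongr
      exact Set.iInter_subset _ _
    have h2 := le_antisymm h1 (zero_le)
    rcases mul_eq_zero.1 h2 with h3 | h3
    · simp at h3; linarith
    · exact h3
  have hDae : ∀ᵐ x ∂μ, x ∉ ⋂ N, D N := measure_eq_zero_iff_ae_notMem.1 hDnull
  filter_upwards [hinv, hDae] with x hx1 hx2 hx3
  have hxE : x ∈ E := ⟨1, by simpa using hx3⟩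
  rw [Set.mem_iInter] at hx2
  push Not at hx2
  obtain ⟨N, hN⟩ := hx2
  have hcov := cover2 T w hw0 hw1 hsub c hc0 hc1 N E (B N) (by
    intro y hyE hyB
    by_contra hcon
    push Not at hcon
    exact hyB ⟨hyE, hcon⟩)
  have hs : ∀ n : ℕ, 1 ≤ n → ((∑ k ∈ Finset.range n, (B N).indicator (fun _ => (1 : ℕ)) (T^[k] x) : ℕ) : ℝ) ≤ η * n := by
    intro n hn
    by_contra hcon
    push Not at hcon
    apply hN
    refine ⟨n, hn, ?_⟩
    simp only [h]
    rw [← Nat.cast_sum, ← ENNReal.ofReal_natCast n, ← ENNReal.ofReal_mul hη0.le, ← ENNReal.ofReal_natCast]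
    exact ENNReal.ofReal_le_ofReal hcon.le
  have hev : ∀ᶠ n : ℕ in atTop, -(N * Real.log c) ≤ (Real.log b - (1 - η) * Real.log c) * n := by
    have : Tendsto (fun n : ℕ => (Real.log b - (1 - η) * Real.log c) * n) atTop atTop :=
      tendsto_natCast_atTop_atTop.const_mul_atTop (by linarith)
    exact this.eventually_ge_atTop _
  filter_upwards [hev, eventually_ge_atTop 1] with n hn hn1
  have h1 := hcov n x (fun k => hx1 k hxE)
  have h2 := hs n hn1
  set s := ∑ k ∈ Finset.range n, (B N).indicator (fun _ => (1 : ℕ)) (T^[k] x)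
  have hbc : c ^ n ≤ b ^ n * c ^ (N + s) := by
    have hb0 : 0 < b := hc0.trans hcb
    rw [← Real.log_le_log_iff (by positivity) (by positivity), Real.log_mul (by positivity) (by positivity),
      Real.log_pow, Real.log_pow, Real.log_pow]
    push_cast
    nlinarith
  have hcp : 0 < c ^ (N + s) := by positivity
  exact le_of_mul_le_mul_right (h1.trans hbc) hcp

theorem kingman2 {Ω : Type*} [MeasurableSpace Ω] (μ : Measure Ω) [IsProbabilityMeasure μ]
    (T : Ω → Ω) (hT : MeasurePreserving T μ μ) (w : ℕ → Ω → ℝ) (hwm : ∀ n, Measurable (w n))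
    (hw0 : ∀ n x, 0 ≤ w n x)
    (hw1 : ∀ n x, w n x ≤ 1) (hsub : ∀ m n x, w (m + n) x ≤ w m x * w n (T^[m] x)) :
    ∀ᵐ x ∂μ, ∃ l : ℝ, Tendsto (fun n : ℕ => w n x ^ (1 / (n : ℝ))) atTop (𝓝 l) := by
  have key : ∀ᵐ x ∂μ, ∀ a b : ℚ, (0 : ℝ) < a → (a : ℝ) < b →
      (∃ᶠ n in atTop, w n x ≤ (a : ℝ) ^ n) → ∀ᶠ n in atTop, w n x ≤ (b : ℝ) ^ n := by
    rw [ae_all_iff]; intro a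
    rw [ae_all_iff]; intro b
    by_cases ha : (0 : ℝ) < a
    · by_cases hb : (a : ℝ) < b
      · filter_upwards [kingman1 μ T hT w hwm hw0 hw1 hsub a b ha hb] with x hx _ _ using hx
      · exact ae_of_all _ fun x _ h => absurd h hb
    · exact ae_of_all _ fun x h => absurd h ha
  filter_upwards [key] with x hx
  refine tendsto_of_no_upcrossings (s := Set.range ((↑) : ℚ → ℝ)) Rat.denseRange_cast ?_ ?_ ?_
  · rintro _ ⟨a, rfl⟩ _ ⟨b, rfl⟩ hab ⟨h1, h2⟩
    have ha : (0 : ℝ) < a := by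
      obtain ⟨n, hn⟩ := h1.exists
      exact lt_of_le_of_lt (Real.rpow_nonneg (hw0 _ _) _) hn
    have h3 : ∃ᶠ n in atTop, w n x ≤ (a : ℝ) ^ n := by
      refine (h1.and_eventually (eventually_ge_atTop 1)).mono ?_
      rintro n ⟨hn, hn1⟩
      have hn0 : (n : ℝ) ≠ 0 := by positivity
      have := Real.rpow_le_rpow (Real.rpow_nonneg (hw0 n x) _) hn.le (Nat.cast_nonneg n)
      rwa [← Real.rpow_mul (hw0 n x), one_div_mul_cancel hn0, Real.rpow_one, Real.rpow_natCast] at this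
    obtain ⟨n, ⟨hn1, hn2⟩, hn3⟩ := ((h2.and_eventually (hx a b ha hab h3)).and_eventually (eventually_ge_atTop 1)).exists
    have hn0 : (n : ℝ) ≠ 0 := by positivity
    have hb : (0 : ℝ) ≤ b := (ha.trans hab).le
    have := Real.rpow_le_rpow (hw0 n x) hn2 (by positivity : (0 : ℝ) ≤ 1 / n)
    rw [← Real.rpow_natCast, ← Real.rpow_mul hb, mul_one_div_cancel hn0, Real.rpow_one] at this
    linarith
  · exact isBoundedUnder_of ⟨1, fun n => Real.rpow_le_one (hw0 _ _) (hw1 _ _) (by positivity)⟩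
  · exact isBoundedUnder_of ⟨0, fun n => Real.rpow_nonneg (hw0 _ _) _⟩


theorem rank_fact {F : Type*} [Field F] {d r : ℕ} (M : Matrix (Fin d) (Fin d) F) (h : M.rank = r) :
    ∃ (P : Matrix (Fin d) (Fin r) F) (Q : Matrix (Fin r) (Fin d) F), M = P * Q := by
  let b := Module.finBasisOfFinrankEq F (LinearMap.range M.mulVecLin) h
  refine ⟨LinearMap.toMatrix' ((LinearMap.range M.mulVecLin).subtype ∘ₗ b.equivFun.symm.toLinearMap),
    LinearMap.toMatrix' (b.equivFun.toLinearMap ∘ₗ M.mulVecLin.rangeRestrict), ?_⟩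
  rw [← LinearMap.toMatrix'_comp]
  apply Matrix.toLin'.injective
  rw [Matrix.toLin'_toMatrix']
  ext x
  simp

theorem det_ne_of_rank {F : Type*} [Field F] {r : ℕ} (M : Matrix (Fin r) (Fin r) F) (h : r ≤ M.rank) :
    M.det ≠ 0 := by
  have h1 : M.rank = r := le_antisymm (by simpa using M.rank_le_width) h
  have h2 : Function.Surjective M.mulVecLin := by
    rw [← LinearMap.range_eq_top]
    apply Submodule.eq_top_of_finrank_eq
    rw [Module.finrank_fin_fun]; exact h1
  have h3 : Function.Injective M.mulVecLin := LinearMap.injective_iff_surjective.2 h2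
  have h4 : IsUnit M := Matrix.mulVec_injective_iff_isUnit.1 h3
  exact ((Matrix.isUnit_iff_isUnit_det _).1 h4).ne_zero

theorem nil_swap {F : Type*} [Field F] {d r : ℕ} (hr : 1 ≤ r) (X : Matrix (Fin d) (Fin r) F)
    (Y : Matrix (Fin r) (Fin d) F) (h : IsNilpotent (X * Y)) : (Y * X).det = 0 := by
  obtain ⟨n, hn⟩ := h
  have key : ∀ n : ℕ, (Y * X) ^ (n + 1) = Y * (X * Y) ^ n * X := by
    intro n
    induction n with
    | zero => simp
    | succ n ih => rw [pow_succ, ih, pow_succ]; simp only [Matrix.mul_assoc]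
  have h1 := key n
  rw [hn] at h1
  have h2 : (Y * X).det ^ (n + 1) = 0 := by
    rw [← Matrix.det_pow, h1]
    have : Nonempty (Fin r) := ⟨⟨0, hr⟩⟩
    simp
  exact pow_eq_zero_iff (by omega) |>.1 h2

theorem det_bilin {F : Type*} [Field F] {d r : ℕ} (Q : Matrix (Fin r) (Fin d) F) (P : Matrix (Fin d) (Fin r) F) :
    (Q * P).det = ∑ p : Fin r → Fin d, (∑ σ : Equiv.Perm (Fin r), (Equiv.Perm.sign σ : ℤ) * ∏ i, Q (σ i) (p i)) *
      ∏ i, P (p i) i := by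
  simp only [Matrix.det_apply', Matrix.mul_apply, Finset.prod_univ_sum, Finset.mul_sum, Fintype.piFinset_univ]
  rw [Finset.sum_comm]
  refine Finset.sum_congr rfl fun p _ => ?_
  rw [Finset.sum_mul]
  refine Finset.sum_congr rfl fun σ _ => ?_
  rw [Finset.prod_mul_distrib]; ring

theorem skew_bound {F : Type*} [Field F] {d r n : ℕ} (Q : Fin n → Matrix (Fin r) (Fin d) F)
    (P : Fin n → Matrix (Fin d) (Fin r) F) (h1 : ∀ i, (Q i * P i).det ≠ 0)
    (h2 : ∀ i j, i < j → (Q i * P j).det = 0) : n ≤ d ^ r := by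
  let X : Matrix (Fin n) (Fin r → Fin d) F := Matrix.of fun i p =>
    ∑ σ : Equiv.Perm (Fin r), (Equiv.Perm.sign σ : ℤ) * ∏ k, Q i (σ k) (p k)
  let Y : Matrix (Fin r → Fin d) (Fin n) F := Matrix.of fun p j => ∏ k, P j (p k) k
  have hXY : ∀ i j, (X * Y) i j = (Q i * P j).det := by
    intro i j
    rw [det_bilin, Matrix.mul_apply]; rfl
  have hdet : (X * Y).det ≠ 0 := by
    rw [Matrix.det_of_isLowerTriangular]
    · exact Finset.prod_ne_zero_iff.2 fun i _ => by rw [hXY]; exact h1 i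
    · intro i j hij
      rw [hXY]
      exact h2 i j hij
  have h3 := Matrix.rank_of_det_ne_zero hdet
  have h4 := (Matrix.rank_mul_le_left X Y).trans (Matrix.rank_le_card_width X)
  rw [h3] at h4
  simpa using h4

/-- constant rank case -/
theorem const_rank {F : Type*} [Field F] {d r R : ℕ} (hr : 1 ≤ r) (B : ℕ → ℕ → Matrix (Fin d) (Fin d) F)
    (hB : ∀ i j k, i < j → j < k → k ≤ R → B i k = B j k * B i j)
    (hnil : ∀ i j, i < j → j ≤ R → IsNilpotent (B i j))
    (hrk : ∀ i j, i < j → j ≤ R → (B i j).rank = r) : R ≤ d ^ r + 1 := by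
  have hex : ∀ i, ∃ (P : Matrix (Fin d) (Fin r) F) (Q : Matrix (Fin r) (Fin d) F), i + 1 ≤ R → B i (i + 1) = P * Q := by
    intro i
    by_cases hi : i + 1 ≤ R
    · obtain ⟨P, Q, h⟩ := rank_fact _ (hrk i (i + 1) (by omega) hi)
      exact ⟨P, Q, fun _ => h⟩
    · exact ⟨0, 0, fun h => absurd h hi⟩
  choose P Q hPQ using hex
  -- `P i` has range `U (i+1)`, `Q i` has kernel `V i`
  have hdiag : ∀ j, j + 2 ≤ R → (Q (j + 1) * P j).det ≠ 0 := by
    intro j hj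
    apply det_ne_of_rank
    have h1 := hrk j (j + 2) (by omega) hj
    rw [hB j (j + 1) (j + 2) (by omega) (by omega) hj, hPQ j (by omega), hPQ (j + 1) (by omega)] at h1
    rw [show P (j + 1) * Q (j + 1) * (P j * Q j) = P (j + 1) * ((Q (j + 1) * P j) * Q j) by
      simp only [Matrix.mul_assoc]] at h1
    exact h1.ge.trans <| (Matrix.rank_mul_le_right _ _).trans (Matrix.rank_mul_le_left _ _)
  have hform : ∀ i j, i ≤ j → j + 1 ≤ R → ∃ C : Matrix (Fin r) (Fin r) F, B i (j + 1) = P j * C * Q i := by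
    intro i j hij hj
    rcases hij.eq_or_lt with rfl | hlt
    · exact ⟨1, by rw [hPQ i hj]; simp⟩
    · by_cases hj' : j = i + 1
      · subst hj'
        refine ⟨Q (i + 1) * P i, ?_⟩
        rw [hB i (i + 1) (i + 1 + 1) (by omega) (by omega) hj, hPQ i (by omega), hPQ (i + 1) (by omega)]
        simp only [Matrix.mul_assoc]
      · refine ⟨Q j * B (i + 1) j * P i, ?_⟩
        rw [hB i j (j + 1) (by omega) (by omega) hj, hB i (i + 1) j (by omega) (by omega) (by omega),
          hPQ i (by omega), hPQ j (by omega)]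
        simp only [Matrix.mul_assoc]
  have hoff : ∀ i j, i ≤ j → j + 1 ≤ R → (Q i * P j).det = 0 := by
    intro i j hij hj
    obtain ⟨C, hC⟩ := hform i j hij hj
    have h1 := hrk i (j + 1) (by omega) hj
    have h2 := hnil i (j + 1) (by omega) hj
    rw [hC] at h1 h2
    have hCdet : C.det ≠ 0 := by
      apply det_ne_of_rank
      exact h1.ge.trans <| (Matrix.rank_mul_le_left _ _).trans (Matrix.rank_mul_le_right _ _)
    rw [Matrix.mul_assoc] at h2
    have h3 := nil_swap hr _ _ h2
    rw [Matrix.mul_assoc, Matrix.det_mul] at h3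
    exact (mul_eq_zero.1 h3).resolve_left hCdet
  have := skew_bound (n := R - 1) (fun i => Q (i + 1)) (fun i => P i)
    (fun i => hdiag i (by omega)) (fun i j hij => hoff _ _ (by have : (i : ℕ) < j := hij; omega) (by omega))
  omega

theorem rank_pos {F : Type*} [Field F] {d : ℕ} (M : Matrix (Fin d) (Fin d) F) (h : M.rank = 0) : M = 0 := by
  obtain ⟨P, Q, h⟩ := rank_fact M h
  rw [h]; ext i j; simp [Matrix.mul_apply]

theorem chain_aux (d r : ℕ) : ∃ K : ℕ, 1 ≤ K ∧ ∀ {F : Type} [Field F] (B : ℕ → ℕ → Matrix (Fin d) (Fin d) F),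
    (∀ i j k, i < j → j < k → k ≤ K → B i k = B j k * B i j) →
    (∀ i j, i < j → j ≤ K → IsNilpotent (B i j)) →
    (∀ i j, i < j → j ≤ K → B i j ≠ 0) →
    (∀ i j, i < j → j ≤ K → (B i j).rank ≤ r) → False := by
  induction r with
  | zero =>
    refine ⟨1, le_rfl, fun {F} _ B _ _ h3 h4 => ?_⟩
    exact h3 0 1 (by omega) le_rfl (rank_pos _ (Nat.le_zero.1 (h4 0 1 (by omega) le_rfl)))
  | succ r ih =>
    obtain ⟨K, hK1, hK⟩ := ih
    set R := d ^ (r + 1) + 2 with hR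
    have hR1 : 1 ≤ R := by omega
    refine ⟨R * K, Nat.mul_pos (by omega) (by omega), fun {F} _ B h1 h2 h3 h4 => ?_⟩
    have hmono : ∀ i i' j' j, i ≤ i' → i' < j' → j' ≤ j → j ≤ R * K → (B i j).rank ≤ (B i' j').rank := by
      intro i i' j' j a b c e
      have hA : (B i j).rank ≤ (B i j').rank := by
        rcases c.eq_or_lt with rfl | c
        · exact le_rfl
        · rw [h1 i j' j (by omega) c e]; exact Matrix.rank_mul_le_right _ _
      refine hA.trans ?_
      rcases a.eq_or_lt with rfl | a
      · exact le_rfl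
      · rw [h1 i i' j' a b (by omega)]; exact Matrix.rank_mul_le_left _ _
    by_cases hcase : ∃ s, s < K ∧ ∀ i j, R * s ≤ i → i < j → j ≤ R * (s + 1) → (B i j).rank = r + 1
    · obtain ⟨s, hs, hall⟩ := hcase
      have hsK : R * (s + 1) ≤ R * K := Nat.mul_le_mul_left _ hs
      have e : R * (s + 1) = R * s + R := by ring
      have := const_rank (R := R) (r := r + 1) (by omega) (fun i j => B (R * s + i) (R * s + j))
        (fun i j k a b c => h1 _ _ _ (by omega) (by omega) (by omega))
        (fun i j a b => h2 _ _ (by omega) (by omega))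
        (fun i j a b => hall _ _ (by omega) (by omega) (by omega))
      omega
    · push Not at hcase
      refine hK (fun i j => B (R * i) (R * j)) ?_ ?_ ?_ ?_
      · intro i j k a b c
        exact h1 _ _ _ (Nat.mul_lt_mul_of_pos_left a hR1) (Nat.mul_lt_mul_of_pos_left b hR1) (Nat.mul_le_mul_left _ c)
      · intro i j a c
        exact h2 _ _ (Nat.mul_lt_mul_of_pos_left a hR1) (Nat.mul_le_mul_left _ c)
      · intro i j a c
        exact h3 _ _ (Nat.mul_lt_mul_of_pos_left a hR1) (Nat.mul_le_mul_left _ c)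
      · intro i j a c
        obtain ⟨i', j', p1, p2, p3, p4⟩ := hcase i (by omega)
        have q1 : R * (i + 1) ≤ R * j := Nat.mul_le_mul_left _ a
        have q2 : R * j ≤ R * K := Nat.mul_le_mul_left _ c
        have := hmono (R * i) i' j' (R * j) p1 p2 (by omega) q2
        have := h4 i' j' p2 (by omega)
        omega

theorem chain (d : ℕ) : ∃ K : ℕ, 1 ≤ K ∧ ∀ {F : Type} [Field F] (B : ℕ → ℕ → Matrix (Fin d) (Fin d) F),
    (∀ i j k, i < j → j < k → k ≤ K → B i k = B j k * B i j) →
    (∀ i j, i < j → j ≤ K → IsNilpotent (B i j)) →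
    (∀ i j, i < j → j ≤ K → B i j ≠ 0) → False := by
  obtain ⟨K, hK1, hK⟩ := chain_aux d d
  exact ⟨K, hK1, fun {F} _ B h1 h2 h3 => hK B h1 h2 h3 fun i j _ _ => by simpa using (B i j).rank_le_width⟩


section basics
open scoped Matrix.Norms.L2Operator Pointwise
variable {d : ℕ}

theorem opNorm_eq (A : Matrix (Fin d) (Fin d) ℂ) : opNorm A = ‖A‖ := rfl

theorem opNorm_nonneg (A : Matrix (Fin d) (Fin d) ℂ) : 0 ≤ opNorm A := norm_nonneg _

theorem opNorm_mul (A B : Matrix (Fin d) (Fin d) ℂ) : opNorm (A * B) ≤ opNorm A * opNorm B := by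
  simp only [opNorm_eq]; exact norm_mul_le _ _

theorem opNorm_smul (c : ℂ) (A : Matrix (Fin d) (Fin d) ℂ) : opNorm (c • A) = ‖c‖ * opNorm A := by
  simp only [opNorm_eq]; exact norm_smul _ _

theorem opNorm_one (hd : 1 ≤ d) : opNorm (1 : Matrix (Fin d) (Fin d) ℂ) = 1 := by
  have : Nonempty (Fin d) := ⟨⟨0, hd⟩⟩
  unfold opNorm
  rw [map_one, norm_one]

theorem entry_le (A : Matrix (Fin d) (Fin d) ℂ) (a b : Fin d) : ‖A a b‖ ≤ opNorm A := by
  have h := Matrix.l2_opNorm_mulVec A (EuclideanSpace.single b 1)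
  rw [opNorm_eq]
  have h2 := PiLp.norm_apply_le ((WithLp.toLp 2 (A.mulVec (EuclideanSpace.single b (1 : ℂ)).ofLp)) : EuclideanSpace ℂ (Fin d)) a
  simp at h h2
  exact h2.trans h

theorem opNorm_le_sum (A : Matrix (Fin d) (Fin d) ℂ) :
    opNorm A ≤ ∑ a, ∑ b, ‖A a b‖ * opNorm (Matrix.single a b (1 : ℂ)) := by
  have h := Matrix.matrix_eq_sum_single A
  have : opNorm A = ‖∑ a, ∑ b, (A a b) • (Matrix.single a b (1 : ℂ))‖ := by
    rw [opNorm_eq]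
    conv_lhs => rw [h]
    simp
  rw [this]
  refine (norm_sum_le _ _).trans (Finset.sum_le_sum fun a _ => (norm_sum_le _ _).trans (Finset.sum_le_sum fun b _ => ?_))
  rw [norm_smul]; rfl

theorem specRad_ne_top (hd : 1 ≤ d) (A : Matrix (Fin d) (Fin d) ℂ) : spectralRadius ℂ A ≤ ENNReal.ofReal (opNorm A) := by
  have : NormOneClass (Matrix (Fin d) (Fin d) ℂ) := ⟨by rw [← opNorm_eq]; exact opNorm_one hd⟩
  have := spectrum.spectralRadius_le_nnnorm (𝕜 := ℂ) A
  rwa [opNorm_eq, ofReal_norm]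

theorem specRad_nonneg (A : Matrix (Fin d) (Fin d) ℂ) : 0 ≤ specRad A := ENNReal.toReal_nonneg

theorem specRad_le (hd : 1 ≤ d) (A : Matrix (Fin d) (Fin d) ℂ) : specRad A ≤ opNorm A :=
  ENNReal.toReal_le_of_le_ofReal (opNorm_nonneg A) (specRad_ne_top hd A)

theorem le_specRad (hd : 1 ≤ d) (A : Matrix (Fin d) (Fin d) ℂ) (z : ℂ) (hz : z ∈ spectrum ℂ A) : ‖z‖ ≤ specRad A := by
  have h1 : (‖z‖₊ : ℝ≥0∞) ≤ spectralRadius ℂ A := le_iSup₂ (f := fun k (_ : k ∈ spectrum ℂ A) => (‖k‖₊ : ℝ≥0∞)) z hz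
  have h2 := ENNReal.toReal_mono (ne_top_of_le_ne_top ENNReal.ofReal_ne_top (specRad_ne_top hd A)) h1
  simpa [specRad] using h2

theorem spec_smul (hd : 1 ≤ d) (A : Matrix (Fin d) (Fin d) ℂ) (c : ℂ) (hc : c ≠ 0) (z : ℂ)
    (hz : z ∈ spectrum ℂ (c • A)) : ‖z‖ ≤ ‖c‖ * specRad A := by
  have : z ∈ c • spectrum ℂ A := by
    have h := spectrum.unit_smul_eq_smul A (Units.mk0 c hc)
    have h' : spectrum ℂ (c • A) = c • spectrum ℂ A := h
    rwa [h'] at hz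
  obtain ⟨y, hy, rfl⟩ := this
  simp only [smul_eq_mul, norm_mul]
  gcongr
  exact le_specRad hd A y hy

theorem charpoly_coeff_le (A : Matrix (Fin d) (Fin d) ℂ) (B : ℝ)
    (h : ∀ z ∈ spectrum ℂ A, ‖z‖ ≤ B) (i : ℕ) : ‖A.charpoly.coeff i‖ ≤ B ^ (d - i) * d.choose i := by
  have := Polynomial.coeff_le_of_roots_le (p := A.charpoly) (f := RingHom.id ℂ) (B := B) i (Matrix.charpoly_monic A)
    (by rw [Polynomial.map_id]; exact IsAlgClosed.splits _) (by
      intro z hz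
      rw [Polynomial.map_id] at hz
      exact h z (Matrix.mem_spectrum_of_isRoot_charpoly (Polynomial.isRoot_of_mem_roots hz)))
  simpa [Matrix.charpoly_natDegree_eq_dim] using this

theorem cont_opNorm : Continuous fun f : Fin d → Fin d → ℂ => opNorm (Matrix.of f) := by
  unfold opNorm
  apply Continuous.norm
  let φ : (Fin d → Fin d → ℂ) →ₗ[ℂ] (EuclideanSpace ℂ (Fin d) →L[ℂ] EuclideanSpace ℂ (Fin d)) :=
    (Matrix.toEuclideanCLM (n := Fin d) (𝕜 := ℂ)).toAlgEquiv.toLinearMap ∘ₗ (Matrix.ofLinearEquiv ℂ).toLinearMap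
  exact LinearMap.continuous_of_finiteDimensional φ

theorem meas_opNorm {Ω : Type*} [MeasurableSpace Ω] (M : Ω → Matrix (Fin d) (Fin d) ℂ)
    (hM : ∀ a b, Measurable fun x => M x a b) : Measurable fun x => opNorm (M x) := by
  have h : Measurable fun x => (fun a b => M x a b : Fin d → Fin d → ℂ) :=
    measurable_pi_iff.2 fun a => measurable_pi_iff.2 fun b => hM a b
  exact cont_opNorm.measurable.comp h

theorem meas_specRad {Ω : Type*} [MeasurableSpace Ω] (M : Ω → Matrix (Fin d) (Fin d) ℂ)
    (hM : ∀ a b, Measurable fun x => M x a b) : Measurable fun x => specRad (M x) := by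
  have hpow : ∀ n : ℕ, ∀ a b, Measurable fun x => (M x ^ n) a b := by
    intro n
    induction n with
    | zero => intro a b; simp
    | succ n ih =>
      intro a b
      simp only [pow_succ, Matrix.mul_apply]
      exact Finset.measurable_sum _ fun c _ => (ih a c).mul (hM c b)
  have : Measurable fun x => spectralRadius ℂ (M x) := by
    refine measurable_of_tendsto_metrizable (f := fun n : ℕ => fun x => ENNReal.ofReal (opNorm (M x ^ n) ^ (1 / n : ℝ))) ?_ ?_
    · intro n
      exact ((meas_opNorm _ (hpow n)).pow_const _).ennreal_ofReal
    · rw [tendsto_pi_nhds]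
      intro x
      exact spectrum.pow_norm_pow_one_div_tendsto_nhds_spectralRadius (M x)
  exact this.ennreal_toReal

end basics


section residue

/-- sequences of subexponential growth (with respect to `t`) along an ultrafilter. -/
def subexp (U : Ultrafilter ℕ) (t : ℕ → ℝ) (ht : Tendsto t U atTop) : Subring (ℕ → ℂ) where
  carrier := {f | ∀ ε : ℝ, 0 < ε → ∀ᶠ p in (U : Filter ℕ), ‖f p‖ ≤ Real.exp (ε * t p)}
  mul_mem' := by
    intro f g hf hg ε hε
    filter_upwards [hf (ε / 2) (by positivity), hg (ε / 2) (by positivity)] with p h1 h2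
    rw [Pi.mul_apply, norm_mul]
    calc _ ≤ Real.exp (ε / 2 * t p) * Real.exp (ε / 2 * t p) := by gcongr
      _ = _ := by rw [← Real.exp_add]; congr 1; ring
  one_mem' := by
    intro ε hε
    filter_upwards [ht.eventually_ge_atTop 0] with p hp
    simp only [Pi.one_apply, norm_one]
    exact Real.one_le_exp (by positivity)
  add_mem' := by
    intro f g hf hg ε hε
    filter_upwards [hf (ε / 2) (by positivity), hg (ε / 2) (by positivity),
      ht.eventually_ge_atTop (2 / ε)] with p h1 h2 h3
    have h4 : 1 ≤ ε / 2 * t p := by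
      rw [div_le_iff₀ hε] at h3; linarith
    have h5 : 2 ≤ Real.exp (ε / 2 * t p) := by
      have := Real.add_one_le_exp (ε / 2 * t p); linarith
    calc ‖(f + g) p‖ ≤ ‖f p‖ + ‖g p‖ := norm_add_le _ _
      _ ≤ 2 * Real.exp (ε / 2 * t p) := by linarith
      _ ≤ Real.exp (ε / 2 * t p) * Real.exp (ε / 2 * t p) := by gcongr
      _ = _ := by rw [← Real.exp_add]; congr 1; ring
  zero_mem' := by
    intro ε hε
    refine Eventually.of_forall fun p => ?_
    simp only [Pi.zero_apply, norm_zero]; positivity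
  neg_mem' := by
    intro f hf ε hε
    simpa using hf ε hε

variable (U : Ultrafilter ℕ) (t : ℕ → ℝ) (ht : Tendsto t U atTop)

/-- exponentially small sequences. -/
def small : Ideal (subexp U t ht) where
  carrier := {f | ∃ δ : ℝ, 0 < δ ∧ ∀ᶠ p in (U : Filter ℕ), ‖f.1 p‖ ≤ Real.exp (-δ * t p)}
  add_mem' := by
    rintro f g ⟨δ₁, hδ₁, h1⟩ ⟨δ₂, hδ₂, h2⟩
    have hδ : 0 < min δ₁ δ₂ := lt_min hδ₁ hδ₂
    refine ⟨min δ₁ δ₂ / 2, by positivity, ?_⟩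
    filter_upwards [h1, h2, ht.eventually_ge_atTop (2 / min δ₁ δ₂), ht.eventually_ge_atTop 0] with p h1 h2 h3 h0
    set δ := min δ₁ δ₂
    have h4 : 1 ≤ δ / 2 * t p := by
      rw [div_le_iff₀ hδ] at h3; linarith
    have h5 : 2 ≤ Real.exp (δ / 2 * t p) := by
      have := Real.add_one_le_exp (δ / 2 * t p); linarith
    have e1 : Real.exp (-δ₁ * t p) ≤ Real.exp (-δ * t p) := by
      apply Real.exp_le_exp.2
      have : δ * t p ≤ δ₁ * t p := mul_le_mul_of_nonneg_right (min_le_left _ _) h0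
      linarith
    have e2 : Real.exp (-δ₂ * t p) ≤ Real.exp (-δ * t p) := by
      apply Real.exp_le_exp.2
      have : δ * t p ≤ δ₂ * t p := mul_le_mul_of_nonneg_right (min_le_right _ _) h0
      linarith
    calc ‖f.1 p + g.1 p‖ ≤ ‖f.1 p‖ + ‖g.1 p‖ := norm_add_le _ _
      _ ≤ 2 * Real.exp (-δ * t p) := by linarith
      _ ≤ Real.exp (δ / 2 * t p) * Real.exp (-δ * t p) := by gcongr
      _ = _ := by rw [← Real.exp_add]; congr 1; ring
  zero_mem' := by
    refine ⟨1, one_pos, Eventually.of_forall fun p => ?_⟩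
    change ‖(0 : ℂ)‖ ≤ _
    simp only [norm_zero]; positivity
  smul_mem' := by
    rintro c f ⟨δ, hδ, h⟩
    refine ⟨δ / 2, by positivity, ?_⟩
    filter_upwards [h, c.2 (δ / 2) (by positivity)] with p h1 h2
    change ‖c.1 p * f.1 p‖ ≤ _
    rw [norm_mul]
    calc _ ≤ Real.exp (δ / 2 * t p) * Real.exp (-δ * t p) := by gcongr
      _ = _ := by rw [← Real.exp_add]; congr 1; ring

theorem mem_small (f : subexp U t ht) : f ∈ small U t ht ↔
    ∃ δ : ℝ, 0 < δ ∧ ∀ᶠ p in (U : Filter ℕ), ‖f.1 p‖ ≤ Real.exp (-δ * t p) := Iff.rfl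

theorem small_max : (small U t ht).IsMaximal := by
  rw [Ideal.isMaximal_iff]
  constructor
  · rintro ⟨δ, hδ, h⟩
    obtain ⟨p, h1, h2⟩ := (h.and (ht.eventually_gt_atTop 0)).exists
    change ‖(1 : ℂ)‖ ≤ _ at h1
    rw [norm_one] at h1
    have : Real.exp (-δ * t p) < 1 := Real.exp_lt_one_iff.2 (by nlinarith)
    linarith
  · intro I x hI hx hxI
    rw [mem_small] at hx
    push Not at hx
    have hx' : ∀ δ : ℝ, 0 < δ → ∀ᶠ p in (U : Filter ℕ), Real.exp (-δ * t p) < ‖x.1 p‖ := by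
      intro δ hδ
      exact hx δ hδ
    let y : subexp U t ht := ⟨fun p => (x.1 p)⁻¹, by
      intro ε hε
      filter_upwards [hx' ε hε] with p hp
      rw [norm_inv]
      apply inv_le_of_inv_le₀ (Real.exp_pos _)
      rw [← Real.exp_neg, ← neg_mul]
      exact hp.le⟩
    have hxy : 1 - y * x ∈ small U t ht := by
      refine ⟨1, one_pos, ?_⟩
      filter_upwards [hx' 1 one_pos] with p hp
      change ‖1 - (x.1 p)⁻¹ * x.1 p‖ ≤ _
      have h0 : x.1 p ≠ 0 := by
        intro h
        rw [h, norm_zero] at hp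
        exact absurd hp (not_lt.2 (Real.exp_pos _).le)
      rw [inv_mul_cancel₀ h0]
      simp only [sub_self, norm_zero]; positivity
    have h1 := I.add_mem (hI hxy) (I.mul_mem_left y hxI)
    simpa using h1

/-- evaluation at `p`. -/
def evp (p : ℕ) : subexp U t ht →+* ℂ := (Pi.evalRingHom (fun _ => ℂ) p).comp (subexp U t ht).subtype

theorem evp_apply (p : ℕ) (f : subexp U t ht) : evp U t ht p f = f.1 p := rfl

theorem nilp_of_small {d : ℕ} (M : Matrix (Fin d) (Fin d) (subexp U t ht)) (σ : ℝ) (hσ : 0 < σ)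
    (h : ∀ p, ∀ z ∈ spectrum ℂ (M.map (evp U t ht p)), ‖z‖ ≤ Real.exp (-σ * t p)) :
    IsNilpotent (M.map (Ideal.Quotient.mk (small U t ht))) := by
  have hcoeff : ∀ i, i < d → M.charpoly.coeff i ∈ small U t ht := by
    intro i hi
    obtain ⟨C, hC⟩ : ∃ C : ℝ, (d.choose i : ℝ) ≤ Real.exp C := ⟨_, (by
      have := Real.add_one_le_exp (d.choose i : ℝ); linarith : (d.choose i : ℝ) ≤ Real.exp (d.choose i : ℝ))⟩
    refine ⟨σ / 2, by positivity, ?_⟩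
    filter_upwards [ht.eventually_ge_atTop 0, ht.eventually_ge_atTop (C * 2 / σ)] with p h0 h1
    have h2 := charpoly_coeff_le _ _ (h p) i
    have h3 : (M.map (evp U t ht p)).charpoly.coeff i = (M.charpoly.coeff i).1 p := by
      rw [Matrix.charpoly_map, Polynomial.coeff_map]; rfl
    rw [h3] at h2
    have h4 : Real.exp (-σ * t p) ^ (d - i) ≤ Real.exp (-σ * t p) :=
      pow_le_of_le_one (Real.exp_pos _).le (Real.exp_le_one_iff.2 (by nlinarith)) (by omega)
    calc _ ≤ _ := h2
      _ ≤ Real.exp (-σ * t p) * Real.exp C := by gcongr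
      _ = Real.exp (-σ * t p + C) := by rw [Real.exp_add]
      _ ≤ _ := by
        apply Real.exp_le_exp.2
        rw [div_le_iff₀ hσ] at h1
        linarith
  set φ := Ideal.Quotient.mk (small U t ht)
  have : Nontrivial (subexp U t ht ⧸ small U t ht) := Ideal.Quotient.nontrivial_iff.2 (small_max U t ht).ne_top
  have : Nontrivial (subexp U t ht) := RingHom.domain_nontrivial φ
  have hcp : (M.map φ).charpoly = Polynomial.X ^ d := by
    ext i
    rw [Matrix.charpoly_map, Polynomial.coeff_map, Polynomial.coeff_X_pow]
    rcases lt_trichotomy i d with hi | hi | hi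
    · rw [if_neg hi.ne]
      exact Ideal.Quotient.eq_zero_iff_mem.2 (hcoeff i hi)
    · subst hi
      rw [if_pos rfl]
      have h1 := (Matrix.charpoly_monic M).coeff_natDegree
      rw [Matrix.charpoly_natDegree_eq_dim, Fintype.card_fin] at h1
      rw [h1, map_one]
    · rw [if_neg hi.ne', Polynomial.coeff_eq_zero_of_natDegree_lt, map_zero]
      rwa [Matrix.charpoly_natDegree_eq_dim, Fintype.card_fin]
  have hCH := Matrix.aeval_self_charpoly (M.map φ)
  rw [hcp] at hCH
  exact ⟨d, by simpa using hCH⟩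

end residue

theorem asym (d : ℕ) : ∃ K : ℕ, 1 ≤ K ∧ ∀ (t : ℕ → ℝ) (_ : Tendsto t atTop atTop)
    (A : ℕ → ℕ → ℕ → Matrix (Fin d) (Fin d) ℂ) (σ : ℝ) (_ : 0 < σ),
    (∀ p i j k : ℕ, i < j → j < k → k ≤ K → A p i k = A p j k * A p i j) →
    (∀ p i j : ℕ, i < j → j ≤ K → opNorm (A p i j) ≤ Real.exp (1 / ((p : ℝ) + 1) * t p)) →
    (∀ p i j : ℕ, i < j → j ≤ K → Real.exp (-(1 / ((p : ℝ) + 1)) * t p) ≤ opNorm (A p i j)) →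
    (∀ p i j : ℕ, i < j → j ≤ K → ∀ z ∈ spectrum ℂ (A p i j), ‖z‖ ≤ Real.exp (-σ * t p)) → False := by
  obtain ⟨K, hK1, hK⟩ := chain d
  refine ⟨K, hK1, ?_⟩
  intro t ht0 A σ hσ hmul hup hlo hsp
  let U : Ultrafilter ℕ := Ultrafilter.of atTop
  have hU : (U : Filter ℕ) ≤ atTop := Ultrafilter.of_le _
  have ht : Tendsto t U atTop := ht0.mono_left hU
  have hdec : ∀ ε : ℝ, 0 < ε → ∀ᶠ p : ℕ in (U : Filter ℕ), 1 / ((p : ℝ) + 1) < ε := fun ε hε =>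
    hU (tendsto_one_div_add_atTop_nhds_zero_nat.eventually_lt_const hε)
  have hmem : ∀ i j, i < j → j ≤ K → ∀ a b, (fun p => A p i j a b) ∈ subexp U t ht := by
    intro i j hij hj a b ε hε
    filter_upwards [hdec ε hε, ht.eventually_ge_atTop 0] with p h1 h2
    refine (entry_le _ _ _).trans ((hup p i j hij hj).trans ?_)
    apply Real.exp_le_exp.2
    gcongr
  classical
  let M : ℕ → ℕ → Matrix (Fin d) (Fin d) (subexp U t ht) := fun i j =>
    if h : i < j ∧ j ≤ K then Matrix.of fun a b => ⟨fun p => A p i j a b, hmem i j h.1 h.2 a b⟩ else 0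
  have hM : ∀ i j, i < j → j ≤ K → ∀ p, (M i j).map (evp U t ht p) = A p i j := by
    intro i j hij hj p
    ext a b
    simp only [M, dif_pos (And.intro hij hj)]
    rfl
  have hinj : ∀ X Y : Matrix (Fin d) (Fin d) (subexp U t ht),
      (∀ p, X.map (evp U t ht p) = Y.map (evp U t ht p)) → X = Y := by
    intro X Y h
    ext a b p
    exact congrFun (congrFun (h p) a) b
  have := small_max U t ht
  let : Field (subexp U t ht ⧸ small U t ht) := Ideal.Quotient.field _
  refine hK (fun i j => (M i j).map (Ideal.Quotient.mk (small U t ht))) ?_ ?_ ?_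
  · intro i j k hij hjk hk
    have h1 : M i k = M j k * M i j := by
      apply hinj
      intro p
      rw [Matrix.map_mul, hM i k (by omega) hk, hM j k hjk hk, hM i j hij (by omega)]
      exact hmul p i j k hij hjk hk
    rw [h1]
    exact Matrix.map_mul
  · intro i j hij hj
    apply nilp_of_small U t ht (M i j) σ hσ
    intro p z hz
    rw [hM i j hij hj] at hz
    exact hsp p i j hij hj z hz
  · intro i j hij hj h0
    have hs : ∀ a b, M i j a b ∈ small U t ht := by
      intro a b
      have := congrFun (congrFun h0 a) b
      exact Ideal.Quotient.eq_zero_iff_mem.1 this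
    have hs2 : ∀ a b, ∃ g : subexp U t ht, g ∈ small U t ht ∧ ∀ p, g.1 p =
        ((‖A p i j a b‖ * opNorm (Matrix.single a b (1 : ℂ)) : ℝ) : ℂ) := by
      intro a b
      have hc : (fun _ => ((opNorm (Matrix.single a b (1 : ℂ)) : ℝ) : ℂ)) ∈ subexp U t ht := by
        intro ε hε
        filter_upwards [ht.eventually_ge_atTop (opNorm (Matrix.single a b (1 : ℂ)) / ε)] with p hp
        rw [Complex.norm_real, Real.norm_of_nonneg (opNorm_nonneg _)]
        rw [div_le_iff₀ hε] at hp
        have := Real.add_one_le_exp (ε * t p)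
        linarith
      have hn : (fun p => ((‖A p i j a b‖ : ℝ) : ℂ)) ∈ subexp U t ht := by
        intro ε hε
        simpa using hmem i j hij hj a b ε hε
      have hns : (⟨_, hn⟩ : subexp U t ht) ∈ small U t ht := by
        obtain ⟨δ, hδ, h⟩ := hs a b
        refine ⟨δ, hδ, ?_⟩
        filter_upwards [h] with p hp
        have e : (M i j a b).1 p = A p i j a b := congrFun (congrFun (hM i j hij hj p) a) b
        rw [e] at hp
        simpa using hp
      refine ⟨⟨_, hn⟩ * ⟨_, hc⟩, (small U t ht).mul_mem_right _ hns, fun p => ?_⟩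
      simp
    choose g hg1 hg2 using hs2
    have hsum : ∑ a, ∑ b, g a b ∈ small U t ht :=
      (small U t ht).sum_mem fun a _ => (small U t ht).sum_mem fun b _ => hg1 a b
    obtain ⟨δ, hδ, h⟩ := hsum
    obtain ⟨p, h1, h2, h3⟩ := (h.and ((hdec δ hδ).and (ht.eventually_gt_atTop 0))).exists
    have e : (∑ a, ∑ b, g a b).1 p = ((∑ a, ∑ b, ‖A p i j a b‖ * opNorm (Matrix.single a b (1 : ℂ)) : ℝ) : ℂ) := by
      rw [← evp_apply]
      simp only [map_sum, evp_apply, hg2]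
      push_cast
      rfl
    rw [e, Complex.norm_real] at h1
    have h4 := (hlo p i j hij hj).trans ((opNorm_le_sum _).trans ((le_abs_self _).trans h1))
    rw [Real.exp_le_exp] at h4
    nlinarith


theorem avg_bdd {Ω : Type*} [MeasurableSpace Ω] (μ : Measure Ω) [IsProbabilityMeasure μ]
    (T : Ω → Ω) (hT : MeasurePreserving T μ μ) (h : Ω → ℝ) (hm : Measurable h) (h0 : ∀ x, 0 ≤ h x)
    (hint : ∫⁻ x, ENNReal.ofReal (h x) ∂μ < ⊤) :
    ∀ᵐ x ∂μ, ∃ η : ℕ, ∀ n : ℕ, 1 ≤ n → ∑ k ∈ Finset.range n, h (T^[k] x) ≤ η * n := by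
  set B : ℕ → Set Ω := fun η => {x | ∃ n : ℕ, 1 ≤ n ∧
    (η : ℝ≥0∞) * n ≤ ∑ k ∈ Finset.range n, ENNReal.ofReal (h (T^[k] x))} with hB
  have hb : ∀ η : ℕ, (η : ℝ≥0∞) * μ (B η) ≤ ∫⁻ x, ENNReal.ofReal (h x) ∂μ := fun η =>
    maximal μ T hT (fun x => ENNReal.ofReal (h x)) hm.ennreal_ofReal η (by simp)
  have hz : μ (⋂ η, B η) = 0 := by
    by_contra hne
    obtain ⟨m, hm⟩ := ENNReal.exists_nat_mul_gt hne hint.ne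
    have h1 : (m : ℝ≥0∞) * μ (⋂ η, B η) ≤ m * μ (B m) := by
      gcongr; exact Set.iInter_subset _ _
    exact absurd (h1.trans (hb m)) (not_le.2 hm)
  have : ∀ᵐ x ∂μ, x ∉ ⋂ η, B η := measure_eq_zero_iff_ae_notMem.1 hz
  filter_upwards [this] with x hx
  rw [Set.mem_iInter] at hx
  push Not at hx
  obtain ⟨η, hη⟩ := hx
  refine ⟨η, fun n hn => ?_⟩
  by_contra hcon
  apply hη
  refine ⟨n, hn, ?_⟩
  rw [← ENNReal.ofReal_sum_of_nonneg (fun k _ => h0 _)]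
  rw [← ENNReal.ofReal_natCast η, ← ENNReal.ofReal_natCast n, ← ENNReal.ofReal_mul (by positivity)]
  exact ENNReal.ofReal_le_ofReal (not_le.1 hcon).le

theorem conv {d : ℕ} (hd : 1 ≤ d) {Ω : Type*} [MeasurableSpace Ω]
    (μ : Measure Ω) [IsProbabilityMeasure μ] (T : Ω → Ω) (hT : MeasurePreserving T μ μ)
    (L : Ω → ℕ → Matrix (Fin d) (Fin d) ℂ)
    (hmeas : ∀ (n : ℕ) (j k : Fin d), Measurable fun ω => L ω n j k)
    (hL0 : ∀ ω : Ω, L ω 0 = 1)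
    (hcoc : ∀ (ω : Ω) (ℓ m : ℕ), L ω (ℓ + m) = L (T^[m] ω) ℓ * L ω m)
    (hint : ∫⁻ ω, ENNReal.ofReal (max (Real.log (opNorm (L ω 1))) 0) ∂μ < ⊤) :
    ∀ᵐ x ∂μ, ∃ l : ℝ, Tendsto (fun n : ℕ => opNorm (L x n) ^ (1 / (n : ℝ))) atTop (𝓝 l) := by
  set h : Ω → ℝ := fun x => max (Real.log (opNorm (L x 1))) 0 with hh
  have hNm : ∀ n, Measurable fun x => opNorm (L x n) := fun n => meas_opNorm _ (hmeas n)
  have hm : Measurable h := (Real.measurable_log.comp (hNm 1)).max measurable_const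
  have h0 : ∀ x, 0 ≤ h x := fun x => le_max_right _ _
  set S : ℕ → Ω → ℝ := fun n x => ∑ k ∈ Finset.range n, h (T^[k] x) with hS
  have hSm : ∀ n, Measurable (S n) := fun n =>
    Finset.measurable_fun_sum _ fun k _ => hm.comp (hT.measurable.iterate k)
  have hS0 : ∀ n x, 0 ≤ S n x := fun n x => Finset.sum_nonneg fun k _ => h0 _
  have hSadd : ∀ m n x, S (m + n) x = S m x + S n (T^[m] x) := by
    intro m n x
    simp only [hS]
    rw [Finset.sum_range_add]
    congr 1
    apply Finset.sum_congr rfl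
    intro k _
    rw [add_comm, Function.iterate_add_apply]
  have h1 : ∀ x, opNorm (L x 1) ≤ Real.exp (h x) := by
    intro x
    rcases (opNorm_nonneg (L x 1)).eq_or_lt with h2 | h2
    · rw [← h2]; positivity
    · rw [← Real.log_le_iff_le_exp h2]; exact le_max_left _ _
  have hle : ∀ n x, opNorm (L x n) ≤ Real.exp (S n x) := by
    intro n x
    induction n with
    | zero => rw [hL0, opNorm_one hd]; simp [hS]
    | succ n ih =>
      rw [add_comm n 1, hcoc, add_comm 1 n, hSadd, add_comm, Real.exp_add]
      refine (opNorm_mul _ _).trans ?_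
      have h3 : S 1 (T^[n] x) = h (T^[n] x) := by simp [hS]
      rw [h3]
      exact mul_le_mul (h1 _) ih (opNorm_nonneg _) (Real.exp_pos _).le
  have k1 := kingman2 μ T hT (fun n x => Real.exp (-S n x)) (fun n => (hSm n).neg.exp)
    (fun n x => (Real.exp_pos _).le) (fun n x => Real.exp_le_one_iff.2 (by have := hS0 n x; linarith))
    (fun m n x => by rw [hSadd, neg_add, Real.exp_add])
  have k2 := kingman2 μ T hT (fun n x => opNorm (L x n) * Real.exp (-S n x))
    (fun n => (hNm n).mul (hSm n).neg.exp)
    (fun n x => mul_nonneg (opNorm_nonneg _) (Real.exp_pos _).le)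
    (fun n x => by
      calc _ ≤ Real.exp (S n x) * Real.exp (-S n x) := by gcongr; exact hle n x
        _ = 1 := by rw [← Real.exp_add]; simp)
    (fun m n x => by
      rw [hSadd, neg_add, Real.exp_add, add_comm m n, hcoc]
      calc _ ≤ (opNorm (L (T^[m] x) n) * opNorm (L x m)) * (Real.exp (-S m x) * Real.exp (-S n (T^[m] x))) := by
            gcongr; exact opNorm_mul _ _
        _ = _ := by ring)
  filter_upwards [k1, k2, avg_bdd μ T hT h hm h0 hint] with x ⟨a, ha⟩ ⟨b, hb⟩ ⟨η, hη⟩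
  have hrw : ∀ n : ℕ, Real.exp (-S n x) ^ (1 / (n : ℝ)) = Real.exp (-(S n x / n)) := by
    intro n
    rw [← Real.exp_mul]; congr 1; ring
  have hapos : 0 < a := by
    refine lt_of_lt_of_le (Real.exp_pos (-(η : ℝ))) (ge_of_tendsto ha ?_)
    filter_upwards [eventually_ge_atTop 1] with n hn
    rw [hrw]
    apply Real.exp_le_exp.2
    have hn' : (0 : ℝ) < n := by exact_mod_cast hn
    have : S n x / n ≤ η := by rw [div_le_iff₀ hn']; exact hη n hn
    linarith
  refine ⟨b / a, (hb.div ha hapos.ne').congr fun n => ?_⟩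
  simp only [Pi.div_apply]
  rw [Real.mul_rpow (opNorm_nonneg _) (Real.exp_pos _).le]
  field_simp

theorem invar {Ω : Type*} [MeasurableSpace Ω] (μ : Measure Ω) [IsProbabilityMeasure μ]
    (T : Ω → Ω) (hT : MeasurePreserving T μ μ) (f : Ω → ℝ) (hf : Measurable f) (h0 : ∀ x, 0 ≤ f x)
    (hle : ∀ᵐ x ∂μ, f x ≤ f (T x)) : ∀ᵐ x ∂μ, ∀ k : ℕ, f (T^[k] x) = f x := by
  have hg : Measurable fun x => ENNReal.ofReal (Real.arctan (f x)) :=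
    (Real.measurable_arctan.comp hf).ennreal_ofReal
  have e : (fun x => ENNReal.ofReal (Real.arctan (f x))) =ᵐ[μ]
      fun x => ENNReal.ofReal (Real.arctan (f (T x))) := by
    refine ae_eq_of_ae_le_of_lintegral_le ?_ ?_ (hg.comp hT.measurable).aemeasurable ?_
    · filter_upwards [hle] with x hx
      exact ENNReal.ofReal_le_ofReal (Real.arctan_strictMono.monotone hx)
    · refine ne_top_of_le_ne_top (b := ENNReal.ofReal (Real.pi / 2)) ENNReal.ofReal_ne_top ?_
      calc _ ≤ ∫⁻ _, ENNReal.ofReal (Real.pi / 2) ∂μ :=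
            lintegral_mono fun x => ENNReal.ofReal_le_ofReal (Real.arctan_lt_pi_div_two _).le
        _ = _ := by simp
    · exact (hT.lintegral_comp hg).le
  have e1 : ∀ᵐ x ∂μ, f (T x) = f x := by
    filter_upwards [e] with x hx
    have h1 : ∀ y, 0 ≤ Real.arctan (f y) := fun y => Real.arctan_nonneg.2 (h0 y)
    rw [ENNReal.ofReal_eq_ofReal_iff (h1 _) (h1 _)] at hx
    exact (Real.arctan_injective hx).symm
  rw [ae_all_iff]
  intro k
  induction k with
  | zero => simp
  | succ k ih =>
    filter_upwards [ih, (hT.iterate k).quasiMeasurePreserving.ae e1] with x h1 h2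
    rw [Function.iterate_succ_apply', h2, h1]

theorem visits {Ω : Type*} [MeasurableSpace Ω] (μ : Measure Ω) [IsProbabilityMeasure μ]
    (T : Ω → Ω) (hT : MeasurePreserving T μ μ) (G : Set Ω) (hG : MeasurableSet G) (θ : ℝ)
    (hθ : ENNReal.ofReal θ < μ G) (P : Ω → Prop) (hP : ∀ᵐ x ∂μ, P x) (n : ℕ) (hn : 1 ≤ n) :
    ∃ x, P x ∧ ∃ V : Finset ℕ, (∀ k ∈ V, k < n ∧ T^[k] x ∈ G) ∧ θ * n ≤ V.card := by
  classical
  by_contra hcon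
  push Not at hcon
  have h1 := lint_sum hT (G.indicator fun _ => (1 : ℝ≥0∞)) (measurable_const.indicator hG) n
  have h2 : ∫⁻ x, ∑ k ∈ Finset.range n, G.indicator (fun _ => (1 : ℝ≥0∞)) (T^[k] x) ∂μ ≤
      ∫⁻ _, ENNReal.ofReal (θ * n) ∂μ := by
    apply lintegral_mono_ae
    filter_upwards [hP] with x hx
    have h3 := hcon x hx ((Finset.range n).filter fun k => T^[k] x ∈ G) (by
      intro k hk
      simpa using hk)
    have h4 : ∑ k ∈ Finset.range n, G.indicator (fun _ => (1 : ℝ≥0∞)) (T^[k] x) =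
        (((Finset.range n).filter fun k => T^[k] x ∈ G).card : ℝ≥0∞) := by
      rw [Finset.card_filter]
      push_cast
      apply Finset.sum_congr rfl
      intro k _
      simp [Set.indicator_apply]
    rw [h4, ← ENNReal.ofReal_natCast]
    exact ENNReal.ofReal_le_ofReal h3.le
  rw [h1, lintegral_indicator_const hG, one_mul, lintegral_const, measure_univ, mul_one,
    mul_comm θ, ENNReal.ofReal_mul (by positivity), ENNReal.ofReal_natCast] at h2
  have h5 := (ENNReal.mul_le_mul_iff_right (by simp; omega) (by simp)).1 h2
  exact absurd h5 (not_le.2 hθ)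

theorem spaced (V : Finset ℕ) (K g : ℕ) (hV : K * g + 1 ≤ V.card) :
    ∃ m : ℕ → ℕ, (∀ i, i ≤ K → m i ∈ V) ∧ ∀ i j, i < j → j ≤ K → m i + g ≤ m j := by
  classical
  let f : ℕ → ℕ := fun a => if h : a < V.card then V.orderEmbOfFin rfl ⟨a, h⟩ else 0
  have hfV : ∀ a, a < V.card → f a ∈ V := by
    intro a ha
    simp only [f, dif_pos ha]
    exact Finset.orderEmbOfFin_mem _ _ _
  have hf1 : ∀ a, a + 1 < V.card → f a < f (a + 1) := by
    intro a ha
    simp only [f, dif_pos ha, dif_pos (show a < V.card by omega)]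
    exact (V.orderEmbOfFin rfl).strictMono (by simp [Fin.lt_def])
  have hf2 : ∀ b a, a + b < V.card → f a + b ≤ f (a + b) := by
    intro b
    induction b with
    | zero => intro a _; simp
    | succ b ih =>
      intro a ha
      have h1 := ih a (by omega)
      have h2 := hf1 (a + b) (by omega)
      rw [← add_assoc a b 1]
      omega
  refine ⟨fun i => f (i * g), fun i hi => hfV _ ?_, fun i j hij hj => ?_⟩
  · have : i * g ≤ K * g := Nat.mul_le_mul_right _ hi
    omega
  · have h1 : j * g ≤ K * g := Nat.mul_le_mul_right _ hj
    have h2 : (i + 1) * g ≤ j * g := Nat.mul_le_mul_right _ hij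
    have h3 : (i + 1) * g = i * g + g := by ring
    have h4 := hf2 (j * g - i * g) (i * g) (by omega)
    rw [show i * g + (j * g - i * g) = j * g by omega] at h4
    change f (i * g) + g ≤ f (j * g)
    omega

theorem step_le {d : ℕ} {Ω : Type*} (T : Ω → Ω)
    (L : Ω → ℕ → Matrix (Fin d) (Fin d) ℂ)
    (hcoc : ∀ (ω : Ω) (ℓ m : ℕ), L ω (ℓ + m) = L (T^[m] ω) ℓ * L ω m) (x : Ω) (a b : ℝ)
    (ha : Tendsto (fun n : ℕ => opNorm (L x n) ^ (1 / (n : ℝ))) atTop (𝓝 a))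
    (hb : Tendsto (fun n : ℕ => opNorm (L (T x) n) ^ (1 / (n : ℝ))) atTop (𝓝 b)) : a ≤ b := by
  have ha' := ha.comp (tendsto_add_atTop_nat 1)
  set C := opNorm (L x 1) + 1 with hC
  have hCpos : 0 < C := by have := opNorm_nonneg (L x 1); linarith
  have e1 : Tendsto (fun n : ℕ => (n : ℝ) / ((n : ℝ) + 1)) atTop (𝓝 1) :=
    tendsto_natCast_div_add_atTop 1
  have e2 : Tendsto (fun n : ℕ => (1 : ℝ) / ((n : ℝ) + 1)) atTop (𝓝 0) :=
    tendsto_one_div_add_atTop_nhds_zero_nat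
  have h1 := (hb.rpow e1 (Or.inr one_pos)).mul
    ((tendsto_const_nhds (x := C)).rpow e2 (Or.inl hCpos.ne'))
  rw [Real.rpow_one, Real.rpow_zero, mul_one] at h1
  refine le_of_tendsto_of_tendsto ha' h1 ?_
  filter_upwards [eventually_ge_atTop 1] with n hn
  have hn' : (0 : ℝ) < n := by exact_mod_cast hn
  simp only [Function.comp_apply]
  rw [hcoc x n 1, ← Real.rpow_mul (opNorm_nonneg _)]
  push_cast
  rw [show 1 / (n : ℝ) * (n / (n + 1)) = 1 / (n + 1) by field_simp,
    ← Real.mul_rpow (opNorm_nonneg _) hCpos.le]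
  apply Real.rpow_le_rpow (opNorm_nonneg _) _ (by positivity)
  refine (opNorm_mul _ _).trans ?_
  rw [Function.iterate_one]
  apply mul_le_mul_of_nonneg_left _ (opNorm_nonneg _)
  linarith

theorem scaled {l u : ℝ} {r : ℕ} (hl : 0 < l) : l⁻¹ ^ r * (l * u) ^ r = u ^ r := by
  rw [← mul_pow, ← mul_assoc, inv_mul_cancel₀ hl.ne', one_mul]

theorem bad {d : ℕ} (hd : 1 ≤ d) {Ω : Type*} [MeasurableSpace Ω]
    (μ : Measure Ω) [IsProbabilityMeasure μ] (T : Ω → Ω) (hT : MeasurePreserving T μ μ)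
    (L : Ω → ℕ → Matrix (Fin d) (Fin d) ℂ)
    (hmeas : ∀ (n : ℕ) (j k : Fin d), Measurable fun ω => L ω n j k)
    (hcoc : ∀ (ω : Ω) (ℓ m : ℕ), L ω (ℓ + m) = L (T^[m] ω) ℓ * L ω m)
    (l : Ω → ℝ) (hlm : Measurable l) (hinv : ∀ᵐ x ∂μ, ∀ k : ℕ, l (T^[k] x) = l x)
    (δ : ℝ) (hδ : 0 < δ) :
    ∀ᵐ x ∂μ, Tendsto (fun n : ℕ => opNorm (L x n) ^ (1 / (n : ℝ))) atTop (𝓝 (l x)) → 0 < l x →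
      ∃ᶠ n in atTop, (l x * Real.exp (-δ)) ^ n < specRad (L x n) := by
  by_contra hcon
  rw [ae_iff] at hcon
  set Z := {x | ¬(Tendsto (fun n : ℕ => opNorm (L x n) ^ (1 / (n : ℝ))) atTop (𝓝 (l x)) → 0 < l x →
      ∃ᶠ n in atTop, (l x * Real.exp (-δ)) ^ n < specRad (L x n))} with hZ
  set G : ℕ → ℕ → Set Ω := fun p N => {x | 0 < l x ∧ ∀ n, N ≤ n →
    specRad (L x n) ≤ (l x * Real.exp (-δ)) ^ n ∧
    (l x * Real.exp (-(1 / ((p : ℝ) + 1)))) ^ n ≤ opNorm (L x n) ∧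
    opNorm (L x n) ≤ (l x * Real.exp (1 / ((p : ℝ) + 1))) ^ n} with hG
  have hNm : ∀ n, Measurable fun x => opNorm (L x n) := fun n => meas_opNorm _ (hmeas n)
  have hRm : ∀ n, Measurable fun x => specRad (L x n) := fun n => meas_specRad _ (hmeas n)
  have hGm : ∀ p N, MeasurableSet (G p N) := by
    intro p N
    have : G p N = {x | 0 < l x} ∩ ⋂ n, ⋂ (_ : N ≤ n),
        ({x | specRad (L x n) ≤ (l x * Real.exp (-δ)) ^ n} ∩
        ({x | (l x * Real.exp (-(1 / ((p : ℝ) + 1)))) ^ n ≤ opNorm (L x n)} ∩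
        {x | opNorm (L x n) ≤ (l x * Real.exp (1 / ((p : ℝ) + 1))) ^ n})) := by
      ext x
      simp [hG]
    rw [this]
    refine (measurableSet_lt measurable_const hlm).inter
      (MeasurableSet.iInter fun n => MeasurableSet.iInter fun _ => ?_)
    exact (measurableSet_le (hRm n) ((hlm.mul_const _).pow_const n)).inter
      ((measurableSet_le ((hlm.mul_const _).pow_const n) (hNm n)).inter
      (measurableSet_le (hNm n) ((hlm.mul_const _).pow_const n)))
  have hZG : ∀ p, Z ⊆ ⋃ N, G p N := by
    intro p x hx
    simp only [hZ, Set.mem_ofPred_eq] at hx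
    push Not at hx
    obtain ⟨h1, h2, h3⟩ := hx
    have hp : (0 : ℝ) < 1 / ((p : ℝ) + 1) := by positivity
    have h4 : ∀ᶠ n : ℕ in atTop, l x * Real.exp (-(1 / ((p : ℝ) + 1))) < opNorm (L x n) ^ (1 / (n : ℝ)) :=
      h1.eventually_const_lt (mul_lt_of_lt_one_right h2 (Real.exp_lt_one_iff.2 (by linarith)))
    have h5 : ∀ᶠ n : ℕ in atTop, opNorm (L x n) ^ (1 / (n : ℝ)) < l x * Real.exp (1 / ((p : ℝ) + 1)) :=
      h1.eventually_lt_const (lt_mul_of_one_lt_right h2 (Real.one_lt_exp_iff.2 hp))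
    obtain ⟨N, hN⟩ := eventually_atTop.1 (h3.and (h4.and (h5.and (eventually_ge_atTop 1))))
    refine Set.mem_iUnion.2 ⟨N, h2, fun n hn => ?_⟩
    obtain ⟨a1, a2, a3, a4⟩ := hN n hn
    have e : (opNorm (L x n) ^ (1 / (n : ℝ))) ^ n = opNorm (L x n) := by
      rw [one_div]; exact Real.rpow_inv_natCast_pow (opNorm_nonneg _) (by omega)
    refine ⟨a1, ?_, ?_⟩
    · rw [← e]
      exact pow_le_pow_left₀ (by positivity) a2.le n
    · conv_lhs => rw [← e]
      exact pow_le_pow_left₀ (Real.rpow_nonneg (opNorm_nonneg _) _) a3.le n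
  have hμZ : 0 < (μ Z).toReal := ENNReal.toReal_pos hcon (measure_ne_top _ _)
  set θ := (μ Z).toReal / 2 with hθ
  have hθ0 : 0 < θ := by positivity
  have hθZ : ENNReal.ofReal θ < μ Z := by
    rw [ENNReal.ofReal_lt_iff_lt_toReal hθ0.le (measure_ne_top _ _)]
    linarith
  have hN : ∀ p, ∃ N, ENNReal.ofReal θ < μ (G p N) := by
    intro p
    have hmono : Monotone (G p) := by
      intro N M hNM x hx
      exact ⟨hx.1, fun n hn => hx.2 n (hNM.trans hn)⟩
    have h1 := tendsto_measure_iUnion_atTop (μ := μ) hmono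
    exact (h1.eventually_const_lt (hθZ.trans_le (measure_mono (hZG p)))).exists
  obtain ⟨K, hK1, hK⟩ := asym d
  set κ : ℝ := θ / (2 * (K + 1)) with hκ
  have hκ0 : 0 < κ := by positivity
  have main : ∀ p : ℕ, ∃ (t : ℝ) (A : ℕ → ℕ → Matrix (Fin d) (Fin d) ℂ), (p : ℝ) ≤ t ∧
      (∀ i j k : ℕ, i < j → j < k → k ≤ K → A i k = A j k * A i j) ∧
      (∀ i j : ℕ, i < j → j ≤ K → opNorm (A i j) ≤ Real.exp (1 / ((p : ℝ) + 1) * t)) ∧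
      (∀ i j : ℕ, i < j → j ≤ K → Real.exp (-(1 / ((p : ℝ) + 1)) * t) ≤ opNorm (A i j)) ∧
      (∀ i j : ℕ, i < j → j ≤ K → ∀ z ∈ spectrum ℂ (A i j), ‖z‖ ≤ Real.exp (-(δ * κ) * t)) := by
    intro p
    obtain ⟨N, hN⟩ := hN p
    obtain ⟨n, hn⟩ := exists_nat_ge (max (max (p : ℝ) 1) (max (2 * (K + 1) / θ) (N / κ)))
    simp only [max_le_iff] at hn
    obtain ⟨⟨hnp, hn1⟩, hn2, hn3⟩ := hn
    rw [div_le_iff₀ hθ0] at hn2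
    rw [div_le_iff₀ hκ0] at hn3
    obtain ⟨x, hx, V, hV, hVc⟩ := visits μ T hT (G p N) (hGm p N) θ hN _ hinv n (by exact_mod_cast hn1)
    set g := ⌈κ * n⌉₊ with hg
    have hg1 : κ * n ≤ g := Nat.le_ceil _
    have hg2 : (g : ℝ) < κ * n + 1 := Nat.ceil_lt_add_one (by positivity)
    have hgN : N ≤ g := by
      have : (N : ℝ) ≤ g := by linarith
      exact_mod_cast this
    obtain ⟨m, hm1, hm2⟩ := spaced V K g (by
      have h1 : κ * (K + 1) = θ / 2 := by rw [hκ]; field_simp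
      have h2 : (K : ℝ) * g + 1 ≤ V.card := by
        calc (K : ℝ) * g + 1 ≤ K * (κ * n + 1) + 1 := by gcongr
          _ ≤ θ * n := by
            have h3 : (K : ℝ) * (κ * n) ≤ θ / 2 * n := by
              rw [← h1]
              have : 0 ≤ κ * n := by positivity
              linarith
            linarith
          _ ≤ _ := hVc
      exact_mod_cast h2)
    have hl : 0 < l x := by
      have h1 := (hV _ (hm1 0 (by omega))).2.1
      rwa [hx] at h1
    have hc0 : (((l x)⁻¹ : ℝ) : ℂ) ≠ 0 := by
      exact_mod_cast (inv_pos.2 hl).ne'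
    have hnorm : ‖(((l x)⁻¹ : ℝ) : ℂ)‖ = (l x)⁻¹ := by
      rw [Complex.norm_real, Real.norm_of_nonneg (inv_pos.2 hl).le]
    have fact : ∀ i j, i < j → j ≤ K → g ≤ m j - m i ∧ m j - m i ≤ n ∧ T^[m i] x ∈ G p N := by
      intro i j hij hj
      have h1 := hm2 i j hij hj
      have h2 := (hV _ (hm1 j hj)).1
      exact ⟨by omega, by omega, (hV _ (hm1 i (by omega))).2⟩
    have hq : (0 : ℝ) ≤ 1 / ((p : ℝ) + 1) := by positivity
    refine ⟨n, fun i j => ((((l x)⁻¹ : ℝ) : ℂ) ^ (m j - m i)) • L (T^[m i] x) (m j - m i), hnp, ?_, ?_, ?_, ?_⟩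
    · intro i j k hij hjk hk
      have h1 := hm2 i j hij (by omega)
      have h2 := hm2 j k hjk hk
      have h3 : m k - m i = (m k - m j) + (m j - m i) := by omega
      beta_reduce
      rw [h3, hcoc, ← Function.iterate_add_apply, show m j - m i + m i = m j by omega,
        Matrix.smul_mul, Matrix.mul_smul, smul_smul, pow_add]
    · intro i j hij hj
      obtain ⟨h1, h2, h3⟩ := fact i j hij hj
      have h4 := (h3.2 _ (hgN.trans h1)).2.2
      rw [hx] at h4
      rw [opNorm_smul, norm_pow, hnorm]
      calc _ ≤ (l x)⁻¹ ^ (m j - m i) * (l x * Real.exp (1 / ((p : ℝ) + 1))) ^ (m j - m i) := by gcongr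
        _ = Real.exp (1 / ((p : ℝ) + 1) * ((m j - m i : ℕ) : ℝ)) := by
          rw [scaled hl, ← Real.exp_nat_mul, mul_comm]
        _ ≤ _ := by
          apply Real.exp_le_exp.2
          gcongr
    · intro i j hij hj
      obtain ⟨h1, h2, h3⟩ := fact i j hij hj
      have h4 := (h3.2 _ (hgN.trans h1)).2.1
      rw [hx] at h4
      rw [opNorm_smul, norm_pow, hnorm]
      calc _ ≤ Real.exp (-(1 / ((p : ℝ) + 1)) * ((m j - m i : ℕ) : ℝ)) := by
            apply Real.exp_le_exp.2
            rw [neg_mul, neg_mul]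
            apply neg_le_neg
            gcongr
        _ = (l x)⁻¹ ^ (m j - m i) * (l x * Real.exp (-(1 / ((p : ℝ) + 1)))) ^ (m j - m i) := by
          rw [scaled hl, ← Real.exp_nat_mul, mul_comm]
        _ ≤ _ := by gcongr
    · intro i j hij hj z hz
      obtain ⟨h1, h2, h3⟩ := fact i j hij hj
      have h4 := (h3.2 _ (hgN.trans h1)).1
      rw [hx] at h4
      have h5 := spec_smul hd _ _ (pow_ne_zero _ hc0) z hz
      rw [norm_pow, hnorm] at h5
      calc _ ≤ _ := h5
        _ ≤ (l x)⁻¹ ^ (m j - m i) * (l x * Real.exp (-δ)) ^ (m j - m i) := by gcongr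
        _ = Real.exp (-(δ * ((m j - m i : ℕ) : ℝ))) := by
          rw [scaled hl, ← Real.exp_nat_mul]; congr 1; ring
        _ ≤ _ := by
          apply Real.exp_le_exp.2
          have h6 : (g : ℝ) ≤ ((m j - m i : ℕ) : ℝ) := by exact_mod_cast h1
          have h7 : δ * (κ * n) ≤ δ * ((m j - m i : ℕ) : ℝ) := by gcongr; linarith
          linarith
  choose t A h1 h2 h3 h4 h5 using main
  exact hK t (tendsto_atTop_mono h1 tendsto_natCast_atTop_atTop) A (δ * κ) (by positivity) h2 h3 h4 h5

theorem finish {s a : ℕ → ℝ} {l : ℝ} (hs0 : ∀ n, 0 ≤ s n) (hsa : ∀ n, s n ≤ a n)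
    (ha : Tendsto a atTop (𝓝 l)) (hl : 0 ≤ l)
    (hf : 0 < l → ∀ j : ℕ, ∃ᶠ n in atTop, l * Real.exp (-(1 / ((j : ℝ) + 1))) ≤ s n) :
    limsup s atTop = l := by
  have hbd : IsBoundedUnder (· ≤ ·) atTop s :=
    ha.isBoundedUnder_le.mono_le (Eventually.of_forall hsa)
  have hcb : IsCoboundedUnder (· ≤ ·) atTop s :=
    IsBoundedUnder.isCoboundedUnder_le ⟨0, eventually_map.2 (Eventually.of_forall hs0)⟩
  apply le_antisymm
  · rw [← ha.limsup_eq]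
    exact limsup_le_limsup (Eventually.of_forall hsa) hcb ha.isBoundedUnder_le
  · rcases hl.eq_or_lt with h | h
    · rw [← h]
      exact le_limsup_of_frequently_le (Frequently.of_forall hs0) hbd
    · have h1 : ∀ j : ℕ, l * Real.exp (-(1 / ((j : ℝ) + 1))) ≤ limsup s atTop := fun j =>
        le_limsup_of_frequently_le (hf h j) hbd
      have h2 : Tendsto (fun j : ℕ => l * Real.exp (-(1 / ((j : ℝ) + 1)))) atTop (𝓝 (l * Real.exp (-0))) :=
        tendsto_const_nhds.mul
          ((Real.continuous_exp.tendsto _).comp (tendsto_one_div_add_atTop_nhds_zero_nat (𝕜 := ℝ)).neg)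
      have h3 := le_of_tendsto' h2 h1
      simpa using h3

end Mor

/-- **Morris' theorem.** For a measurable matrix cocycle over a measure-preserving
continuous map with integrable `log⁺` of the norm of the generator, almost everywhere
the limit `lim ‖L(ω,n)‖^{1/n}` exists and equals `limsup ρ(L(ω,n))^{1/n}`. -/
theorem morris {d : ℕ} (hd : 1 ≤ d)
    {Ω : Type*} [TopologicalSpace Ω] [TopologicalSpace.MetrizableSpace Ω]
    [MeasurableSpace Ω] [BorelSpace Ω]
    (μ : Measure Ω) [IsProbabilityMeasure μ]
    (T : Ω → Ω) (hT : Continuous T) (hTμ : MeasurePreserving T μ μ)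
    (L : Ω → ℕ → Matrix (Fin d) (Fin d) ℂ)
    (hmeas : ∀ (n : ℕ) (j k : Fin d), Measurable fun ω => L ω n j k)
    (hL0 : ∀ ω : Ω, L ω 0 = 1)
    (hcoc : ∀ (ω : Ω) (ℓ m : ℕ), 1 ≤ ℓ → 1 ≤ m → L ω (ℓ + m) = L (T^[m] ω) ℓ * L ω m)
    (hint : ∫⁻ ω, ENNReal.ofReal (max (Real.log (opNorm (L ω 1))) 0) ∂μ < ⊤) :
    ∀ᵐ ω ∂μ,
      Filter.Tendsto (fun n : ℕ => opNorm (L ω n) ^ (1 / (n : ℝ))) Filter.atTop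
        (nhds (Filter.limsup
          (fun n : ℕ => specRad (L ω n) ^ (1 / (n : ℝ))) Filter.atTop)) := by
  have hcoc' : ∀ (ω : Ω) (ℓ m : ℕ), L ω (ℓ + m) = L (T^[m] ω) ℓ * L ω m := by
    intro ω ℓ m
    rcases Nat.eq_zero_or_pos ℓ with h | h
    · subst h; rw [hL0, zero_add, one_mul]
    · rcases Nat.eq_zero_or_pos m with h' | h'
      · subst h'; rw [hL0 ω, add_zero, mul_one]; rfl
      · exact hcoc ω ℓ m h h'
  set l : Ω → ℝ := fun x => max (limsup (fun n : ℕ => opNorm (L x n) ^ (1 / (n : ℝ))) atTop) 0 with hl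
  have hl0 : ∀ x, 0 ≤ l x := fun x => le_max_right _ _
  have hlm : Measurable l :=
    (Measurable.limsup fun n => (Mor.meas_opNorm _ (hmeas n)).pow_const _).max measurable_const
  have hconv : ∀ᵐ x ∂μ, Tendsto (fun n : ℕ => opNorm (L x n) ^ (1 / (n : ℝ))) atTop (𝓝 (l x)) := by
    filter_upwards [Mor.conv hd μ T hTμ L hmeas hL0 hcoc' hint] with x ⟨a, ha⟩
    have h1 : 0 ≤ a := ge_of_tendsto' ha fun n => Real.rpow_nonneg (Mor.opNorm_nonneg _) _
    have h2 : l x = a := by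
      simp only [hl]
      rw [ha.limsup_eq, max_eq_left h1]
    rwa [h2]
  have hinv : ∀ᵐ x ∂μ, ∀ k : ℕ, l (T^[k] x) = l x := by
    apply Mor.invar μ T hTμ l hlm hl0
    filter_upwards [hconv, hTμ.quasiMeasurePreserving.ae hconv] with x h1 h2
    exact Mor.step_le T L hcoc' x _ _ h1 h2
  have hbad : ∀ᵐ x ∂μ, ∀ j : ℕ, Tendsto (fun n : ℕ => opNorm (L x n) ^ (1 / (n : ℝ))) atTop (𝓝 (l x)) →
      0 < l x → ∃ᶠ n in atTop, (l x * Real.exp (-(1 / ((j : ℝ) + 1)))) ^ n < specRad (L x n) :=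
    ae_all_iff.2 fun j => Mor.bad hd μ T hTμ L hmeas hcoc' l hlm hinv _ (by positivity)
  filter_upwards [hconv, hbad] with x h1 h2
  have h3 : limsup (fun n : ℕ => specRad (L x n) ^ (1 / (n : ℝ))) atTop = l x := by
    refine Mor.finish (fun n => Real.rpow_nonneg (Mor.specRad_nonneg _) _)
      (fun n => Real.rpow_le_rpow (Mor.specRad_nonneg _) (Mor.specRad_le hd _) (by positivity)) h1 (hl0 x) ?_
    intro hpos j
    refine ((h2 j h1 hpos).and_eventually (eventually_ge_atTop 1)).mono ?_
    rintro n ⟨h4, h5⟩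
    have h6 : 0 ≤ l x * Real.exp (-(1 / ((j : ℝ) + 1))) := by positivity
    calc _ = ((l x * Real.exp (-(1 / ((j : ℝ) + 1)))) ^ n) ^ (1 / (n : ℝ)) := by
          rw [one_div (n : ℝ), Real.pow_rpow_inv_natCast h6 (by omega)]
      _ ≤ _ := Real.rpow_le_rpow (by positivity) h4.le (by positivity)
  rw [h3]
  exact h1
end

section
/- Let d ≥ 1, let I be a metric space, let S : I → Matrix d d ℂ be continuous, let Λ ⊆ Σ_I^+ be a nonempty compact θ_+-invariant subset, and let μ be any θ_+-invariant Borel probability measure on Σ_I^+ supported in Λ. Then for μ-almost every i(·) ∈ Λ, the limit lim_{n→∞} ‖S_{i_n}···S_{i_1}‖^{1/n} exists and equals limsup_{n→∞} ρ(S_{i_n}···S_{i_1})^{1/n}. -/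
open Filter Topology MeasureTheory

/-- `prodS S x n = S_{i_n} ⋯ S_{i_1}` where `i_k = x (k-1)`. -/
noncomputable def prodS {d : ℕ} {I : Type*} (S : I → Matrix (Fin d) (Fin d) ℂ)
    (x : ℕ → I) : ℕ → Matrix (Fin d) (Fin d) ℂ
  | 0 => 1
  | n + 1 => S (x n) * prodS S x n

/-- `Λ` is invariant under the one-sided shift `θ₊`. -/
def ShiftInv {I : Type*} (Λ : Set (ℕ → I)) : Prop :=
  ∀ x ∈ Λ, (fun n => x (n + 1)) ∈ Λ


/-- Product of `n` consecutive terms starting at index `i`, later terms on the left. -/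
def cp {R : Type*} [Monoid R] (B : ℕ → R) (i : ℕ) : ℕ → R
  | 0 => 1
  | n + 1 => B (i + n) * cp B i n

theorem cp_add {R : Type*} [Monoid R] (B : ℕ → R) (i m n : ℕ) :
    cp B i (m + n) = cp B (i + m) n * cp B i m := by
  induction n with
  | zero => simp [cp]
  | succ n ih =>
    rw [← add_assoc]
    simp only [cp]
    rw [ih, mul_assoc, add_assoc]

theorem cp_one {R : Type*} [Monoid R] (B : ℕ → R) (i : ℕ) : cp B i 1 = B i := by
  simp [cp]

theorem cp_shift {R : Type*} [Monoid R] (B : ℕ → R) (k i n : ℕ) :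
    cp (fun j => B (k + j)) i n = cp B (k + i) n := by
  induction n with
  | zero => rfl
  | succ n ih => simp only [cp]; rw [ih, add_assoc]

theorem cp_congr {R : Type*} [Monoid R] (B B' : ℕ → R) (i n : ℕ)
    (h : ∀ j, i ≤ j → j < i + n → B j = B' j) : cp B i n = cp B' i n := by
  induction n with
  | zero => rfl
  | succ n ih =>
    simp only [cp]
    rw [ih (fun j h1 h2 => h j h1 (by omega)), h (i + n) (by omega) (by omega)]

theorem cp_map {R R' : Type*} [Monoid R] [Monoid R'] (f : R →* R') (B : ℕ → R) (i n : ℕ) :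
    f (cp B i n) = cp (fun j => f (B j)) i n := by
  induction n with
  | zero => simp [cp]
  | succ n ih => simp [cp, ih]

theorem cp_block {R : Type*} [Monoid R] (B : ℕ → R) (s : ℕ → ℕ) (hs : Monotone s) (i n : ℕ) :
    cp (fun j => cp B (s j) (s (j + 1) - s j)) i n = cp B (s i) (s (i + n) - s i) := by
  induction n with
  | zero => simp [cp]
  | succ n ih =>
    simp only [cp]
    rw [ih]
    have h1 : s i ≤ s (i + n) := hs (by omega)
    have h2 : s (i + n) ≤ s (i + n + 1) := hs (by omega)
    have : s (i + (n + 1)) - s i = (s (i + n) - s i) + (s (i + n + 1) - s (i + n)) := by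
      rw [← add_assoc i n 1]; omega
    rw [this, cp_add]
    congr 2
    omega

theorem rank_factor {d r : ℕ} (D : Matrix (Fin d) (Fin d) ℂ) (h : D.rank ≤ r) :
    ∃ (X : Matrix (Fin d) (Fin r) ℂ) (Y : Matrix (Fin r) (Fin d) ℂ), D = X * Y := by
  classical
  let f := Matrix.toLin' D
  have hr : Module.finrank ℂ (LinearMap.range f) ≤ Module.finrank ℂ (Fin r → ℂ) := by
    rw [Module.finrank_fin_fun]
    exact h
  obtain ⟨ι, hι⟩ := finrank_le_iff_exists_linearMap.1 hr
  obtain ⟨g, hg⟩ := LinearMap.exists_leftInverse_of_injective ι (LinearMap.ker_eq_bot.2 hι)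
  refine ⟨LinearMap.toMatrix' ((LinearMap.range f).subtype ∘ₗ g),
    LinearMap.toMatrix' (ι ∘ₗ f.rangeRestrict), ?_⟩
  rw [← LinearMap.toMatrix'_comp]
  have : ((LinearMap.range f).subtype ∘ₗ g) ∘ₗ (ι ∘ₗ f.rangeRestrict) = f := by
    refine LinearMap.ext fun x => ?_
    have := LinearMap.congr_fun hg (f.rangeRestrict x)
    exact congrArg Subtype.val this
  rw [this]
  simp [f]

/-- Skew Bollobas type bound. -/
theorem skew_bound {d r : ℕ} (M : ℕ) (X : ℕ → Matrix (Fin d) (Fin r) ℂ)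
    (Y : ℕ → Matrix (Fin r) (Fin d) ℂ)
    (h0 : ∀ i j, i ≤ j → j < M → (Y i * X j).det = 0)
    (h1 : ∀ j, j + 1 < M → (Y (j + 1) * X j).det ≠ 0) :
    M ≤ Module.finrank ℂ (MultilinearMap ℂ (fun _ : Fin r => (Fin d → ℂ)) ℂ) + 1 := by
  let f : ℕ → MultilinearMap ℂ (fun _ : Fin r => (Fin d → ℂ)) ℂ := fun i =>
    ((Matrix.detRowAlternating (R := ℂ) (n := Fin r)).toMultilinearMap).compLinearMap
      (fun _ => (Y i).mulVecLin)
  have hf : ∀ i j, f i (fun k l => X j l k) = (Y i * X j).det := by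
    intro i j
    rw [← Matrix.det_transpose]
    rfl
  let U : ℕ → Submodule ℂ (MultilinearMap ℂ (fun _ : Fin r => (Fin d → ℂ)) ℂ) := fun n =>
    Submodule.span ℂ (f '' Set.Iio n)
  have hU : ∀ n, n < M → n ≤ Module.finrank ℂ (U (n + 1)) := by
    intro n
    induction n with
    | zero => intro _; exact Nat.zero_le _
    | succ n ih =>
      intro hn
      have := ih (by omega)
      have hlt : U (n + 1) < U (n + 1 + 1) := by
        refine lt_of_le_of_ne (Submodule.span_mono (Set.image_mono (Set.Iio_subset_Iio (by omega)))) ?_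
        intro heq
        have hmem : f (n + 1) ∈ U (n + 1) := by
          rw [heq]
          exact Submodule.subset_span ⟨n + 1, by simp, rfl⟩
        have : ∀ g ∈ U (n + 1), g (fun k l => X n l k) = 0 := by
          intro g hg
          induction hg using Submodule.span_induction with
          | mem x hx =>
            obtain ⟨i, hi, rfl⟩ := hx
            rw [hf]
            exact h0 i n (by simp at hi; omega) (by omega)
          | zero => rfl
          | add x y _ _ hx hy => simp [hx, hy]
          | smul a x _ hx => simp [hx]
        have h2 := this _ hmem
        rw [hf] at h2
        exact h1 n hn h2
      have := Submodule.finrank_lt_finrank_of_lt hlt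
      omega
  rcases Nat.eq_zero_or_pos M with h | h
  · omega
  · have := hU (M - 1) (by omega)
    have h3 := Submodule.finrank_le (U (M - 1 + 1))
    omega

theorem nil_prod_rank (d k : ℕ) (hk : k ≤ d) : ∃ n, ∀ B : ℕ → Matrix (Fin d) (Fin d) ℂ,
    (∀ i j, 1 ≤ j → i + j ≤ n → IsNilpotent (cp B i j)) → (cp B 0 n).rank ≤ d - k := by
  induction k with
  | zero =>
    exact ⟨0, fun B _ => by simpa using Matrix.rank_le_width (cp B 0 0)⟩
  | succ k ih =>
    obtain ⟨n, hn⟩ := ih (by omega)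
    obtain ⟨r, hr⟩ : ∃ r, d - k = r + 1 := ⟨d - k - 1, by omega⟩
    set M := Module.finrank ℂ (MultilinearMap ℂ (fun _ : Fin (r + 1) => (Fin d → ℂ)) ℂ) + 2 with hM
    rcases Nat.eq_zero_or_pos n with hn0 | hn0
    · subst hn0
      refine ⟨1, fun B hB => ?_⟩
      -- rank of the identity is at most d - k
      have h1 : (cp B 0 0).rank ≤ d - k := hn B (fun i j h1 h2 => by omega)
      have hk0 : k = 0 := by
        simp [cp, Matrix.rank_one] at h1; omega
      subst hk0
      have := hB 0 1 le_rfl le_rfl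
      by_contra hcon
      have hle := Matrix.rank_le_width (cp B 0 1)
      have hrk : (cp B 0 1).rank = Fintype.card (Fin d) := by simp; omega
      have hu : IsUnit (cp B 0 1) := by
        rw [← Matrix.mulVec_surjective_iff_isUnit]
        have : LinearMap.range (cp B 0 1).mulVecLin = ⊤ := by
          apply Submodule.eq_top_of_finrank_eq
          rw [← Matrix.rank, hrk]; simp
        exact LinearMap.range_eq_top.1 this
      have : Nonempty (Fin d) := ⟨⟨0, by omega⟩⟩
      exact this.elim fun _ => (IsNilpotent.not_isUnit ‹_›) hu
    refine ⟨M * n, fun B hB => ?_⟩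
    by_contra hcon
    let D : ℕ → Matrix (Fin d) (Fin d) ℂ := fun j => cp B (j * n) ((j + 1) * n - j * n)
    have hmono : Monotone (fun j => j * n) := fun a b h => Nat.mul_le_mul_right _ h
    have hD : ∀ i l, cp D i l = cp B (i * n) (l * n) := by
      intro i l
      rw [show cp D i l = _ from cp_block B (fun j => j * n) hmono i l]
      congr 1
      simp [add_mul]
    have hDr : ∀ j, j < M → (D j).rank ≤ r + 1 := by
      intro j hj
      rw [← hr]
      have := hn (fun l => B (j * n + l)) (by
        intro a b h1 h2
        rw [cp_shift]
        apply hB _ _ h1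
        have : (j + 1) * n ≤ M * n := Nat.mul_le_mul_right _ hj
        rw [add_mul] at this
        omega)
      rw [cp_shift] at this
      have h3 : (j + 1) * n - j * n = n := by simp [add_mul]
      simpa [D, h3] using this
    have hfac : ∀ j, ∃ (X : Matrix (Fin d) (Fin (r + 1)) ℂ) (Y : Matrix (Fin (r + 1)) (Fin d) ℂ),
        j < M → D j = X * Y := by
      intro j
      by_cases hj : j < M
      · obtain ⟨X, Y, h⟩ := rank_factor (D j) (hDr j hj)
        exact ⟨X, Y, fun _ => h⟩
      · exact ⟨0, 0, fun h => absurd h hj⟩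
    choose X Y hXY using hfac
    -- products factor through
    have hprod : ∀ i l, i + l < M → ∃ Z : Matrix (Fin (r + 1)) (Fin (r + 1)) ℂ,
        cp D i (l + 1) = X (i + l) * Z * Y i ∧
        ((∀ j, j + 1 < M → (Y (j + 1) * X j).det ≠ 0) → Z.det ≠ 0) := by
      intro i l
      induction l with
      | zero =>
        intro h
        refine ⟨1, ?_, by simp⟩
        rw [zero_add, cp_one, hXY i (by omega)]
        simp
      | succ l ih =>
        intro h
        obtain ⟨Z, hZ, hZ2⟩ := ih (by omega)
        refine ⟨(Y (i + l + 1) * X (i + l)) * Z, ?_, ?_⟩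
        · change D (i + (l + 1)) * cp D i (l + 1) = _
          rw [hZ, hXY (i + (l + 1)) (by omega)]
          simp only [← add_assoc, Matrix.mul_assoc]
        · intro hh
          rw [Matrix.det_mul]
          exact mul_ne_zero (hh _ (by omega)) (hZ2 hh)
    have hrank : r + 1 ≤ (cp D 0 M).rank := by
      rw [hD]; simp; omega
    have h1 : ∀ j, j + 1 < M → (Y (j + 1) * X j).det ≠ 0 := by
      intro j hj hdet
      have e1 : M = (j + 2) + (M - (j + 2)) := by omega
      rw [e1, cp_add] at hrank
      have hr2 := hrank.trans (Matrix.rank_mul_le_right _ _)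
      have e2 : cp D 0 (j + 2) = D (j + 1) * (D j * cp D 0 j) := by
        simp [cp]
      rw [e2, hXY (j + 1) hj, hXY j (by omega)] at hr2
      have e3 : X (j + 1) * Y (j + 1) * (X j * Y j * cp D 0 j)
          = X (j + 1) * ((Y (j + 1) * X j) * (Y j * cp D 0 j)) := by
        simp only [Matrix.mul_assoc]
      rw [e3] at hr2
      have hr3 := (hr2.trans (Matrix.rank_mul_le_right _ _)).trans (Matrix.rank_mul_le_left _ _)
      have hr4 := Matrix.rank_le_width (Y (j + 1) * X j)
      have hu : IsUnit (Y (j + 1) * X j) := by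
        rw [← Matrix.mulVec_surjective_iff_isUnit]
        have : LinearMap.range (Y (j + 1) * X j).mulVecLin = ⊤ := by
          apply Submodule.eq_top_of_finrank_eq
          rw [← Matrix.rank]; simp; omega
        exact LinearMap.range_eq_top.1 this
      rw [Matrix.isUnit_iff_isUnit_det, hdet] at hu
      simp at hu
    have h0 : ∀ i j, i ≤ j → j < M → (Y i * X j).det = 0 := by
      intro i j hij hj
      obtain ⟨l, rfl⟩ := Nat.exists_eq_add_of_le hij
      obtain ⟨Z, hZ, hZ2⟩ := hprod i l hj
      have hnil : IsNilpotent (cp D i (l + 1)) := by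
        rw [hD]
        apply hB
        · exact Nat.mul_pos (by omega) hn0
        · rw [← add_mul]; exact Nat.mul_le_mul_right _ (by omega)
      obtain ⟨k', hk'⟩ := hnil
      have hcomm : ∀ k : ℕ, (Z * Y i * X (i + l)) ^ (k + 1)
          = Z * Y i * ((cp D i (l + 1)) ^ k * X (i + l)) := by
        intro k
        induction k with
        | zero => simp [Matrix.mul_assoc]
        | succ k ih =>
          rw [pow_succ', ih, pow_succ' _ k, hZ]
          simp only [Matrix.mul_assoc]
      have h5 := hcomm k'
      rw [hk'] at h5
      have h6 := congrArg Matrix.det h5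
      rw [Matrix.det_pow] at h6
      simp at h6
      rw [Matrix.mul_assoc, Matrix.det_mul] at h6
      exact (mul_eq_zero.1 h6).resolve_left (hZ2 h1)
    have := skew_bound M X Y h0 h1
    omega

theorem nil_prod_zero (d : ℕ) : ∃ n, ∀ B : ℕ → Matrix (Fin d) (Fin d) ℂ,
    (∀ i j, 1 ≤ j → i + j ≤ n → IsNilpotent (cp B i j)) → cp B 0 n = 0 := by
  obtain ⟨n, hn⟩ := nil_prod_rank d d le_rfl
  refine ⟨n, fun B hB => ?_⟩
  have := hn B hB
  rw [Nat.sub_self, Nat.le_zero] at this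
  have h2 : LinearMap.range (cp B 0 n).mulVecLin = ⊥ := Submodule.finrank_eq_zero.1 this
  rw [LinearMap.range_eq_bot] at h2
  ext i j
  have h3 := congrFun (LinearMap.congr_fun h2 (Pi.single j 1)) i
  simpa using h3

section basic
open scoped Matrix.Norms.L2Operator

theorem opNorm_eq {d : ℕ} (A : Matrix (Fin d) (Fin d) ℂ) : opNorm A = ‖A‖ :=
  Matrix.l2_opNorm_toEuclideanCLM A

theorem opNorm_nonneg {d : ℕ} (A : Matrix (Fin d) (Fin d) ℂ) : 0 ≤ opNorm A := norm_nonneg _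

theorem opNorm_mul_le {d : ℕ} (A B : Matrix (Fin d) (Fin d) ℂ) :
    opNorm (A * B) ≤ opNorm A * opNorm B := by
  simp only [opNorm_eq]; exact norm_mul_le _ _

theorem opNorm_smul {d : ℕ} (c : ℂ) (A : Matrix (Fin d) (Fin d) ℂ) :
    opNorm (c • A) = ‖c‖ * opNorm A := by
  simp only [opNorm_eq]; exact norm_smul _ _

theorem opNorm_one_le {d : ℕ} : opNorm (1 : Matrix (Fin d) (Fin d) ℂ) ≤ 1 := by
  unfold opNorm
  rw [map_one]
  exact ContinuousLinearMap.norm_id_le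

theorem continuous_opNorm {d : ℕ} :
    Continuous (opNorm : Matrix (Fin d) (Fin d) ℂ → ℝ) := by
  have : (opNorm : Matrix (Fin d) (Fin d) ℂ → ℝ) = fun A => ‖A‖ := funext opNorm_eq
  rw [this]
  exact continuous_norm

theorem specRad_nonneg {d : ℕ} (A : Matrix (Fin d) (Fin d) ℂ) : 0 ≤ specRad A :=
  ENNReal.toReal_nonneg

theorem normOne {d : ℕ} (hd : 1 ≤ d) : NormOneClass (Matrix (Fin d) (Fin d) ℂ) := by
  have : Nonempty (Fin d) := ⟨⟨0, hd⟩⟩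
  infer_instance

theorem spectralRadius_ne_top {d : ℕ} (hd : 1 ≤ d) (A : Matrix (Fin d) (Fin d) ℂ) :
    spectralRadius ℂ A ≠ ⊤ := by
  have := normOne hd
  exact ne_top_of_le_ne_top ENNReal.coe_ne_top (spectrum.spectralRadius_le_nnnorm (𝕜 := ℂ) A)

theorem specRad_le_opNorm {d : ℕ} (hd : 1 ≤ d) (A : Matrix (Fin d) (Fin d) ℂ) :
    specRad A ≤ opNorm A := by
  have := normOne hd
  rw [opNorm_eq]
  have h := ENNReal.toReal_mono ENNReal.coe_ne_top (spectrum.spectralRadius_le_nnnorm (𝕜 := ℂ) A)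
  simpa [specRad] using h

theorem norm_root_le {d : ℕ} (hd : 1 ≤ d) (A : Matrix (Fin d) (Fin d) ℂ) (z : ℂ)
    (hz : z ∈ spectrum ℂ A) : ‖z‖ ≤ specRad A := by
  have h1 : (‖z‖₊ : ENNReal) ≤ spectralRadius ℂ A :=
    le_iSup₂ (f := fun k (_ : k ∈ spectrum ℂ A) => (‖k‖₊ : ENNReal)) z hz
  have h := ENNReal.toReal_mono (spectralRadius_ne_top hd A) h1
  simpa [specRad] using h

theorem specRad_tendsto {d : ℕ} (hd : 1 ≤ d) (A : Matrix (Fin d) (Fin d) ℂ) :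
    Tendsto (fun n : ℕ => opNorm (A ^ n) ^ (1 / (n : ℝ))) atTop (𝓝 (specRad A)) := by
  have h := spectrum.pow_nnnorm_pow_one_div_tendsto_nhds_spectralRadius A
  have h2 := (ENNReal.tendsto_toReal (spectralRadius_ne_top hd A)).comp h
  refine h2.congr fun n => ?_
  simp only [Function.comp]
  rw [← ENNReal.toReal_rpow, opNorm_eq]
  simp

theorem specRad_smul {d : ℕ} (hd : 1 ≤ d) (c : ℂ) (A : Matrix (Fin d) (Fin d) ℂ) :
    specRad (c • A) = ‖c‖ * specRad A := by
  refine tendsto_nhds_unique (specRad_tendsto hd (c • A)) ?_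
  refine ((specRad_tendsto hd A).const_mul ‖c‖).congr' ?_
  filter_upwards [eventually_gt_atTop 0] with n hn
  rw [smul_pow, opNorm_smul, Real.mul_rpow (norm_nonneg _) (opNorm_nonneg _), norm_pow,
    one_div, Real.pow_rpow_inv_natCast (norm_nonneg _) hn.ne']

theorem entry_le {d : ℕ} (A : Matrix (Fin d) (Fin d) ℂ) (i j : Fin d) : ‖A i j‖ ≤ opNorm A := by
  have h := ContinuousLinearMap.le_opNorm (Matrix.toEuclideanCLM (𝕜 := ℂ) A)
    (EuclideanSpace.single j 1)
  have h2 := PiLp.norm_apply_le (Matrix.toEuclideanCLM (𝕜 := ℂ) A (EuclideanSpace.single j 1)) i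
  have h3 : (Matrix.toEuclideanCLM (𝕜 := ℂ) A (EuclideanSpace.single j 1)) i = A i j := by
    simp
  rw [h3] at h2
  simp only [PiLp.norm_single, EuclideanSpace.single, norm_one, mul_one] at h
  exact h2.trans h

theorem opNorm_le_entries (d : ℕ) : ∃ K : ℝ, 0 ≤ K ∧ ∀ (A : Matrix (Fin d) (Fin d) ℂ) (s : ℝ),
    0 ≤ s → (∀ i j, ‖A i j‖ ≤ s) → opNorm A ≤ K * s := by
  let L : (Fin d → Fin d → ℂ) →ₗ[ℂ] Matrix (Fin d) (Fin d) ℂ :=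
    { toFun := fun v => Matrix.of v
      map_add' := fun _ _ => rfl
      map_smul' := fun _ _ => rfl }
  let L' := LinearMap.toContinuousLinearMap L
  refine ⟨‖L'‖, norm_nonneg _, fun A s hs h => ?_⟩
  rw [opNorm_eq]
  have h1 : ‖L' (fun i j => A i j)‖ ≤ ‖L'‖ * ‖(fun i j => A i j)‖ := L'.le_opNorm _
  refine h1.trans ?_
  gcongr
  exact (pi_norm_le_iff_of_nonneg hs).2 fun i => (pi_norm_le_iff_of_nonneg hs).2 fun j => h i j

end basic

theorem charpoly_coeff_le {d : ℕ} (hd : 1 ≤ d) (A : Matrix (Fin d) (Fin d) ℂ) (κ : ℝ)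
    (h1 : κ ≤ 1) (h : specRad A ≤ κ) (k : ℕ) (hk : k < d) :
    ‖A.charpoly.coeff k‖ ≤ 2 ^ d * κ := by
  have h0 : 0 ≤ κ := (specRad_nonneg A).trans h
  have hh := Polynomial.coeff_le_of_roots_le (f := RingHom.id ℂ) (B := κ) k A.charpoly_monic
    (IsAlgClosed.splits _) (by
      intro z hz
      rw [Polynomial.map_id] at hz
      have := Polynomial.isRoot_of_mem_roots hz
      exact (norm_root_le hd A z (Matrix.mem_spectrum_of_isRoot_charpoly this)).trans h)
  rw [Polynomial.map_id, Matrix.charpoly_natDegree_eq_dim, Fintype.card_fin] at hh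
  refine hh.trans ?_
  rw [mul_comm]
  gcongr
  · exact_mod_cast Nat.choose_le_two_pow d k
  · exact pow_le_of_le_one h0 h1 (by omega)

theorem nilp_of_coeff {d : ℕ} (A : Matrix (Fin d) (Fin d) ℂ)
    (h : ∀ k < d, A.charpoly.coeff k = 0) : IsNilpotent A := by
  refine ⟨d, ?_⟩
  have h1 : A.charpoly = Polynomial.X ^ d := by
    have hm := A.charpoly_monic
    have hn := A.charpoly_natDegree_eq_dim
    rw [Fintype.card_fin] at hn
    ext k
    rw [Polynomial.coeff_X_pow]
    rcases lt_trichotomy k d with hk | hk | hk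
    · rw [h k hk, if_neg hk.ne]
    · subst hk
      rw [if_pos rfl]
      have h4 := hm.coeff_natDegree
      rwa [hn] at h4
    · rw [if_neg hk.ne', Polynomial.coeff_eq_zero_of_natDegree_lt (by omega)]
  have := A.aeval_self_charpoly
  rw [h1] at this
  simpa using this

theorem poly_bdd {σ : Type*} (q : MvPolynomial σ ℂ) : ∃ C : ℝ, 0 ≤ C ∧ ∀ v : σ → ℂ,
    (∀ i, ‖v i‖ ≤ 1) → ‖MvPolynomial.aeval v q‖ ≤ C := by
  induction q using MvPolynomial.induction_on with
  | C a => exact ⟨‖a‖, norm_nonneg _, fun v _ => by simp⟩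
  | add p q hp hq =>
    obtain ⟨C1, h1, h2⟩ := hp
    obtain ⟨C2, h3, h4⟩ := hq
    refine ⟨C1 + C2, by positivity, fun v hv => ?_⟩
    rw [map_add]
    exact (norm_add_le _ _).trans (add_le_add (h2 v hv) (h4 v hv))
  | mul_X p n hp =>
    obtain ⟨C1, h1, h2⟩ := hp
    refine ⟨C1, h1, fun v hv => ?_⟩
    rw [map_mul, norm_mul, MvPolynomial.aeval_X]
    calc _ ≤ C1 * 1 := mul_le_mul (h2 v hv) (hv n) (norm_nonneg _) h1
      _ = C1 := mul_one _

theorem ideal_bdd {σ : Type*} (s : Set (MvPolynomial σ ℂ)) (q : MvPolynomial σ ℂ)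
    (hq : q ∈ Ideal.span s) : ∃ C : ℝ, 0 ≤ C ∧ ∀ v : σ → ℂ,
    (∀ i, ‖v i‖ ≤ 1) → ∀ κ : ℝ, 0 ≤ κ → (∀ t ∈ s, ‖MvPolynomial.aeval v t‖ ≤ κ) →
      ‖MvPolynomial.aeval v q‖ ≤ C * κ := by
  induction hq using Submodule.span_induction with
  | mem x hx => exact ⟨1, zero_le_one, fun v _ κ _ h => by simpa using h x hx⟩
  | zero => exact ⟨0, le_rfl, fun v _ κ _ h => by simp⟩
  | add x y _ _ hx hy =>
    obtain ⟨C1, h1, h2⟩ := hx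
    obtain ⟨C2, h3, h4⟩ := hy
    refine ⟨C1 + C2, by positivity, fun v hv κ hκ h => ?_⟩
    rw [map_add, add_mul]
    exact (norm_add_le _ _).trans (add_le_add (h2 v hv κ hκ h) (h4 v hv κ hκ h))
  | smul a x _ hx =>
    obtain ⟨C1, h1, h2⟩ := hx
    obtain ⟨C2, h3, h4⟩ := poly_bdd a
    refine ⟨C2 * C1, by positivity, fun v hv κ hκ h => ?_⟩
    rw [smul_eq_mul, map_mul, norm_mul, mul_assoc]
    exact mul_le_mul (h4 v hv) (h2 v hv κ hκ h) (norm_nonneg _) h3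

theorem matrix_ineq {d : ℕ} (hd : 1 ≤ d) : ∃ (N p : ℕ) (C : ℝ), 0 < C ∧
    ∀ B : ℕ → Matrix (Fin d) (Fin d) ℂ, (∀ i, opNorm (B i) ≤ 1) → ∀ κ : ℝ, κ ≤ 1 → 0 ≤ κ →
      (∀ i j, 1 ≤ j → i + j ≤ N → specRad (cp B i j) ≤ κ) → opNorm (cp B 0 N) ^ p ≤ C * κ := by
  classical
  obtain ⟨N, hN⟩ := nil_prod_zero d
  let σ := Fin N × Fin d × Fin d
  let R := MvPolynomial σ ℂ
  let G : ℕ → Matrix (Fin d) (Fin d) R := fun n =>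
    if h : n < N then Matrix.of fun a b => MvPolynomial.X (⟨n, h⟩, a, b) else 0
  let s : Set R := {q | ∃ i j k, 1 ≤ j ∧ i + j ≤ N ∧ k < d ∧ q = (cp G i j).charpoly.coeff k}
  -- evaluation
  have hev : ∀ (v : σ → ℂ) (B : ℕ → Matrix (Fin d) (Fin d) ℂ),
      (∀ n (h : n < N) a b, B n a b = v (⟨n, h⟩, a, b)) → ∀ i j, i + j ≤ N →
      (cp G i j).map (MvPolynomial.aeval v : R →ₐ[ℂ] ℂ) = cp B i j := by
    intro v B hB i j hij
    have h1 := cp_map (RingHom.mapMatrix (m := Fin d) (MvPolynomial.aeval v : R →ₐ[ℂ] ℂ).toRingHom).toMonoidHom G i j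
    refine Eq.trans h1 (cp_congr _ _ _ _ ?_)
    intro n h1 h2
    have hn : n < N := by omega
    ext a b
    simp [G, hn, hB]
  have hevc : ∀ (v : σ → ℂ) (B : ℕ → Matrix (Fin d) (Fin d) ℂ),
      (∀ n (h : n < N) a b, B n a b = v (⟨n, h⟩, a, b)) → ∀ i j k, i + j ≤ N →
      MvPolynomial.aeval v ((cp G i j).charpoly.coeff k) = (cp B i j).charpoly.coeff k := by
    intro v B hB i j k hij
    rw [← hev v B hB i j hij]
    have := Matrix.charpoly_map (cp G i j) (MvPolynomial.aeval v : R →ₐ[ℂ] ℂ).toRingHom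
    have h2 := congrArg (fun P => Polynomial.coeff P k) this
    simp only [Polynomial.coeff_map] at h2
    exact h2.symm
  have hrad : ∀ a b, cp G 0 N a b ∈ (Ideal.span s).radical := by
    intro a b
    rw [← MvPolynomial.vanishingIdeal_zeroLocus_eq_radical (K := ℂ)]
    rw [MvPolynomial.mem_vanishingIdeal_iff]
    intro v hv
    rw [MvPolynomial.zeroLocus_span] at hv
    let B : ℕ → Matrix (Fin d) (Fin d) ℂ := fun n =>
      if h : n < N then Matrix.of fun a b => v (⟨n, h⟩, a, b) else 0
    have hB : ∀ n (h : n < N) a b, B n a b = v (⟨n, h⟩, a, b) := by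
      intro n h a b
      simp [B, h]
    have h0 := hN B (by
      intro i j h1 h2
      apply nilp_of_coeff
      intro k hk
      rw [← hevc v B hB i j k h2]
      exact hv _ ⟨i, j, k, h1, h2, hk, rfl⟩)
    have h1 := hev v B hB 0 N (by omega)
    rw [h0] at h1
    exact congrFun (congrFun h1 a) b
  choose pw hpw using hrad
  let p : ℕ := ∑ a, ∑ b, pw a b
  have hp : ∀ a b, (cp G 0 N a b) ^ p ∈ Ideal.span s := by
    intro a b
    refine Ideal.pow_mem_of_pow_mem _ (hpw a b) ?_
    calc pw a b ≤ ∑ b, pw a b := Finset.single_le_sum (fun _ _ => Nat.zero_le _) (Finset.mem_univ b)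
      _ ≤ p := Finset.single_le_sum (f := fun a => ∑ b, pw a b) (fun _ _ => Nat.zero_le _) (Finset.mem_univ a)
  choose C hC0 hC using fun a b => ideal_bdd s _ (hp a b)
  obtain ⟨K, hK0, hK⟩ := opNorm_le_entries d
  let Ct : ℝ := ∑ a, ∑ b, C a b
  have hCt : ∀ a b, C a b ≤ Ct := by
    intro a b
    calc C a b ≤ ∑ b, C a b := Finset.single_le_sum (f := fun b => C a b) (fun _ _ => hC0 _ _) (Finset.mem_univ b)
      _ ≤ Ct := Finset.single_le_sum (f := fun a => ∑ b, C a b) (fun _ _ => Finset.sum_nonneg fun _ _ => hC0 _ _) (Finset.mem_univ a)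
  have hCt0 : 0 ≤ Ct := Finset.sum_nonneg fun _ _ => Finset.sum_nonneg fun _ _ => hC0 _ _
  refine ⟨N, p, K ^ p * (Ct * 2 ^ d) + 1, by positivity, ?_⟩
  intro B hB κ hκ1 hκ hρ
  let v : σ → ℂ := fun t => B t.1 t.2.1 t.2.2
  have hBv : ∀ n (h : n < N) a b, B n a b = v (⟨n, h⟩, a, b) := fun _ _ _ _ => rfl
  have hent : ∀ a b, ‖cp B 0 N a b‖ ^ p ≤ Ct * (2 ^ d * κ) := by
    intro a b
    have h1 := hC a b v (fun t => (entry_le _ _ _).trans (hB _)) (2 ^ d * κ) (by positivity) (by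
      rintro t ⟨i, j, k, h1, h2, hk, rfl⟩
      rw [hevc v B hBv i j k h2]
      exact charpoly_coeff_le hd _ κ hκ1 (hρ i j h1 h2) k hk)
    rw [map_pow, norm_pow] at h1
    have h2 := congrFun (congrFun (hev v B hBv 0 N (by omega)) a) b
    rw [← h2]
    refine h1.trans ?_
    gcongr
    exact hCt a b
  -- the maximal entry
  have : Nonempty (Fin d) := ⟨⟨0, hd⟩⟩
  obtain ⟨⟨a, b⟩, hab⟩ := Finite.exists_max (fun t : Fin d × Fin d => ‖cp B 0 N t.1 t.2‖)
  have h1 := hK (cp B 0 N) _ (norm_nonneg (cp B 0 N a b)) (fun i j => hab (i, j))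
  calc opNorm (cp B 0 N) ^ p ≤ (K * ‖cp B 0 N a b‖) ^ p := pow_le_pow_left₀ (opNorm_nonneg _) h1 _
    _ = K ^ p * ‖cp B 0 N a b‖ ^ p := mul_pow _ _ _
    _ ≤ K ^ p * (Ct * (2 ^ d * κ)) := by gcongr; exact hent a b
    _ ≤ (K ^ p * (Ct * 2 ^ d) + 1) * κ := by nlinarith

section ergodic

/-- A nonnegative, linearly bounded, measurable subadditive process. -/
structure SubAdd {X : Type*} [MeasurableSpace X] (T : X → X) (K : ℝ) (g : ℕ → X → ℝ) : Prop where
  hm : ∀ n, Measurable (g n)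
  h0 : ∀ n x, 0 ≤ g n x
  hK : ∀ n x, g n x ≤ K * n
  sub : ∀ m n x, g (m + n) x ≤ g m x + g n (T^[m] x)

/-- lower growth rate -/
noncomputable def linf {X : Type*} (g : ℕ → X → ℝ) (x : X) : ℝ :=
  liminf (fun n : ℕ => g n x / n) atTop

/-- upper growth rate -/
noncomputable def lsup {X : Type*} (g : ℕ → X → ℝ) (x : X) : ℝ :=
  limsup (fun n : ℕ => g n x / n) atTop

/-- points which do not attain the lower rate within time `k` -/
def badSet {X : Type*} (g : ℕ → X → ℝ) (δ : ℝ) (k : ℕ) : Set X :=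
  {x | ∀ n : ℕ, 1 ≤ n → n ≤ k → n * (linf g x + δ) < g n x}

variable {X : Type*} [MeasurableSpace X] {μ : Measure X} [IsProbabilityMeasure μ] {T : X → X}
  {K : ℝ} {g : ℕ → X → ℝ}

theorem integrable_of_bdd {f : X → ℝ} (hf : Measurable f) (h0 : ∀ x, 0 ≤ f x) (C : ℝ)
    (hC : ∀ x, f x ≤ C) : Integrable f μ :=
  Integrable.of_bound hf.aestronglyMeasurable C
    (Eventually.of_forall fun x => by rw [Real.norm_eq_abs, abs_of_nonneg (h0 x)]; exact hC x)

theorem integral_comp_mp (hT : MeasurePreserving T μ μ) {f : X → ℝ} (hf : Measurable f) :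
    ∫ x, f (T x) ∂μ = ∫ x, f x ∂μ := by
  conv_rhs => rw [← hT.map_eq]
  rw [integral_map hT.measurable.aemeasurable hf.aestronglyMeasurable]

theorem inv_ae (hT : MeasurePreserving T μ μ) {f : X → ℝ} (hf : Measurable f)
    (h0 : ∀ x, 0 ≤ f x) (C : ℝ) (hC : ∀ x, f x ≤ C) (hle : ∀ x, f x ≤ f (T x)) :
    ∀ᵐ x ∂μ, ∀ n, f (T^[n] x) = f x := by
  have hi : Integrable f μ := integrable_of_bdd hf h0 C hC
  have hi2 : Integrable (fun x => f (T x)) μ :=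
    integrable_of_bdd (hf.comp hT.measurable) (fun x => h0 _) C (fun x => hC _)
  have h1 : ∫ x, (f (T x) - f x) ∂μ = 0 := by
    rw [integral_sub hi2 hi, integral_comp_mp hT hf, sub_self]
  rw [integral_eq_zero_iff_of_nonneg (fun x => sub_nonneg.2 (hle x)) (hi2.sub hi)] at h1
  have h2 : ∀ᵐ x ∂μ, f (T x) = f x := by
    filter_upwards [h1] with x hx
    exact sub_eq_zero.1 hx
  have h3 : ∀ᵐ x ∂μ, ∀ n, f (T (T^[n] x)) = f (T^[n] x) :=
    ae_all_iff.2 fun n => (hT.iterate n).quasiMeasurePreserving.ae h2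
  filter_upwards [h3] with x hx n
  induction n with
  | zero => rfl
  | succ n ih => rw [Function.iterate_succ_apply', hx, ih]

namespace SubAdd

theorem K0 [Nonempty X] (h : SubAdd T K g) : 0 ≤ K := by
  obtain ⟨x⟩ := ‹Nonempty X›
  have := (h.h0 1 x).trans (h.hK 1 x)
  simpa using this

theorem nn (h : SubAdd T K g) (x : X) (n : ℕ) : 0 ≤ g n x / n := div_nonneg (h.h0 n x) (Nat.cast_nonneg n)

theorem leK (h : SubAdd T K g) (x : X) (n : ℕ) : g n x / n ≤ K := by
  have : Nonempty X := ⟨x⟩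
  exact div_le_of_le_mul₀ (Nat.cast_nonneg n) h.K0 (h.hK n x)

theorem bddA (h : SubAdd T K g) (x : X) :
    IsBoundedUnder (· ≤ ·) atTop (fun n : ℕ => g n x / n) :=
  isBoundedUnder_of ⟨K, h.leK x⟩

theorem bddB (h : SubAdd T K g) (x : X) :
    IsBoundedUnder (· ≥ ·) atTop (fun n : ℕ => g n x / n) :=
  isBoundedUnder_of ⟨0, h.nn x⟩

theorem linf_nonneg (h : SubAdd T K g) (x : X) : 0 ≤ linf g x :=
  le_liminf_of_le (h.bddA x).isCoboundedUnder_ge (Eventually.of_forall (h.nn x))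

theorem lsup_le (h : SubAdd T K g) (x : X) : lsup g x ≤ K :=
  limsup_le_of_le (h.bddB x).isCoboundedUnder_le (Eventually.of_forall (h.leK x))

theorem linf_le_lsup (h : SubAdd T K g) (x : X) : linf g x ≤ lsup g x :=
  liminf_le_limsup (h.bddA x) (h.bddB x)

theorem linf_meas (h : SubAdd T K g) : Measurable (linf g) :=
  Measurable.liminf fun n => (h.hm n).div_const _

theorem lsup_meas (h : SubAdd T K g) : Measurable (lsup g) :=
  Measurable.limsup fun n => (h.hm n).div_const _

theorem linf_int (h : SubAdd T K g) : Integrable (linf g) μ :=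
  integrable_of_bdd h.linf_meas h.linf_nonneg K (fun x => (h.linf_le_lsup x).trans (h.lsup_le x))

theorem lsup_int (h : SubAdd T K g) : Integrable (lsup g) μ :=
  integrable_of_bdd h.lsup_meas (fun x => (h.linf_nonneg x).trans (h.linf_le_lsup x)) K h.lsup_le

theorem linf_le_T (h : SubAdd T K g) (x : X) : linf g x ≤ linf g (T x) := by
  refine le_of_forall_lt_imp_le_of_dense fun c hc => ?_
  obtain ⟨c', hc1, hc2⟩ := exists_between hc
  have h1 : ∀ᶠ n : ℕ in atTop, c' < g n x / n := eventually_lt_of_lt_liminf hc2 (h.bddB x)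
  have h2 : ∀ᶠ n : ℕ in atTop, c' < g (n + 1) x / ((n + 1 : ℕ) : ℝ) := (tendsto_add_atTop_nat 1).eventually h1
  have h3 : Tendsto (fun n : ℕ => K / (n : ℝ)) atTop (𝓝 0) := tendsto_const_div_atTop_nhds_zero_nat K
  have h4 : ∀ᶠ n : ℕ in atTop, K / (n : ℝ) < c' - c := h3.eventually_lt_const (by linarith)
  refine le_liminf_of_le (h.bddA (T x)).isCoboundedUnder_ge ?_
  filter_upwards [h2, h4, eventually_gt_atTop 0] with n hn1 hn2 hn
  have hn' : (0 : ℝ) < n := by exact_mod_cast hn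
  have h5 := h.sub 1 n x
  have h6 := h.hK 1 x
  rw [add_comm 1 n] at h5
  simp only [Function.iterate_one] at h5
  have h7 : g (n + 1) x / ((n + 1 : ℕ) : ℝ) ≤ g (n + 1) x / n := by
    apply div_le_div_of_nonneg_left (h.h0 _ _) hn'
    push_cast; linarith
  have h8 : g (n + 1) x / n ≤ K / n + g n (T x) / n := by
    rw [← add_div]
    apply div_le_div_of_nonneg_right _ hn'.le
    simp at h6
    linarith
  linarith

theorem linf_inv (h : SubAdd T K g) (hT : MeasurePreserving T μ μ) :
    ∀ᵐ x ∂μ, ∀ n, linf g (T^[n] x) = linf g x :=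
  inv_ae hT h.linf_meas h.linf_nonneg K (fun x => (h.linf_le_lsup x).trans (h.lsup_le x)) h.linf_le_T

theorem badSet_meas (h : SubAdd T K g) (δ : ℝ) (k : ℕ) : MeasurableSet (badSet g δ k) := by
  unfold badSet
  simp only [Set.setOf_forall]
  refine MeasurableSet.iInter fun n => MeasurableSet.iInter fun _ => MeasurableSet.iInter fun _ => ?_
  exact measurableSet_lt ((h.linf_meas.add_const δ).const_mul _) (h.hm n)

theorem badSet_tendsto (h : SubAdd T K g) {δ : ℝ} (hδ : 0 < δ) :
    Tendsto (fun k => μ.real (badSet g δ k)) atTop (𝓝 0) := by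
  have h1 : Tendsto (μ ∘ badSet g δ) atTop (𝓝 (μ (⋂ k, badSet g δ k))) := by
    refine tendsto_measure_iInter_atTop (fun k => (h.badSet_meas δ k).nullMeasurableSet) ?_
      ⟨0, measure_ne_top _ _⟩
    intro a b hab x hx n h1 h2
    exact hx n h1 (h2.trans hab)
  have h2 : (⋂ k, badSet g δ k) = ∅ := by
    rw [Set.eq_empty_iff_forall_notMem]
    intro x hx
    rw [Set.mem_iInter] at hx
    have h3 : ∃ᶠ n : ℕ in atTop, g n x / n < linf g x + δ :=
      frequently_lt_of_liminf_lt (h.bddA x).isCoboundedUnder_ge (by unfold linf; linarith)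
    obtain ⟨n, hn, hn1⟩ := (h3.and_eventually (eventually_gt_atTop 0)).exists
    have h4 := hx n n hn1 le_rfl
    have hn' : (0 : ℝ) < n := by exact_mod_cast hn1
    rw [div_lt_iff₀ hn'] at hn
    linarith
  rw [h2, measure_empty] at h1
  exact (ENNReal.tendsto_toReal ENNReal.zero_ne_top).comp h1

theorem greedy (h : SubAdd T K g) {δ : ℝ} (hδ : 0 ≤ δ) (k : ℕ) (n : ℕ) : ∀ x,
    (∀ n, linf g (T^[n] x) = linf g x) →
    g n x ≤ n * (linf g x + δ) + K * birkhoffSum T ((badSet g δ k).indicator 1) n x + K * k := by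
  induction n using Nat.strong_induction_on with
  | _ n ih =>
  intro x hx
  have : Nonempty X := ⟨x⟩
  have hK0 := h.K0
  have hl := h.linf_nonneg x
  have hnn : ∀ m y, 0 ≤ birkhoffSum T ((badSet g δ k).indicator (1 : X → ℝ)) m y := by
    intro m y
    exact Finset.sum_nonneg fun i _ => Set.indicator_nonneg (fun _ _ => zero_le_one) _
  rcases Nat.lt_or_ge k n with hkn | hkn
  swap
  · have h1 := h.hK n x
    have h2 : K * n ≤ K * k := by gcongr
    have h3 := hnn n x
    have h4 : 0 ≤ (n : ℝ) * (linf g x + δ) := by positivity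
    have h5 := mul_nonneg hK0 h3
    linarith
  · have hstep : ∀ m, 1 ≤ m → m ≤ n → g n x ≤ g m x + (((n - m : ℕ) : ℝ) * (linf g x + δ)
        + K * birkhoffSum T ((badSet g δ k).indicator 1) (n - m) (T^[m] x) + K * k) := by
      intro m hm1 hm2
      have h1 := h.sub m (n - m) x
      rw [Nat.add_sub_cancel' hm2] at h1
      have h2 := ih (n - m) (by omega) (T^[m] x) (by
        intro n'
        rw [← Function.iterate_add_apply, hx, hx])
      rw [hx] at h2
      linarith
    have hadd : ∀ m, m ≤ n → birkhoffSum T ((badSet g δ k).indicator (1 : X → ℝ)) n x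
        = birkhoffSum T ((badSet g δ k).indicator 1) m x
          + birkhoffSum T ((badSet g δ k).indicator 1) (n - m) (T^[m] x) := by
      intro m hm
      rw [← birkhoffSum_add, Nat.add_sub_cancel' hm]
    by_cases hxB : x ∈ badSet g δ k
    · have h1 := hstep 1 le_rfl (by omega)
      have h2 := h.hK 1 x
      rw [hadd 1 (by omega), birkhoffSum_one, Set.indicator_of_mem hxB]
      have h3 : ((n - 1 : ℕ) : ℝ) * (linf g x + δ) ≤ n * (linf g x + δ) := by
        gcongr; omega
      simp only [Pi.one_apply, Nat.cast_one, mul_one] at h2 ⊢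
      linarith
    · simp only [badSet, Set.mem_setOf_eq, not_forall, not_lt] at hxB
      obtain ⟨m, hm1, hm2, hm3⟩ := hxB
      have h1 := hstep m hm1 (by omega)
      rw [hadd m (by omega)]
      have h3 : (n : ℝ) = m + ((n - m : ℕ) : ℝ) := by
        rw [← Nat.cast_add, Nat.add_sub_cancel' (by omega)]
      have h4 := mul_nonneg hK0 (hnn m x)
      rw [h3, add_mul, mul_add K]
      linarith

end SubAdd

theorem integral_birkhoffSum (hT : MeasurePreserving T μ μ) {f : X → ℝ} (hf : Measurable f)
    (h0 : ∀ x, 0 ≤ f x) (C : ℝ) (hC : ∀ x, f x ≤ C) (n : ℕ) :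
    ∫ x, birkhoffSum T f n x ∂μ = n * ∫ x, f x ∂μ := by
  unfold birkhoffSum
  have hi : ∀ i ∈ Finset.range n, Integrable (fun x => f (T^[i] x)) μ := fun i _ =>
    integrable_of_bdd (hf.comp (hT.iterate i).measurable) (fun x => h0 _) C (fun x => hC _)
  rw [integral_finsetSum _ hi]
  rw [Finset.sum_congr rfl fun i _ => integral_comp_mp (hT.iterate i) hf]
  simp

theorem birkhoff_subAdd (hT : MeasurePreserving T μ μ) {f : X → ℝ} (hf : Measurable f)
    (h0 : ∀ x, 0 ≤ f x) (hC : ∀ x, f x ≤ 1) : SubAdd T 1 (fun n => birkhoffSum T f n) where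
  hm n := by
    unfold birkhoffSum
    exact Finset.measurable_sum _ fun i _ => hf.comp (hT.iterate i).measurable
  h0 n x := Finset.sum_nonneg fun i _ => h0 _
  hK n x := by
    unfold birkhoffSum
    calc _ ≤ ∑ i ∈ Finset.range n, (1 : ℝ) := Finset.sum_le_sum fun i _ => hC _
      _ = 1 * n := by simp
  sub m n x := (birkhoffSum_add T f m n x).le

namespace SubAdd

theorem le_int_linf (h : SubAdd T K g) (hT : MeasurePreserving T μ μ) (c : ℝ)
    (hc : ∀ n, 1 ≤ n → c * n ≤ ∫ x, g n x ∂μ) : c ≤ ∫ x, linf g x ∂μ := by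
  refine le_of_forall_pos_le_add fun δ hδ => ?_
  have key : ∀ k n : ℕ, 1 ≤ n →
      c ≤ (∫ x, linf g x ∂μ) + δ + K * μ.real (badSet g δ k) + (K * k) / n := by
    intro k n hn
    have hn' : (0 : ℝ) < n := by exact_mod_cast hn
    have hind : Measurable ((badSet g δ k).indicator (1 : X → ℝ)) :=
      measurable_one.indicator (h.badSet_meas δ k)
    have hi0 : ∀ x, 0 ≤ (badSet g δ k).indicator (1 : X → ℝ) x :=
      fun x => Set.indicator_nonneg (fun _ _ => zero_le_one) x
    have hi1 : ∀ x, (badSet g δ k).indicator (1 : X → ℝ) x ≤ 1 :=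
      fun x => Set.indicator_le_self' (fun _ _ => zero_le_one) x
    have hb := birkhoff_subAdd hT hind hi0 hi1
    have hbi : Integrable (fun x => birkhoffSum T ((badSet g δ k).indicator (1 : X → ℝ)) n x) μ :=
      integrable_of_bdd (hb.hm n) (hb.h0 n) _ (hb.hK n)
    have h1 : ∫ x, g n x ∂μ ≤ ∫ x, (n * (linf g x + δ)
        + K * birkhoffSum T ((badSet g δ k).indicator 1) n x + K * k) ∂μ := by
      refine integral_mono_ae (integrable_of_bdd (h.hm n) (h.h0 n) _ (h.hK n)) ?_ ?_
      · exact (((h.linf_int.add (integrable_const δ)).const_mul _).add (hbi.const_mul K)).add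
          (integrable_const _)
      · filter_upwards [h.linf_inv hT] with x hx
        exact h.greedy hδ.le k n x hx
    have h2 : ∫ x, (n * (linf g x + δ)
        + K * birkhoffSum T ((badSet g δ k).indicator 1) n x + K * k) ∂μ
        = n * ((∫ x, linf g x ∂μ) + δ) + K * (n * μ.real (badSet g δ k)) + K * k := by
      have I1 : Integrable (fun x => (n : ℝ) * (linf g x + δ)) μ :=
        (h.linf_int.add (integrable_const δ)).const_mul _
      have I12 : Integrable (fun x => (n : ℝ) * (linf g x + δ)
          + K * birkhoffSum T ((badSet g δ k).indicator (1 : X → ℝ)) n x) μ :=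
        I1.add (hbi.const_mul K)
      rw [integral_add I12 (integrable_const _), integral_add I1 (hbi.const_mul K),
        integral_const_mul, integral_const_mul, integral_add h.linf_int (integrable_const δ),
        integral_birkhoffSum hT hind hi0 1 hi1, integral_indicator_one (h.badSet_meas δ k)]
      simp
    have h3 := (hc n hn).trans (h1.trans_eq h2)
    have h4 : c ≤ (n * ((∫ x, linf g x ∂μ) + δ) + K * (n * μ.real (badSet g δ k)) + K * k) / n := by
      rwa [le_div_iff₀ hn']
    refine h4.trans_eq ?_
    field_simp
  have key2 : ∀ k : ℕ, c ≤ (∫ x, linf g x ∂μ) + δ + K * μ.real (badSet g δ k) + 0 := by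
    intro k
    refine ge_of_tendsto (tendsto_const_nhds.add (tendsto_const_div_atTop_nhds_zero_nat (K * k))) ?_
    filter_upwards [eventually_ge_atTop 1] with n hn
    exact key k n hn
  have h5 : c ≤ (∫ x, linf g x ∂μ) + δ + K * 0 := by
    refine ge_of_tendsto (tendsto_const_nhds.add ((h.badSet_tendsto (μ := μ) hδ).const_mul K)) ?_
    filter_upwards with k
    simpa using key2 k
  simpa using h5

end SubAdd

theorem birkhoff_ae (hT : MeasurePreserving T μ μ) {f : X → ℝ} (hf : Measurable f)
    (h0 : ∀ x, 0 ≤ f x) (hC : ∀ x, f x ≤ 1) :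
    (∫ x, lsup (fun n => birkhoffSum T f n) x ∂μ = ∫ x, f x ∂μ) ∧
    ∀ᵐ x ∂μ, Tendsto (fun n : ℕ => birkhoffSum T f n x / n) atTop
      (𝓝 (lsup (fun n => birkhoffSum T f n) x)) := by
  have hs := birkhoff_subAdd hT hf h0 hC
  have hf' : Measurable (fun x => 1 - f x) := hf.const_sub 1
  have h0' : ∀ x, 0 ≤ 1 - f x := fun x => by linarith [hC x]
  have hC' : ∀ x, 1 - f x ≤ 1 := fun x => by linarith [h0 x]
  have hs' := birkhoff_subAdd hT hf' h0' hC'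
  have hfi : Integrable f μ := integrable_of_bdd hf h0 1 hC
  have h1 : ∫ x, f x ∂μ ≤ ∫ x, linf (fun n => birkhoffSum T f n) x ∂μ := by
    apply hs.le_int_linf hT
    intro n _
    rw [integral_birkhoffSum hT hf h0 1 hC, mul_comm]
  have h2 : ∫ x, (1 - f x) ∂μ ≤ ∫ x, linf (fun n => birkhoffSum T (fun x => 1 - f x) n) x ∂μ := by
    apply hs'.le_int_linf hT
    intro n _
    rw [integral_birkhoffSum hT hf' h0' 1 hC', mul_comm]
  have h3 : ∀ x, linf (fun n => birkhoffSum T (fun x => 1 - f x) n) x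
      = 1 - lsup (fun n => birkhoffSum T f n) x := by
    intro x
    unfold linf lsup
    rw [← liminf_const_sub atTop _ 1 (hs.bddA x) (hs.bddB x).isCoboundedUnder_le]
    refine liminf_congr ?_
    filter_upwards [eventually_gt_atTop 0] with n hn
    have hn' : (0 : ℝ) < n := by exact_mod_cast hn
    simp only [birkhoffSum, Finset.sum_sub_distrib, Finset.sum_const, Finset.card_range]
    field_simp
    simp
  simp_rw [h3] at h2
  rw [integral_sub (integrable_const _) hfi, integral_sub (integrable_const _) hs.lsup_int] at h2
  have h4 : ∫ x, linf (fun n => birkhoffSum T f n) x ∂μ ≤ ∫ x, lsup (fun n => birkhoffSum T f n) x ∂μ :=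
    integral_mono hs.linf_int hs.lsup_int hs.linf_le_lsup
  refine ⟨by linarith, ?_⟩
  have h5 : ∫ x, (lsup (fun n => birkhoffSum T f n) x - linf (fun n => birkhoffSum T f n) x) ∂μ = 0 := by
    rw [integral_sub hs.lsup_int hs.linf_int]; linarith
  rw [integral_eq_zero_iff_of_nonneg (fun x => sub_nonneg.2 (hs.linf_le_lsup x))
    (hs.lsup_int.sub hs.linf_int)] at h5
  filter_upwards [h5] with x hx
  exact tendsto_of_liminf_eq_limsup (sub_eq_zero.1 hx).symm rfl (hs.bddA x) (hs.bddB x)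

theorem SubAdd.kingman (h : SubAdd T K g) (hT : MeasurePreserving T μ μ) :
    ∀ᵐ x ∂μ, Tendsto (fun n : ℕ => g n x / n) atTop (𝓝 (lsup g x)) := by
  have hle : ∫ x, lsup g x ∂μ ≤ ∫ x, linf g x ∂μ := by
    refine le_of_forall_pos_le_add fun δ hδ => ?_
    have key : ∀ k : ℕ, ∫ x, lsup g x ∂μ ≤ (∫ x, linf g x ∂μ) + δ + K * μ.real (badSet g δ k) := by
      intro k
      have hind : Measurable ((badSet g δ k).indicator (1 : X → ℝ)) :=
        measurable_one.indicator (h.badSet_meas δ k)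
      have hi0 : ∀ x, 0 ≤ (badSet g δ k).indicator (1 : X → ℝ) x :=
        fun x => Set.indicator_nonneg (fun _ _ => zero_le_one) x
      have hi1 : ∀ x, (badSet g δ k).indicator (1 : X → ℝ) x ≤ 1 :=
        fun x => Set.indicator_le_self' (fun _ _ => zero_le_one) x
      have hb := birkhoff_subAdd hT hind hi0 hi1
      obtain ⟨e1, e2⟩ := birkhoff_ae hT hind hi0 hi1
      rw [integral_indicator_one (h.badSet_meas δ k)] at e1
      rw [← e1, ← integral_const_mul]
      have e3 : (∫ x, linf g x ∂μ) + δ = ∫ x, (linf g x + δ) ∂μ := by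
        rw [integral_add h.linf_int (integrable_const δ)]; simp
      have I1 : Integrable (fun x => linf g x + δ) μ := h.linf_int.add (integrable_const δ)
      rw [e3, ← integral_add I1 (hb.lsup_int.const_mul K)]
      refine integral_mono_ae h.lsup_int
        ((h.linf_int.add (integrable_const δ)).add (hb.lsup_int.const_mul K)) ?_
      filter_upwards [e2, h.linf_inv hT] with x hx hx2
      have t1 : Tendsto (fun n : ℕ => linf g x + δ
          + K * (birkhoffSum T ((badSet g δ k).indicator 1) n x / n) + K * k / n) atTop
          (𝓝 (linf g x + δ + K * lsup (fun n => birkhoffSum T ((badSet g δ k).indicator 1) n) x + 0)) :=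
        (tendsto_const_nhds.add (hx.const_mul K)).add (tendsto_const_div_atTop_nhds_zero_nat _)
      have t2 : lsup g x ≤ limsup (fun n : ℕ => linf g x + δ
          + K * (birkhoffSum T ((badSet g δ k).indicator 1) n x / n) + K * k / n) atTop := by
        refine limsup_le_limsup ?_ (h.bddB x).isCoboundedUnder_le t1.isBoundedUnder_le
        filter_upwards [eventually_gt_atTop 0] with n hn
        have hn' : (0 : ℝ) < n := by exact_mod_cast hn
        have := h.greedy hδ.le k n x hx2
        rw [div_le_iff₀ hn']
        refine this.trans_eq ?_
        field_simp
      rw [t1.limsup_eq, add_zero] at t2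
      exact t2
    have h5 : ∫ x, lsup g x ∂μ ≤ (∫ x, linf g x ∂μ) + δ + K * 0 := by
      refine ge_of_tendsto (tendsto_const_nhds.add ((h.badSet_tendsto (μ := μ) hδ).const_mul K)) ?_
      filter_upwards with k
      exact key k
    simpa using h5
  have h4 : ∫ x, linf g x ∂μ ≤ ∫ x, lsup g x ∂μ := integral_mono h.linf_int h.lsup_int h.linf_le_lsup
  have h5 : ∫ x, (lsup g x - linf g x) ∂μ = 0 := by
    rw [integral_sub h.lsup_int h.linf_int]; linarith
  rw [integral_eq_zero_iff_of_nonneg (fun x => sub_nonneg.2 (h.linf_le_lsup x))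
    (h.lsup_int.sub h.linf_int)] at h5
  filter_upwards [h5] with x hx
  exact tendsto_of_liminf_eq_limsup (sub_eq_zero.1 hx).symm rfl (h.bddA x) (h.bddB x)

/-- A set of positive measure contains a point returning with positive frequency. -/
theorem exists_return (hT : MeasurePreserving T μ μ) {F : Set X} (hF : MeasurableSet F)
    (hpos : μ F ≠ 0) : ∃ y ∈ F, ∃ c : ℝ, 0 < c ∧
      Tendsto (fun n : ℕ => birkhoffSum T (F.indicator (1 : X → ℝ)) n y / n) atTop (𝓝 c) := by
  have hind : Measurable (F.indicator (1 : X → ℝ)) := measurable_one.indicator hF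
  have hi0 : ∀ x, 0 ≤ F.indicator (1 : X → ℝ) x :=
    fun x => Set.indicator_nonneg (fun _ _ => zero_le_one) x
  have hi1 : ∀ x, F.indicator (1 : X → ℝ) x ≤ 1 :=
    fun x => Set.indicator_le_self' (fun _ _ => zero_le_one) x
  have hb := birkhoff_subAdd hT hind hi0 hi1
  obtain ⟨e1, e2⟩ := birkhoff_ae hT hind hi0 hi1
  rw [integral_indicator_one hF] at e1
  have e3 : ∀ᵐ x ∂μ, ∀ m : ℕ, Tendsto (fun n : ℕ => birkhoffSum T (F.indicator (1 : X → ℝ)) n (T^[m] x) / n) atTop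
      (𝓝 (lsup (fun n => birkhoffSum T (F.indicator (1 : X → ℝ)) n) (T^[m] x))) :=
    ae_all_iff.2 fun m => (hT.iterate m).quasiMeasurePreserving.ae e2
  by_contra hcon
  push Not at hcon
  have e4 : ∀ᵐ x ∂μ, lsup (fun n => birkhoffSum T (F.indicator (1 : X → ℝ)) n) x = 0 := by
    filter_upwards [e3, hb.linf_inv hT] with x hx hx2
    have hnn := fun y => (hb.linf_nonneg y).trans (hb.linf_le_lsup y)
    have hx0 := hx 0
    simp only [Function.iterate_zero, id] at hx0
    by_cases hv : ∃ m, T^[m] x ∈ F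
    · obtain ⟨m, hm⟩ := hv
      have a1 : lsup (fun n => birkhoffSum T (F.indicator (1 : X → ℝ)) n) x
          = linf (fun n => birkhoffSum T (F.indicator (1 : X → ℝ)) n) x := hx0.liminf_eq.symm
      have a2 : lsup (fun n => birkhoffSum T (F.indicator (1 : X → ℝ)) n) (T^[m] x)
          = linf (fun n => birkhoffSum T (F.indicator (1 : X → ℝ)) n) (T^[m] x) :=
        (hx m).liminf_eq.symm
      rw [a1, ← hx2 m, ← a2]
      by_contra hne
      exact hcon _ hm _ (lt_of_le_of_ne (hnn _) (Ne.symm hne)) (hx m)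
    · push Not at hv
      refine tendsto_nhds_unique hx0 ?_
      have : ∀ n : ℕ, birkhoffSum T (F.indicator (1 : X → ℝ)) n x / n = 0 := by
        intro n
        have : birkhoffSum T (F.indicator (1 : X → ℝ)) n x = 0 :=
          Finset.sum_eq_zero fun i _ => Set.indicator_of_notMem (hv i) _
        rw [this, zero_div]
      simp [this]
  rw [integral_congr_ae e4] at e1
  simp only [integral_zero] at e1
  replace e1 := e1.symm
  rw [measureReal_eq_zero_iff] at e1
  exact hpos e1

end ergodic

section mainarg

theorem cp_smul {d : ℕ} (z : ℂ) (B : ℕ → Matrix (Fin d) (Fin d) ℂ) (i n : ℕ) :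
    cp (fun j => z • B j) i n = z ^ n • cp B i n := by
  induction n with
  | zero => simp [cp]
  | succ n ih =>
    simp only [cp]
    rw [ih, smul_mul_smul_comm, ← pow_succ']

theorem block_bound {d N p : ℕ} {C₀ : ℝ}
    (hN : ∀ B : ℕ → Matrix (Fin d) (Fin d) ℂ, (∀ i, opNorm (B i) ≤ 1) → ∀ κ : ℝ, κ ≤ 1 → 0 ≤ κ →
      (∀ i j, 1 ≤ j → i + j ≤ N → specRad (cp B i j) ≤ κ) → opNorm (cp B 0 N) ^ p ≤ C₀ * κ)
    (E : ℕ → Matrix (Fin d) (Fin d) ℂ) (q : ℝ) (hq0 : 0 ≤ q) (hq1 : q ≤ 1) (n₀ m n : ℕ)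
    (hm : n₀ ≤ m) (hm1 : 1 ≤ m) (R : Set ℕ)
    (hR : ∀ k ∈ R, ∀ n, n₀ ≤ n → opNorm (cp E k n) ≤ 1 ∧ specRad (cp E k n) ≤ q ^ n)
    (h0 : 0 ∈ R) (hs : ∀ i, i ≤ N → ∃ k ∈ R, (2 * i + 1) * m ≤ k ∧ k < (2 * i + 2) * m)
    (hn : (2 * N + 3) * m ≤ n) :
    opNorm (cp E 0 n) ^ p ≤ C₀ * q ^ m := by
  have hs' : ∀ i, ∃ k, k ∈ R ∧ (2 * (min i N) + 1) * m ≤ k ∧ k < (2 * (min i N) + 2) * m :=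
    fun i => by
      obtain ⟨k, h1, h2, h3⟩ := hs (min i N) (min_le_right _ _)
      exact ⟨k, h1, h2, h3⟩
  choose t ht using hs'
  let s : ℕ → ℕ := fun i => t (min i N)
  have hsR : ∀ i, s i ∈ R := fun i => (ht _).1
  have hgap : ∀ i, i < N → s i + m ≤ s (i + 1) := by
    intro i hi
    have h1 := (ht (min i N)).2.2
    have h2 := (ht (min (i + 1) N)).2.1
    have e1 : min (min i N) N = i := by omega
    have e2 : min (min (i + 1) N) N = i + 1 := by omega
    rw [e1] at h1
    rw [e2] at h2
    change t (min i N) + m ≤ t (min (i + 1) N)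
    nlinarith
  have hconst : ∀ i, N ≤ i → s (i + 1) = s i := by
    intro i hi
    change t (min (i + 1) N) = t (min i N)
    rw [min_eq_right hi, min_eq_right (by omega)]
  have hmono : Monotone s := by
    refine monotone_nat_of_le_succ fun i => ?_
    rcases lt_or_ge i N with h | h
    · exact (Nat.le_add_right _ _).trans (hgap i h)
    · exact (hconst i h).ge
  have hgap' : ∀ j i, 1 ≤ j → i + j ≤ N → s i + m ≤ s (i + j) := by
    intro j i hj hij
    exact (hgap i (by omega)).trans (hmono (by omega))
  let D : ℕ → Matrix (Fin d) (Fin d) ℂ := fun j => cp E (s j) (s (j + 1) - s j)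
  have hD1 : ∀ i, opNorm (D i) ≤ 1 := by
    intro i
    rcases lt_or_ge i N with h | h
    · have := hgap i h
      exact (hR _ (hsR i) _ (by omega)).1
    · change opNorm (cp E (s i) (s (i + 1) - s i)) ≤ 1
      rw [hconst i h, Nat.sub_self]
      exact opNorm_one_le
  have hmid := hN D hD1 (q ^ m) (pow_le_one₀ hq0 hq1) (pow_nonneg hq0 _) (by
    intro i j hj hij
    rw [cp_block E s hmono i j]
    have h1 := hgap' j i hj hij
    refine (hR _ (hsR i) _ (by omega)).2.trans ?_
    exact pow_le_pow_of_le_one hq0 hq1 (by omega))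
  rw [cp_block E s hmono 0 N, Nat.zero_add] at hmid
  have hs0 : m ≤ s 0 := by
    have h1 := (ht (min 0 N)).2.1
    change m ≤ t (min 0 N)
    nlinarith [Nat.zero_le (min (min 0 N) N)]
  have hsN : s N + m ≤ n := by
    have h1 := (ht (min N N)).2.2
    have e1 : min (min N N) N = N := by omega
    rw [e1] at h1
    change t (min N N) + m ≤ n
    nlinarith
  have h0N : s 0 ≤ s N := hmono (Nat.zero_le _)
  have e : cp E 0 n = cp E (s N) (n - s N) * (cp E (s 0) (s N - s 0) * cp E 0 (s 0)) := by
    have e1 := cp_add E 0 (s 0) (s N - s 0)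
    have e2 := cp_add E 0 (s N) (n - s N)
    rw [Nat.zero_add, Nat.add_sub_cancel' h0N] at e1
    rw [Nat.zero_add, Nat.add_sub_cancel' (by omega)] at e2
    rw [e2, e1]
  have b1 := (hR _ (hsR N) (n - s N) (by omega)).1
  have b2 := (hR _ h0 (s 0) (by omega)).1
  have b3 : opNorm (cp E 0 n) ≤ opNorm (cp E (s 0) (s N - s 0)) := by
    rw [e]
    refine (opNorm_mul_le _ _).trans ?_
    refine (mul_le_of_le_one_left (opNorm_nonneg _) b1).trans ?_
    refine (opNorm_mul_le _ _).trans ?_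
    exact mul_le_of_le_one_right (opNorm_nonneg _) b2
  exact (pow_le_pow_left₀ (opNorm_nonneg _) b3 p).trans hmid

/-- Deterministic contradiction. -/
theorem det_contra {d N p : ℕ} {C₀ : ℝ}
    (hN : ∀ B : ℕ → Matrix (Fin d) (Fin d) ℂ, (∀ i, opNorm (B i) ≤ 1) → ∀ κ : ℝ, κ ≤ 1 → 0 ≤ κ →
      (∀ i j, 1 ≤ j → i + j ≤ N → specRad (cp B i j) ≤ κ) → opNorm (cp B 0 N) ^ p ≤ C₀ * κ)
    (hd : 1 ≤ d) (B : ℕ → Matrix (Fin d) (Fin d) ℂ) (a b c : ℝ) (ha : 0 < a) (hb : 0 < b)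
    (hbc : b < c) (hac : a < c) (hQ : a / c < (b / c) ^ ((4 * N + 6) * p)) (n₀ : ℕ) (R : Set ℕ)
    (hR : ∀ k ∈ R, ∀ n, n₀ ≤ n → opNorm (cp B k n) ≤ c ^ n ∧ specRad (cp B k n) ≤ a ^ n)
    (h0 : 0 ∈ R)
    (hs : ∀ᶠ m : ℕ in atTop, ∀ i, i ≤ N → ∃ k ∈ R, (2 * i + 1) * m ≤ k ∧ k < (2 * i + 2) * m)
    (hf : ∃ᶠ n : ℕ in atTop, b ^ n ≤ opNorm (cp B 0 n)) : False := by
  have hc : 0 < c := hb.trans hbc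
  let E : ℕ → Matrix (Fin d) (Fin d) ℂ := fun j => ((c : ℂ)⁻¹) • B j
  have hnz : ∀ n : ℕ, ‖((c : ℂ)⁻¹) ^ n‖ = (c ^ n)⁻¹ := by
    intro n
    rw [norm_pow, norm_inv, Complex.norm_real, Real.norm_of_nonneg hc.le, inv_pow]
  have hEo : ∀ k n, opNorm (cp E k n) = (c ^ n)⁻¹ * opNorm (cp B k n) := by
    intro k n
    rw [cp_smul, opNorm_smul, hnz]
  have hEs : ∀ k n, specRad (cp E k n) = (c ^ n)⁻¹ * specRad (cp B k n) := by
    intro k n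
    rw [cp_smul, specRad_smul hd, hnz]
  have hq0 : 0 < a / c := div_pos ha hc
  have hq1 : a / c ≤ 1 := (div_le_one hc).2 hac.le
  have ht0 : 0 < b / c := div_pos hb hc
  have ht1 : b / c ≤ 1 := (div_le_one hc).2 hbc.le
  have hRE : ∀ k ∈ R, ∀ n, n₀ ≤ n → opNorm (cp E k n) ≤ 1 ∧ specRad (cp E k n) ≤ (a / c) ^ n := by
    intro k hk n hn
    obtain ⟨h1, h2⟩ := hR k hk n hn
    have hcn : 0 < c ^ n := pow_pos hc n
    rw [hEo, hEs, div_pow]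
    constructor
    · rw [inv_mul_le_iff₀ hcn, mul_one]; exact h1
    · rw [inv_mul_eq_div]; gcongr
  set Q := (4 * N + 6) * p with hQdef
  set t := b / c with htd
  set q := a / c with hqd
  have htQ : 0 < t ^ Q := pow_pos ht0 _
  have hlim : Tendsto (fun m : ℕ => C₀ * (q / t ^ Q) ^ m) atTop (𝓝 (C₀ * 0)) := by
    refine (tendsto_pow_atTop_nhds_zero_of_lt_one (by positivity) ?_).const_mul C₀
    rwa [div_lt_one htQ]
  rw [mul_zero] at hlim
  have hlt : ∀ᶠ m : ℕ in atTop, C₀ * (q / t ^ Q) ^ m < 1 := hlim.eventually_lt_const one_pos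
  have hall := hs.and (hlt.and (eventually_ge_atTop (n₀ + 1)))
  have hdiv : Tendsto (fun n : ℕ => n / (2 * N + 3)) atTop atTop :=
    Nat.tendsto_div_const_atTop (by omega)
  obtain ⟨n, hn1, hn2⟩ := (hf.and_eventually (hdiv.eventually hall)).exists
  obtain ⟨g1, g2, g3⟩ := hn2
  set m := n / (2 * N + 3) with hmdef
  have hnm : (2 * N + 3) * m ≤ n := Nat.mul_div_le _ _
  have hnm2 : n < (2 * N + 3) * (m + 1) := by
    have := Nat.lt_mul_div_succ n (show 0 < 2 * N + 3 by omega)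
    simpa [hmdef] using this
  have key := block_bound hN E q hq0.le hq1 n₀ m n (by omega) (by omega) R hRE h0 g1 hnm
  have hlow : t ^ n ≤ opNorm (cp E 0 n) := by
    rw [hEo, htd, div_pow, inv_mul_eq_div]
    have := pow_pos hc n
    gcongr
  have hnQ : n * p ≤ Q * m := by
    have h1 : n ≤ (4 * N + 6) * m := by nlinarith
    calc n * p ≤ (4 * N + 6) * m * p := Nat.mul_le_mul_right _ h1
      _ = Q * m := by rw [hQdef]; ring
  have h1 : (t ^ Q) ^ m ≤ C₀ * q ^ m := by
    calc (t ^ Q) ^ m = t ^ (Q * m) := (pow_mul _ _ _).symm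
      _ ≤ t ^ (n * p) := pow_le_pow_of_le_one ht0.le ht1 hnQ
      _ = (t ^ n) ^ p := pow_mul _ _ _
      _ ≤ opNorm (cp E 0 n) ^ p := pow_le_pow_left₀ (by positivity) hlow p
      _ ≤ _ := key
  have h2 : 1 ≤ C₀ * (q / t ^ Q) ^ m := by
    rw [div_pow, ← mul_div_assoc, le_div_iff₀ (pow_pos htQ m), one_mul]
    exact h1
  linarith

theorem return_times {X : Type*} {T : X → X} {F : Set X} {y : X} {c : ℝ} (hc : 0 < c)
    (h : Tendsto (fun n : ℕ => birkhoffSum T (F.indicator (1 : X → ℝ)) n y / n) atTop (𝓝 c))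
    (N : ℕ) :
    ∀ᶠ m : ℕ in atTop, ∀ i, i ≤ N →
      ∃ k ∈ {k : ℕ | T^[k] y ∈ F}, (2 * i + 1) * m ≤ k ∧ k < (2 * i + 2) * m := by
  have hk : ∀ k : ℕ, 1 ≤ k → Tendsto (fun m : ℕ =>
      birkhoffSum T (F.indicator (1 : X → ℝ)) (k * m) y / m) atTop (𝓝 (k * c)) := by
    intro k hk
    have h1 : Tendsto (fun m : ℕ => k * m) atTop atTop :=
      tendsto_id.const_mul_atTop' (by omega)
    have h2 := (h.comp h1).const_mul (k : ℝ)
    refine h2.congr fun m => ?_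
    have hk0 : (k : ℝ) ≠ 0 := by positivity
    simp only [Function.comp, Nat.cast_mul]
    rw [← mul_div_assoc, mul_div_mul_left _ _ hk0]
  have hi : ∀ i : ℕ, ∀ᶠ m : ℕ in atTop,
      ∃ k ∈ {k : ℕ | T^[k] y ∈ F}, (2 * i + 1) * m ≤ k ∧ k < (2 * i + 2) * m := by
    intro i
    have h1 := (hk (2 * i + 2) (by omega)).sub (hk (2 * i + 1) (by omega))
    have h2 : (0 : ℝ) < ((2 * i + 2 : ℕ) : ℝ) * c - ((2 * i + 1 : ℕ) : ℝ) * c := by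
      push_cast; linarith
    filter_upwards [h1.eventually_const_lt h2] with m hm
    by_contra hcon
    push Not at hcon
    have : birkhoffSum T (F.indicator (1 : X → ℝ)) ((2 * i + 2) * m) y
        = birkhoffSum T (F.indicator (1 : X → ℝ)) ((2 * i + 1) * m) y := by
      unfold birkhoffSum
      symm
      refine Finset.sum_subset (Finset.range_mono (by nlinarith)) ?_
      intro k hk1 hk2
      refine Set.indicator_of_notMem (fun hF => ?_) _
      simp only [Finset.mem_range, not_lt] at hk1 hk2
      exact absurd hk1 (not_lt.2 (hcon k hF hk2))
    rw [this, sub_self] at hm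
    exact lt_irrefl _ hm
  filter_upwards [(eventually_all_finite (Set.finite_Iic N)).2 fun i _ => hi i] with m hm i hiN
  exact hm i hiN

/-- Convergence from convergence of all truncations. -/
theorem conv_of_trunc (v : ℕ → ℝ) (hv : ∀ M : ℕ, ∃ l, Tendsto (fun n => max (v n) (Real.exp (-M))) atTop (𝓝 l))
    (h0 : ∀ n, 0 ≤ v n) : ∃ l, Tendsto v atTop (𝓝 l) := by
  apply cauchySeq_tendsto_of_complete
  rw [Metric.cauchySeq_iff]
  intro ε hε
  have h1 : Tendsto (fun M : ℕ => Real.exp (-(M : ℝ))) atTop (𝓝 0) :=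
    Real.tendsto_exp_neg_atTop_nhds_zero.comp tendsto_natCast_atTop_atTop
  obtain ⟨M, hM⟩ := (h1.eventually_lt_const (show 0 < ε / 3 by linarith)).exists
  obtain ⟨l, hl⟩ := hv M
  obtain ⟨n₀, hn₀⟩ := Metric.cauchySeq_iff.1 hl.cauchySeq (ε / 3) (by linarith)
  refine ⟨n₀, fun m hm n hn => ?_⟩
  have h2 := hn₀ m hm n hn
  rw [Real.dist_eq, abs_lt] at h2 ⊢
  have e1 : ∀ k, v k ≤ max (v k) (Real.exp (-M)) := fun k => le_max_left _ _
  have e2 : ∀ k, max (v k) (Real.exp (-M)) ≤ v k + ε / 3 := fun k =>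
    max_le (by linarith) (by linarith [h0 k])
  have := e1 m; have := e1 n; have := e2 m; have := e2 n
  constructor <;> linarith [h2.1, h2.2]

end mainarg

section process

theorem prodS_eq_cp {d : ℕ} {I : Type*} (S : I → Matrix (Fin d) (Fin d) ℂ) (x : ℕ → I) (n : ℕ) :
    prodS S x n = cp (fun i => S (x i)) 0 n := by
  induction n with
  | zero => rfl
  | succ n ih => simp only [prodS, cp, ih, Nat.zero_add]

theorem shift_iter {I : Type*} (x : ℕ → I) (k : ℕ) :
    (fun (x : ℕ → I) (n : ℕ) => x (n + 1))^[k] x = fun n => x (k + n) := by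
  induction k generalizing x with
  | zero => simp
  | succ k ih =>
    rw [Function.iterate_succ_apply, ih]
    funext n
    congr 1
    omega

theorem prodS_shift {d : ℕ} {I : Type*} (S : I → Matrix (Fin d) (Fin d) ℂ) (x : ℕ → I) (k n : ℕ) :
    prodS S ((fun (x : ℕ → I) (n : ℕ) => x (n + 1))^[k] x) n = cp (fun i => S (x i)) k n := by
  rw [prodS_eq_cp, shift_iter]
  exact cp_shift (fun i => S (x i)) k 0 n

theorem prodS_add {d : ℕ} {I : Type*} (S : I → Matrix (Fin d) (Fin d) ℂ) (x : ℕ → I) (m n : ℕ) :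
    prodS S x (m + n) = prodS S ((fun (x : ℕ → I) (n : ℕ) => x (n + 1))^[m] x) n * prodS S x m := by
  rw [prodS_shift, prodS_eq_cp, prodS_eq_cp, cp_add, Nat.zero_add]

theorem continuous_prodS {d : ℕ} {I : Type*} [TopologicalSpace I]
    {S : I → Matrix (Fin d) (Fin d) ℂ} (hS : Continuous S) (n : ℕ) :
    Continuous (fun x : ℕ → I => prodS S x n) := by
  induction n with
  | zero => exact continuous_const
  | succ n ih => exact (hS.comp (continuous_apply n)).matrix_mul ih

theorem opNorm_prodS_le {d : ℕ} {I : Type*} {S : I → Matrix (Fin d) (Fin d) ℂ} {C : ℝ}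
    (hC : ∀ i, opNorm (S i) ≤ C) (x : ℕ → I) (n : ℕ) : opNorm (prodS S x n) ≤ C ^ n := by
  induction n with
  | zero => simpa [prodS] using opNorm_one_le
  | succ n ih =>
    have h0 : 0 ≤ C := (opNorm_nonneg _).trans (hC (x 0))
    rw [pow_succ']
    exact (opNorm_mul_le _ _).trans (mul_le_mul (hC _) ih (opNorm_nonneg _) h0)

theorem root_le {v c : ℝ} (hv : 0 ≤ v) (hc : 0 ≤ c) {n : ℕ} (hn : 1 ≤ n) :
    v ^ (1 / (n : ℝ)) ≤ c ↔ v ≤ c ^ n := by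
  have hn' : (0 : ℝ) < n := by exact_mod_cast hn
  rw [one_div, Real.rpow_inv_le_iff_of_pos hv hc hn', Real.rpow_natCast]

theorem le_root {v c : ℝ} (hv : 0 ≤ v) (hc : 0 ≤ c) {n : ℕ} (hn : 1 ≤ n) :
    c ≤ v ^ (1 / (n : ℝ)) ↔ c ^ n ≤ v := by
  have hn' : (0 : ℝ) < n := by exact_mod_cast hn
  rw [one_div, Real.le_rpow_inv_iff_of_pos hc hv hn', Real.rpow_natCast]

variable {d : ℕ} {I : Type*} [MetricSpace I] [MeasurableSpace (ℕ → I)] [BorelSpace (ℕ → I)]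
  {S : I → Matrix (Fin d) (Fin d) ℂ}

theorem meas_opNorm (hS : Continuous S) (n : ℕ) : Measurable (fun x => opNorm (prodS S x n)) :=
  (continuous_opNorm.comp (continuous_prodS hS n)).measurable

theorem meas_specRad (hd : 1 ≤ d) (hS : Continuous S) (n : ℕ) :
    Measurable (fun x => specRad (prodS S x n)) := by
  have h : ∀ k : ℕ, Measurable (fun x => opNorm (prodS S x n ^ k) ^ (1 / (k : ℝ))) := fun k =>
    (continuous_opNorm.comp ((continuous_prodS hS n).pow k)).measurable.pow_const _
  refine measurable_of_tendsto_metrizable h ?_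
  rw [tendsto_pi_nhds]
  exact fun x => specRad_tendsto hd _

theorem trunc_subAdd (hS : Continuous S) {C : ℝ} (hC1 : 1 ≤ C) (hC : ∀ i, opNorm (S i) ≤ C) (M : ℕ) :
    SubAdd (fun (x : ℕ → I) (n : ℕ) => x (n + 1)) (Real.log C + M)
      (fun n x => Real.log (max (opNorm (prodS S x n)) (Real.exp (-M * n))) + M * n) where
  hm n := (Real.measurable_log.comp ((meas_opNorm hS n).max measurable_const)).add_const _
  h0 n x := by
    have h1 : Real.exp (-M * n) ≤ max (opNorm (prodS S x n)) (Real.exp (-M * n)) := le_max_right _ _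
    have h2 := Real.log_le_log (Real.exp_pos _) h1
    rw [Real.log_exp] at h2
    linarith
  hK n x := by
    have h1 : max (opNorm (prodS S x n)) (Real.exp (-M * n)) ≤ C ^ n := by
      refine max_le (opNorm_prodS_le hC x n) ?_
      refine le_trans ?_ (one_le_pow₀ hC1)
      rw [Real.exp_le_one_iff, neg_mul, neg_nonpos]
      positivity
    have h2 := Real.log_le_log (lt_of_lt_of_le (Real.exp_pos _) (le_max_right _ _)) h1
    rw [Real.log_pow] at h2
    linarith
  sub m n x := by
    have p1 : ∀ k y, 0 < max (opNorm (prodS S y k)) (Real.exp (-M * k)) := fun k y =>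
      lt_of_lt_of_le (Real.exp_pos _) (le_max_right _ _)
    set y := (fun (x : ℕ → I) (n : ℕ) => x (n + 1))^[m] x with hy
    have h1 : max (opNorm (prodS S x (m + n))) (Real.exp (-M * (m + n : ℕ))) ≤
        max (opNorm (prodS S y n)) (Real.exp (-M * n)) *
        max (opNorm (prodS S x m)) (Real.exp (-M * m)) := by
      refine max_le ?_ ?_
      · rw [prodS_add]
        exact (opNorm_mul_le _ _).trans (mul_le_mul (le_max_left _ _) (le_max_left _ _)
          (opNorm_nonneg _) (p1 _ _).le)
      · have : Real.exp (-M * (m + n : ℕ)) = Real.exp (-M * n) * Real.exp (-M * m) := by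
          rw [← Real.exp_add]; congr 1; push_cast; ring
        rw [this]
        exact mul_le_mul (le_max_right _ _) (le_max_right _ _) (Real.exp_pos _).le (p1 _ _).le
    have h2 := Real.log_le_log (p1 _ _) h1
    rw [Real.log_mul (p1 _ _).ne' (p1 _ _).ne'] at h2
    push_cast at h2 ⊢
    linarith

theorem norm_conv (hS : Continuous S) {C : ℝ} (hC1 : 1 ≤ C) (hC : ∀ i, opNorm (S i) ≤ C)
    {μ : Measure (ℕ → I)} [IsProbabilityMeasure μ]
    (hT : MeasurePreserving (fun (x : ℕ → I) (n : ℕ) => x (n + 1)) μ μ) :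
    ∀ᵐ x ∂μ, ∃ l, Tendsto (fun n : ℕ => opNorm (prodS S x n) ^ (1 / (n : ℝ))) atTop (𝓝 l) := by
  have h := ae_all_iff.2 fun M : ℕ => (trunc_subAdd hS hC1 hC M).kingman hT
  filter_upwards [h] with x hx
  refine conv_of_trunc _ (fun M => ?_) (fun n => Real.rpow_nonneg (opNorm_nonneg _) _)
  have h1 := (Real.continuous_exp.tendsto _).comp ((hx M).sub_const (M : ℝ))
  refine ⟨_, h1.congr' ?_⟩
  filter_upwards [eventually_ge_atTop 1] with n hn
  have hn' : (0 : ℝ) < n := by exact_mod_cast hn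
  have hp : 0 < max (opNorm (prodS S x n)) (Real.exp (-M * n)) :=
    lt_of_lt_of_le (Real.exp_pos _) (le_max_right _ _)
  have e1 : (Real.log (max (opNorm (prodS S x n)) (Real.exp (-M * n))) + M * n) / n - M
      = Real.log (max (opNorm (prodS S x n)) (Real.exp (-M * n))) * (1 / n) := by
    field_simp
    ring
  have e2 : Real.exp (-M) = Real.exp (-M * n) ^ (1 / (n : ℝ)) := by
    rw [← Real.exp_mul]; congr 1; field_simp
  simp only [Function.comp]
  rw [e1, ← Real.rpow_def_of_pos hp, e2]
  exact (Real.monotoneOn_rpow_Ici_of_exponent_nonneg (r := 1 / (n : ℝ)) (by positivity)).map_max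
    (opNorm_nonneg _) (Real.exp_pos _).le

theorem bad_null (hd : 1 ≤ d) (hS : Continuous S) {N p : ℕ} {C₀ : ℝ}
    (hN : ∀ B : ℕ → Matrix (Fin d) (Fin d) ℂ, (∀ i, opNorm (B i) ≤ 1) → ∀ κ : ℝ, κ ≤ 1 → 0 ≤ κ →
      (∀ i j, 1 ≤ j → i + j ≤ N → specRad (cp B i j) ≤ κ) → opNorm (cp B 0 N) ^ p ≤ C₀ * κ)
    {μ : Measure (ℕ → I)} [IsProbabilityMeasure μ]
    (hT : MeasurePreserving (fun (x : ℕ → I) (n : ℕ) => x (n + 1)) μ μ)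
    (a b c : ℝ) (ha : 0 < a) (hb : 0 < b)
    (hbc : b < c) (hac : a < c) (hQ : a / c < (b / c) ^ ((4 * N + 6) * p)) (n₀ : ℕ) :
    ∀ᵐ x ∂μ, ¬ ((∀ k : ℕ, ∃ n, k ≤ n ∧ b ^ n ≤ opNorm (prodS S x n)) ∧
      ∀ n, n₀ ≤ n → opNorm (prodS S x n) ≤ c ^ n ∧ specRad (prodS S x n) ≤ a ^ n) := by
  set F : Set (ℕ → I) := {x | (∀ k : ℕ, ∃ n, k ≤ n ∧ b ^ n ≤ opNorm (prodS S x n)) ∧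
      ∀ n, n₀ ≤ n → opNorm (prodS S x n) ≤ c ^ n ∧ specRad (prodS S x n) ≤ a ^ n} with hFdef
  have hF : MeasurableSet F := by
    have h1 : F = (⋂ k : ℕ, ⋃ n : ℕ, ⋃ _ : k ≤ n, {x | b ^ n ≤ opNorm (prodS S x n)}) ∩
        ⋂ n : ℕ, ⋂ _ : n₀ ≤ n, ({x | opNorm (prodS S x n) ≤ c ^ n} ∩
          {x | specRad (prodS S x n) ≤ a ^ n}) := by
      ext x
      simp [hFdef]
    rw [h1]
    refine MeasurableSet.inter ?_ ?_
    · exact MeasurableSet.iInter fun k => MeasurableSet.iUnion fun n => MeasurableSet.iUnion fun _ =>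
        measurableSet_le measurable_const (meas_opNorm hS n)
    · exact MeasurableSet.iInter fun n => MeasurableSet.iInter fun _ =>
        (measurableSet_le (meas_opNorm hS n) measurable_const).inter
          (measurableSet_le (meas_specRad hd hS n) measurable_const)
  by_contra hcon
  have hpos : μ F ≠ 0 := by
    intro h0
    apply hcon
    rw [ae_iff]
    simpa using h0
  obtain ⟨y, hy, c', hc', hlim⟩ := exists_return hT hF hpos
  refine det_contra hN hd (fun i => S (y i)) a b c ha hb hbc hac hQ n₀ _ ?_ ?_
    (return_times hc' hlim N) ?_
  · intro k hk n hn
    have := (show _ ∈ F from hk).2 n hn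
    rwa [prodS_shift] at this
  · exact hy
  · rw [frequently_atTop]
    intro k
    obtain ⟨n, h1, h2⟩ := hy.1 k
    exact ⟨n, h1, by rwa [prodS_eq_cp] at h2⟩

theorem choose_abc {r u : ℝ} (hr : 0 ≤ r) (hru : r < u) (Q : ℕ) :
    ∃ a b c : ℚ, r < a ∧ (0 : ℝ) < a ∧ (0 : ℝ) < b ∧ (b : ℝ) < u ∧ u < c ∧ (b : ℝ) < c ∧
      (a : ℝ) < c ∧ (a : ℝ) / c < ((b : ℝ) / c) ^ Q := by
  obtain ⟨a, ha1, ha2⟩ := exists_rat_btwn hru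
  have hu : 0 < u := hr.trans_lt hru
  have hcont : ContinuousAt (fun δ : ℝ => (((u - δ) / (u + δ)) ^ Q) - a / u) 0 := by
    refine ContinuousAt.sub (ContinuousAt.pow (ContinuousAt.div (by fun_prop) (by fun_prop) (by simpa using hu.ne')) _)
      continuousAt_const
  have h0 : 0 < (fun δ : ℝ => (((u - δ) / (u + δ)) ^ Q) - a / u) 0 := by
    simp only [sub_zero, add_zero, div_self hu.ne', one_pow, sub_pos]
    rwa [div_lt_one hu]
  have hev : ∀ᶠ δ in 𝓝[>] (0 : ℝ), 0 < (((u - δ) / (u + δ)) ^ Q) - a / u :=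
    (hcont.eventually (lt_mem_nhds h0)).filter_mono nhdsWithin_le_nhds
  have hev2 : ∀ᶠ δ in 𝓝[>] (0 : ℝ), δ < u :=
    (eventually_lt_nhds hu).filter_mono nhdsWithin_le_nhds
  obtain ⟨δ, ⟨h1, h2⟩, h3⟩ := ((hev.and hev2).and self_mem_nhdsWithin).exists
  have h3 : 0 < δ := h3
  obtain ⟨b, hb1, hb2⟩ := exists_rat_btwn (show u - δ < u by linarith)
  obtain ⟨c, hc1, hc2⟩ := exists_rat_btwn (show u < u + δ by linarith)
  have ha0 : (0 : ℝ) < a := hr.trans_lt ha1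
  have hc0 : (0 : ℝ) < c := hu.trans hc1
  have hud : 0 < u - δ := by linarith
  have hb0 : (0 : ℝ) < b := by linarith
  refine ⟨a, b, c, ha1, ha0, hb0, hb2, hc1, by linarith, by linarith, ?_⟩
  have e1 : (a : ℝ) / c ≤ a / u := by gcongr
  have e2 : ((u - δ) / (u + δ)) ^ Q ≤ ((b : ℝ) / c) ^ Q := by gcongr
  linarith

theorem bounded_case (hd : 1 ≤ d) (hS : Continuous S) {C : ℝ} (hC1 : 1 ≤ C)
    (hC : ∀ i, opNorm (S i) ≤ C) {μ : Measure (ℕ → I)} [IsProbabilityMeasure μ]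
    (hT : MeasurePreserving (fun (x : ℕ → I) (n : ℕ) => x (n + 1)) μ μ) :
    ∀ᵐ x ∂μ, Tendsto (fun n : ℕ => opNorm (prodS S x n) ^ (1 / (n : ℝ))) atTop
        (𝓝 (limsup (fun n : ℕ => specRad (prodS S x n) ^ (1 / (n : ℝ))) atTop)) := by
  obtain ⟨N, p, C₀, hC₀, hN⟩ := matrix_ineq hd
  have hbad : ∀ᵐ x ∂μ, ∀ a b c : ℚ, ∀ n₀ : ℕ, (0 : ℝ) < a → (0 : ℝ) < b → (b : ℝ) < c →
      (a : ℝ) < c → (a : ℝ) / c < ((b : ℝ) / c) ^ ((4 * N + 6) * p) →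
      ¬ ((∀ k : ℕ, ∃ n, k ≤ n ∧ (b : ℝ) ^ n ≤ opNorm (prodS S x n)) ∧
      ∀ n, n₀ ≤ n → opNorm (prodS S x n) ≤ (c : ℝ) ^ n ∧ specRad (prodS S x n) ≤ (a : ℝ) ^ n) := by
    simp only [ae_all_iff]
    intro a b c n₀ h1 h2 h3 h4 h5
    exact bad_null hd hS hN hT a b c h1 h2 h3 h4 h5 n₀
  filter_upwards [hbad, norm_conv hS hC1 hC hT] with x hx ⟨u, hu⟩
  have hle : ∀ n : ℕ, specRad (prodS S x n) ^ (1 / (n : ℝ)) ≤ opNorm (prodS S x n) ^ (1 / (n : ℝ)) :=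
    fun n => Real.rpow_le_rpow (specRad_nonneg _) (specRad_le_opNorm hd _) (by positivity)
  have hnn : ∀ n : ℕ, 0 ≤ specRad (prodS S x n) ^ (1 / (n : ℝ)) := fun n =>
    Real.rpow_nonneg (specRad_nonneg _) _
  have hbd : IsBoundedUnder (· ≤ ·) atTop (fun n : ℕ => specRad (prodS S x n) ^ (1 / (n : ℝ))) :=
    hu.isBoundedUnder_le.mono_le (Eventually.of_forall hle)
  have hbd2 : IsBoundedUnder (· ≥ ·) atTop (fun n : ℕ => specRad (prodS S x n) ^ (1 / (n : ℝ))) :=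
    isBoundedUnder_of ⟨0, hnn⟩
  set r := limsup (fun n : ℕ => specRad (prodS S x n) ^ (1 / (n : ℝ))) atTop with hr
  have hru : r ≤ u := by
    rw [← hu.limsup_eq]
    exact limsup_le_limsup (Eventually.of_forall hle) hbd2.isCoboundedUnder_le hu.isBoundedUnder_le
  have hr0 : 0 ≤ r := le_limsup_of_frequently_le (Eventually.of_forall hnn).frequently hbd
  suffices hur : u ≤ r by rwa [le_antisymm hru hur]
  by_contra hcon
  push Not at hcon
  obtain ⟨a, b, c, h1, h2, h3, h4, h5, h6, h7, h8⟩ := choose_abc hr0 hcon ((4 * N + 6) * p)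
  have e1 := hu.eventually_lt_const h5
  have e2 := eventually_lt_of_limsup_lt (lt_of_eq_of_lt hr.symm h1) hbd
  obtain ⟨n₀, hn₀⟩ := eventually_atTop.1 ((e1.and e2).and (eventually_ge_atTop 1))
  refine hx a b c n₀ h2 h3 h6 h7 h8 ⟨fun k => ?_, fun n hn => ?_⟩
  · obtain ⟨n, ⟨g1, g2⟩, g3⟩ := (((hu.eventually_const_lt h4).and (eventually_ge_atTop 1)).and
      (eventually_ge_atTop k)).exists
    exact ⟨n, g3, (le_root (opNorm_nonneg _) h3.le g2).1 g1.le⟩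
  · obtain ⟨⟨g1, g2⟩, g3⟩ := hn₀ n hn
    exact ⟨(root_le (opNorm_nonneg _) (h2.trans h7).le g3).1 g1.le,
      (root_le (specRad_nonneg _) h2.le g3).1 g2.le⟩

end process

theorem prodS_congr {d : ℕ} {I : Type*} (S S' : I → Matrix (Fin d) (Fin d) ℂ) (x : ℕ → I)
    (h : ∀ n, S (x n) = S' (x n)) (n : ℕ) : prodS S x n = prodS S' x n := by
  induction n with
  | zero => rfl
  | succ n ih => simp only [prodS, ih, h]

/-- For any shift-invariant Borel probability measure supported in a compact invariant set
`Λ`, almost every signal satisfies `lim ‖S_{i_n}⋯S_{i_1}‖^{1/n} = limsup ρ(S_{i_n}⋯S_{i_1})^{1/n}`. -/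
theorem ae_norm_growth_eq_specRad_growth {d : ℕ} (hd : 1 ≤ d) {I : Type*} [MetricSpace I]
    [MeasurableSpace (ℕ → I)] [BorelSpace (ℕ → I)]
    (S : I → Matrix (Fin d) (Fin d) ℂ) (hS : Continuous S)
    (Λ : Set (ℕ → I)) (hne : Λ.Nonempty) (hcomp : IsCompact Λ) (hinv : ShiftInv Λ)
    (μ : Measure (ℕ → I)) [IsProbabilityMeasure μ]
    (hμinv : MeasurePreserving (fun (x : ℕ → I) (n : ℕ) => x (n + 1)) μ μ)
    (hμΛ : μ Λ = 1) :
    ∀ᵐ x ∂μ,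
      Filter.Tendsto (fun n : ℕ => opNorm (prodS S x n) ^ (1 / (n : ℝ))) Filter.atTop
        (nhds (Filter.limsup
          (fun n : ℕ => specRad (prodS S x n) ^ (1 / (n : ℝ))) Filter.atTop)) := by
  obtain ⟨C', hC'⟩ := hcomp.bddAbove_image
    (f := fun x : ℕ → I => opNorm (S (x 0)))
    (continuous_opNorm.comp (hS.comp (continuous_apply 0))).continuousOn
  set C : ℝ := max C' 1 with hCdef
  have hC1 : 1 ≤ C := le_max_right _ _
  have hC0 : 0 < C := one_pos.trans_le hC1
  let S' : I → Matrix (Fin d) (Fin d) ℂ := fun i => ((C / max C (opNorm (S i)) : ℝ) : ℂ) • S i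
  have hmax : ∀ i, 0 < max C (opNorm (S i)) := fun i => hC0.trans_le (le_max_left _ _)
  have hS' : Continuous S' := by
    have hc1 : Continuous (fun i => C / max C (opNorm (S i))) :=
      continuous_const.div (continuous_const.max (continuous_opNorm.comp hS))
        fun i => (hmax i).ne'
    have hc2 : Continuous (fun i => ((C / max C (opNorm (S i)) : ℝ) : ℂ)) :=
      Complex.continuous_ofReal.comp hc1
    exact hc2.smul hS
  have hSC : ∀ i, opNorm (S' i) ≤ C := by
    intro i
    change opNorm (((C / max C (opNorm (S i)) : ℝ) : ℂ) • S i) ≤ C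
    rw [opNorm_smul, Complex.norm_real, Real.norm_of_nonneg (div_pos hC0 (hmax i)).le,
      div_mul_eq_mul_div, div_le_iff₀ (hmax i)]
    exact mul_le_mul_of_nonneg_left (le_max_right _ _) hC0.le
  have hae : ∀ᵐ x ∂μ, x ∈ Λ := by
    rw [← prob_compl_eq_zero_iff hcomp.measurableSet] at hμΛ
    exact hμΛ
  filter_upwards [bounded_case hd hS' hC1 hSC hμinv, hae] with x hx hxΛ
  have hit : ∀ n, (fun k => x (n + k)) ∈ Λ := by
    intro n
    induction n with
    | zero => simpa using hxΛ
    | succ n ih =>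
      have h1 := hinv _ ih
      have h2 : (fun k => x (n + 1 + k)) = (fun k => x (n + (k + 1))) := by
        funext k; congr 1; omega
      rw [h2]; exact h1
  have heq : ∀ n, S' (x n) = S (x n) := by
    intro n
    have h1 : opNorm (S (x n)) ≤ C := (hC' ⟨_, hit n, rfl⟩).trans (le_max_left _ _)
    change ((C / max C (opNorm (S (x n))) : ℝ) : ℂ) • S (x n) = S (x n)
    rw [max_eq_left h1, div_self hC0.ne', Complex.ofReal_one, one_smul]
  simp only [prodS_congr S' S x heq] at hx
  exact hx
end
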